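/- arXiv:1208.0713 — 3 statements merged into one kernel-verified Lean document; each statement's English description precedes it below -/
import Mathlib

section
/- Let n ≥ m ≥ 2, let r ∈ uR^X_{m,n} be a ranker starting with an X-letter, and let r' = X_c be a single-letter ranker. Let u, v ∈ A* be such that r is condensed on both u and v, r' is defined on both u and v, and u ⊳_{m,n+1} v. Then ord(r(u), r'(u)) = ord(r(v), r'(v)). Dually, if r ∈ uR^Y_{m,n} starts with a Y-letter, r' = Y_c is defined on u and v, r is condensed on u and v, and u ⊲_{m,n+1} v, then ord(r(u), r'(u)) = ord(r(v), r'(v)). -/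
namespace RankerPaper

variable {A : Type*} [DecidableEq A]

/-- Letters of rankers: `X a` ("next `a` to the right") and `Y a` ("next `a` to the left"). -/
inductive RLetter (A : Type*) where
  | X : A → RLetter A
  | Y : A → RLetter A
  deriving DecidableEq

/-- Least `a`-position of `u` strictly greater than `q` (positions are 1-indexed). -/
def nextOcc (u : List A) (a : A) (q : ℕ) : Option ℕ :=
  ((List.range (u.length + 2)).filter (fun i => decide (q < i ∧ u[i-1]? = some a))).head?

/-- Greatest `a`-position of `u` strictly less than `q` (positions are 1-indexed). -/
def prevOcc (u : List A) (a : A) (q : ℕ) : Option ℕ :=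
  ((List.range (u.length + 2)).filter
    (fun i => decide (1 ≤ i ∧ i < q ∧ u[i-1]? = some a))).getLast?

/-- One evaluation step of a ranker letter from position `q`. -/
def stepR (u : List A) : RLetter A → ℕ → Option ℕ
  | .X a, q => nextOcc u a q
  | .Y a, q => prevOcc u a q

/-- Evaluation of a ranker from position `q`, processing letters left to right. -/
def evalFrom (u : List A) : List (RLetter A) → ℕ → Option ℕ
  | [], q => some q
  | z :: r, q => (stepR u z q).bind (evalFrom u r)

/-- Starting position: `0` for an `X`-letter, `|u|+1` for a `Y`-letter. -/
def startPos (u : List A) : RLetter A → ℕ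
  | .X _ => 0
  | .Y _ => u.length + 1

/-- The position `r(u)` defined by the ranker `r` on `u` (`none` if undefined;
empty rankers are considered undefined, rankers being nonempty words). -/
def evalR (u : List A) (r : List (RLetter A)) : Option ℕ :=
  match r with
  | [] => none
  | z :: t => evalFrom u (z :: t) (startPos u z)

/-- `r` is defined on `u`. -/
def Defined (u : List A) (r : List (RLetter A)) : Prop := (evalR u r).isSome

/-- The position `r(u)` (defaulting to `0` when undefined). -/
def pos (u : List A) (r : List (RLetter A)) : ℕ := (evalR u r).getD 0

/-- Do two ranker letters have the same direction? -/
def sameDir : RLetter A → RLetter A → Bool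
  | .X _, .X _ => true
  | .Y _, .Y _ => true
  | _, _ => false

/-- Number of (alternating) blocks of a ranker. -/
def numBlocks : List (RLetter A) → ℕ
  | [] => 0
  | [_] => 1
  | z :: w :: t => (if sameDir z w then 0 else 1) + numBlocks (w :: t)

def startsX (r : List (RLetter A)) : Prop := ∃ a t, r = RLetter.X a :: t
def startsY (r : List (RLetter A)) : Prop := ∃ a t, r = RLetter.Y a :: t
def endsX (r : List (RLetter A)) : Prop := ∃ a, r.getLast? = some (RLetter.X a)
def endsY (r : List (RLetter A)) : Prop := ∃ a, r.getLast? = some (RLetter.Y a)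

/-- `R^X_{m,n}`: rankers with exactly `m` blocks, depth `n`, starting with an `X`-block. -/
def RX (m n : ℕ) (r : List (RLetter A)) : Prop :=
  numBlocks r = m ∧ r.length = n ∧ startsX r

/-- `R^Y_{m,n}`: rankers with exactly `m` blocks, depth `n`, starting with a `Y`-block. -/
def RY (m n : ℕ) (r : List (RLetter A)) : Prop :=
  numBlocks r = m ∧ r.length = n ∧ startsY r

/-- `uR^X_{m,n}`. -/
def uRX (m n : ℕ) (r : List (RLetter A)) : Prop :=
  (∃ m' n', m' ≤ m ∧ n' ≤ n ∧ RX m' n' r) ∨ (∃ m' n', m' < m ∧ n' < n ∧ RY m' n' r)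

/-- `uR^Y_{m,n}`. -/
def uRY (m n : ℕ) (r : List (RLetter A)) : Prop :=
  (∃ m' n', m' ≤ m ∧ n' ≤ n ∧ RY m' n' r) ∨ (∃ m' n', m' < m ∧ n' < n ∧ RX m' n' r)

/-- `uR_{m,n} = uR^X_{m,n} ∪ uR^Y_{m,n}`. -/
def uR (m n : ℕ) (r : List (RLetter A)) : Prop := uRX m n r ∨ uRY m n r

/-- `uR^X_m = ∪_{n ≥ m} uR^X_{m,n}`. -/
def uRXm (m : ℕ) (r : List (RLetter A)) : Prop := ∃ n, m ≤ n ∧ uRX m n r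

/-- `uR^Y_m = ∪_{n ≥ m} uR^Y_{m,n}`. -/
def uRYm (m : ℕ) (r : List (RLetter A)) : Prop := ∃ n, m ≤ n ∧ uRY m n r

/-- `r = Z₁ ⋯ Z_n` is condensed on `u`: it is defined on `u` and there is a chain of
open intervals `(0;|u|+1) = (i₀;j₀) ⊃ (i₁;j₁) ⊃ ⋯ ⊃ (i_{n-1};j_{n-1}) ∋ r(u)`
updated according to the pairs `Z_ℓ Z_{ℓ+1}`. -/
def Condensed (u : List A) (r : List (RLetter A)) : Prop :=
  ∃ (p : ℕ) (i j : ℕ → ℕ),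
    evalR u r = some p ∧
    i 0 = 0 ∧ j 0 = u.length + 1 ∧
    (∀ ℓ a b, 1 ≤ ℓ → r[ℓ-1]? = some (RLetter.X a) → r[ℓ]? = some (RLetter.X b) →
        nextOcc u a (i (ℓ-1)) = some (i ℓ) ∧ j ℓ = j (ℓ-1)) ∧
    (∀ ℓ a b, 1 ≤ ℓ → r[ℓ-1]? = some (RLetter.Y a) → r[ℓ]? = some (RLetter.Y b) →
        i ℓ = i (ℓ-1) ∧ prevOcc u a (j (ℓ-1)) = some (j ℓ)) ∧
    (∀ ℓ a b, 1 ≤ ℓ → r[ℓ-1]? = some (RLetter.X a) → r[ℓ]? = some (RLetter.Y b) →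
        i ℓ = i (ℓ-1) ∧ nextOcc u a (i (ℓ-1)) = some (j ℓ)) ∧
    (∀ ℓ a b, 1 ≤ ℓ → r[ℓ-1]? = some (RLetter.Y a) → r[ℓ]? = some (RLetter.X b) →
        prevOcc u a (j (ℓ-1)) = some (i ℓ) ∧ j ℓ = j (ℓ-1)) ∧
    (∀ ℓ, 1 ≤ ℓ → ℓ < r.length →
        i (ℓ-1) ≤ i ℓ ∧ j ℓ ≤ j (ℓ-1) ∧ (i (ℓ-1) < i ℓ ∨ j ℓ < j (ℓ-1))) ∧
    i (r.length - 1) < p ∧ p < j (r.length - 1)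

/-- `u` and `v` agree on rankers from the set `R`. -/
def AgreeDef (R : List (RLetter A) → Prop) (u v : List A) : Prop :=
  ∀ r, R r → (Defined u r ↔ Defined v r)

/-- `u` and `v` agree on condensed rankers from the set `R`. -/
def AgreeCond (R : List (RLetter A) → Prop) (u v : List A) : Prop :=
  ∀ r, R r → (Condensed u r ↔ Condensed v r)

/-- `u ⊳_{m,n} v`. -/
def trir (m n : ℕ) (u v : List A) : Prop := AgreeCond (uRX m n) u v

/-- `u ⊲_{m,n} v`. -/
def tril (m n : ℕ) (u v : List A) : Prop := AgreeCond (uRY m n) u v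

/-- The alphabet (set of letters) of a word. -/
def alph (u : List A) : Finset A := u.toFinset

/-- Condition (WI 1). -/
def WI1 (m n : ℕ) (u v : List A) : Prop := AgreeDef (uR m n) u v

/-- Condition (WI 2). -/
def WI2 (m n : ℕ) (u v : List A) : Prop :=
  ∀ r r', uR m n r → uR (m-1) (n-1) r' →
    Defined u r → Defined v r → Defined u r' → Defined v r' →
    compare (pos u r) (pos u r') = compare (pos v r) (pos v r')

/-- Condition (WI 3). -/
def WI3 (m n : ℕ) (u v : List A) : Prop :=
  ∀ r r', uR m n r → uR m (n-1) r' →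
    ((endsX r ∧ endsY r') ∨ (endsY r ∧ endsX r')) →
    Defined u r → Defined v r → Defined u r' → Defined v r' →
    compare (pos u r) (pos u r') = compare (pos v r) (pos v r')

/-- Condition (WI 1c). -/
def WI1c (m n : ℕ) (u v : List A) : Prop := AgreeCond (uR m n) u v

/-- Condition (WI 2c). -/
def WI2c (m n : ℕ) (u v : List A) : Prop :=
  ∀ r r', uR m n r → uR (m-1) (n-1) r' →
    Condensed u r → Condensed v r → Condensed u r' → Condensed v r' →
    compare (pos u r) (pos u r') = compare (pos v r) (pos v r')

/-- Condition (WI 3c). -/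
def WI3c (m n : ℕ) (u v : List A) : Prop :=
  ∀ r r', uR m n r → uR m (n-1) r' →
    ((endsX r ∧ endsY r') ∨ (endsY r ∧ endsX r')) →
    Condensed u r → Condensed v r → Condensed u r' → Condensed v r' →
    compare (pos u r) (pos u r') = compare (pos v r) (pos v r')



theorem isSome_head_of_mem {l : List ℕ} {x : ℕ} (h : x ∈ l) : ∃ y, l.head? = some y := by
  cases l with
  | nil => simp at h
  | cons a t => exact ⟨a, rfl⟩

theorem sorted_head {l : List ℕ} (hl : l.Pairwise (· < ·)) (p : ℕ) :
    l.head? = some p ↔ p ∈ l ∧ ∀ k ∈ l, p ≤ k := by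
  cases l with
  | nil => simp
  | cons a t =>
    rw [List.pairwise_cons] at hl
    simp only [List.head?_cons, Option.some.injEq, List.mem_cons]
    constructor
    · rintro rfl
      refine ⟨Or.inl rfl, ?_⟩
      rintro k (rfl | hk)
      · exact le_rfl
      · exact (hl.1 k hk).le
    · rintro ⟨h1 | h1, h2⟩
      · exact h1.symm
      · have := hl.1 p h1
        have := h2 a (Or.inl rfl)
        omega

theorem sorted_last {l : List ℕ} (hl : l.Pairwise (· < ·)) (p : ℕ) :
    l.getLast? = some p ↔ p ∈ l ∧ ∀ k ∈ l, k ≤ p := by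
  induction l using List.reverseRecOn with
  | nil => simp
  | append_singleton t a _ =>
    rw [List.pairwise_append] at hl
    simp only [List.getLast?_append, List.getLast?_singleton, Option.some_or, Option.some.injEq,
      List.mem_append, List.mem_singleton]
    constructor
    · rintro rfl
      refine ⟨Or.inr rfl, ?_⟩
      rintro k (hk | rfl)
      · exact (hl.2.2 k hk a (by simp)).le
      · exact le_rfl
    · rintro ⟨h1 | h1, h2⟩
      · have := hl.2.2 p h1 a (by simp)
        have := h2 a (Or.inr rfl)
        omega
      · exact h1.symm

theorem occ_le {u : List A} {a : A} {k : ℕ} (h : u[k-1]? = some a) : k < u.length + 1 := by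
  have := (List.getElem?_eq_some_iff.1 h).1
  omega

theorem next_spec (u : List A) (a : A) (q p : ℕ) : nextOcc u a q = some p ↔
    q < p ∧ u[p-1]? = some a ∧ ∀ k, q < k → u[k-1]? = some a → p ≤ k := by
  unfold nextOcc
  rw [sorted_head (List.Pairwise.filter _ List.pairwise_lt_range)]
  simp only [List.mem_filter, List.mem_range, decide_eq_true_eq]
  constructor
  · rintro ⟨⟨_, h1, h2⟩, h3⟩
    exact ⟨h1, h2, fun k hk hk' => h3 k ⟨by have := occ_le hk'; omega, hk, hk'⟩⟩
  · rintro ⟨h1, h2, h3⟩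
    exact ⟨⟨by have := occ_le h2; omega, h1, h2⟩, fun k hk => h3 k hk.2.1 hk.2.2⟩

theorem prev_spec (u : List A) (a : A) (q p : ℕ) : prevOcc u a q = some p ↔
    1 ≤ p ∧ p < q ∧ u[p-1]? = some a ∧ ∀ k, 1 ≤ k → k < q → u[k-1]? = some a → k ≤ p := by
  unfold prevOcc
  rw [sorted_last (List.Pairwise.filter _ List.pairwise_lt_range)]
  simp only [List.mem_filter, List.mem_range, decide_eq_true_eq]
  constructor
  · rintro ⟨⟨_, h0, h1, h2⟩, h3⟩
    exact ⟨h0, h1, h2, fun k hk0 hk hk' => h3 k ⟨by have := occ_le hk'; omega, hk0, hk, hk'⟩⟩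
  · rintro ⟨h0, h1, h2, h3⟩
    exact ⟨⟨by have := occ_le h2; omega, h0, h1, h2⟩, fun k hk => h3 k hk.2.1 hk.2.2.1 hk.2.2.2⟩

theorem prev_ex (u : List A) (a : A) (q k : ℕ) (h0 : 1 ≤ k) (h1 : k < q)
    (h2 : u[k-1]? = some a) : ∃ p, prevOcc u a q = some p := by
  have : k ∈ (List.range (u.length + 2)).filter
    (fun i => decide (1 ≤ i ∧ i < q ∧ u[i-1]? = some a)) := by
    have := occ_le h2
    simp only [List.mem_filter, List.mem_range, decide_eq_true_eq]
    exact ⟨by omega, h0, h1, h2⟩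
  unfold prevOcc
  cases h : (List.filter (fun i => decide (1 ≤ i ∧ i < q ∧ u[i-1]? = some a))
    (List.range (u.length + 2))).getLast? with
  | none => rw [List.getLast?_eq_none_iff] at h; rw [h] at this; simp at this
  | some y => exact ⟨y, rfl⟩

/-- State of a condensed evaluation; the ranker is stored in reverse. -/
inductive St (u : List A) : List (RLetter A) → ℕ → ℕ → ℕ → Prop
  | x1 (a : A) (p : ℕ) : nextOcc u a 0 = some p → St u [RLetter.X a] 0 (u.length + 1) p
  | y1 (a : A) (p : ℕ) : prevOcc u a (u.length + 1) = some p →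
      St u [RLetter.Y a] 0 (u.length + 1) p
  | xs (a : A) (s : List (RLetter A)) (i j q p : ℕ) : St u s i j q → nextOcc u a q = some p →
      p < j → St u (RLetter.X a :: s) q j p
  | ys (a : A) (s : List (RLetter A)) (i j q p : ℕ) : St u s i j q → prevOcc u a q = some p →
      i < p → St u (RLetter.Y a :: s) i q p

theorem St.bd {u : List A} {s : List (RLetter A)} {i j p : ℕ} (h : St u s i j p) :
    i < p ∧ p < j ∧ j ≤ u.length + 1 := by
  induction h with
  | x1 a p h => rw [next_spec] at h; exact ⟨h.1, occ_le h.2.1, le_rfl⟩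
  | y1 a p h => rw [prev_spec] at h; exact ⟨h.1, h.2.1, le_rfl⟩
  | xs a s i j q p h h1 h2 ih => rw [next_spec] at h1; exact ⟨h1.1, h2, ih.2.2⟩
  | ys a s i j q p h h1 h2 ih => rw [prev_spec] at h1; exact ⟨h2, h1.2.1, by omega⟩

theorem St.nil {u : List A} {i j p : ℕ} (h : St u [] i j p) : False := by cases h

theorem St.det {u : List A} {s : List (RLetter A)} {i j p i' j' p' : ℕ} (h : St u s i j p)
    (h' : St u s i' j' p') : i = i' ∧ j = j' ∧ p = p' := by
  induction h generalizing i' j' p' with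
  | x1 a p h =>
    cases h' with
    | x1 _ _ h' => simp_all
    | xs _ _ _ _ _ _ h' => exact h'.nil.elim
  | y1 a p h =>
    cases h' with
    | y1 _ _ h' => simp_all
    | ys _ _ _ _ _ _ h' => exact h'.nil.elim
  | xs a s i j q p h h1 h2 ih =>
    cases h' with
    | x1 _ _ h' => exact h.nil.elim
    | xs _ _ _ _ _ _ h' h1' h2' =>
      obtain ⟨_, rfl, rfl⟩ := ih h'
      rw [h1] at h1'
      simp_all
  | ys a s i j q p h h1 h2 ih =>
    cases h' with
    | y1 _ _ h' => exact h.nil.elim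
    | ys _ _ _ _ _ _ h' h1' h2' =>
      obtain ⟨rfl, _, rfl⟩ := ih h'
      rw [h1] at h1'
      simp_all

theorem evalFrom_append (u : List A) (r : List (RLetter A)) (z : RLetter A) (q : ℕ) :
    evalFrom u (r ++ [z]) q = (evalFrom u r q).bind (stepR u z) := by
  induction r generalizing q with
  | nil => simp [evalFrom]
  | cons w t ih =>
    simp only [List.cons_append, evalFrom]
    cases stepR u w q with
    | none => rfl
    | some x => simp [ih]

theorem evalR_append (u : List A) (r : List (RLetter A)) (z : RLetter A) (hr : r ≠ []) :
    evalR u (r ++ [z]) = (evalR u r).bind (stepR u z) := by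
  cases r with
  | nil => exact absurd rfl hr
  | cons w t =>
    simp only [List.cons_append, evalR]
    rw [← List.cons_append, evalFrom_append]

theorem St.eval {u : List A} {s : List (RLetter A)} {i j p : ℕ} (h : St u s i j p) :
    evalR u s.reverse = some p := by
  induction h with
  | x1 a p h => simp [evalR, evalFrom, stepR, startPos, h]
  | y1 a p h => simp [evalR, evalFrom, stepR, startPos, h]
  | xs a s i j q p h h1 h2 ih =>
    rw [List.reverse_cons, evalR_append _ _ _ (by rintro e; simp at e; subst e; exact h.nil), ih]
    exact h1
  | ys a s i j q p h h1 h2 ih =>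
    rw [List.reverse_cons, evalR_append _ _ _ (by rintro e; simp at e; subst e; exact h.nil), ih]
    exact h1


def bs : RLetter A → ℕ → ℕ → ℕ
  | .X _, i, _ => i
  | .Y _, _, j => j

def ot : RLetter A → ℕ → ℕ → ℕ
  | .X _, _, j => j
  | .Y _, i, _ => i

/-- Chain conditions. -/
def PC (u : List A) (r : List (RLetter A)) (i j : ℕ → ℕ) : Prop :=
    i 0 = 0 ∧ j 0 = u.length + 1 ∧
    (∀ ℓ w z, 1 ≤ ℓ → r[ℓ-1]? = some w → r[ℓ]? = some z →
        stepR u w (bs w (i (ℓ-1)) (j (ℓ-1))) = some (bs z (i ℓ) (j ℓ)) ∧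
        ot z (i ℓ) (j ℓ) = ot z (i (ℓ-1)) (j (ℓ-1))) ∧
    (∀ ℓ, 1 ≤ ℓ → ℓ < r.length →
        i (ℓ-1) ≤ i ℓ ∧ j ℓ ≤ j (ℓ-1) ∧ (i (ℓ-1) < i ℓ ∨ j ℓ < j (ℓ-1)))

theorem condensed_iff_PC (u : List A) (r : List (RLetter A)) : Condensed u r ↔
    ∃ p i j, evalR u r = some p ∧ PC u r i j ∧ i (r.length - 1) < p ∧ p < j (r.length - 1) := by
  unfold Condensed PC
  constructor
  · rintro ⟨p, i, j, h1, h2, h3, h4, h5, h6, h7, h8, h9, h10⟩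
    refine ⟨p, i, j, h1, ⟨h2, h3, ?_, h8⟩, h9, h10⟩
    intro l w z hl hw hz
    cases w <;> cases z <;> simp only [stepR, bs, ot]
    · exact h4 l _ _ hl hw hz
    · exact (h6 l _ _ hl hw hz).symm
    · exact h7 l _ _ hl hw hz
    · exact (h5 l _ _ hl hw hz).symm
  · rintro ⟨p, i, j, h1, ⟨h2, h3, h4, h8⟩, h9, h10⟩
    refine ⟨p, i, j, h1, h2, h3, ?_, ?_, ?_, ?_, h8, h9, h10⟩
    · intro l a b hl hw hz
      exact h4 l _ _ hl hw hz
    · intro l a b hl hw hz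
      exact (h4 l _ _ hl hw hz).symm
    · intro l a b hl hw hz
      exact (h4 l _ _ hl hw hz).symm
    · intro l a b hl hw hz
      exact h4 l _ _ hl hw hz

theorem PC.pre {u : List A} {t : List (RLetter A)} {z w : RLetter A} {i j : ℕ → ℕ}
    (h : PC u ((z :: w :: t).reverse) i j) (hij : i (t.length + 1) < j (t.length + 1)) :
    PC u ((w :: t).reverse) i j ∧
    stepR u w (bs w (i t.length) (j t.length)) = some (bs z (i (t.length+1)) (j (t.length+1))) ∧
    ot z (i (t.length+1)) (j (t.length+1)) = ot z (i t.length) (j t.length) ∧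
    i t.length < bs z (i (t.length+1)) (j (t.length+1)) ∧
    bs z (i (t.length+1)) (j (t.length+1)) < j t.length := by
  obtain ⟨h2, h3, h4, h8⟩ := h
  rw [List.reverse_cons (a := z)] at *
  have hlen : (w :: t).reverse.length = t.length + 1 := by simp
  have hlast : (w :: t).reverse[t.length]? = some w := by simp
  generalize (w :: t).reverse = r at *
  have hz : (r ++ [z])[t.length+1]? = some z := by
    rw [List.getElem?_append_right (by omega)]; simp [hlen]
  have hw : (r ++ [z])[t.length+1-1]? = some w := by
    rw [List.getElem?_append_left (by simp; omega)]; simpa using hlast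
  have hL : ∀ l, l < r.length → (r ++ [z])[l]? = r[l]? := fun l hl =>
    List.getElem?_append_left hl
  have hlt : ∀ l (x : RLetter A), r[l]? = some x → l < r.length := fun l x hx =>
    (List.getElem?_eq_some_iff.1 hx).1
  have hf := h8 (t.length+1) (by omega) (by simp; omega)
  have hg := h4 (t.length+1) w z (by omega) hw hz
  simp only [Nat.add_sub_cancel] at hf hg
  refine ⟨⟨h2, h3, ?_, ?_⟩, hg.1, hg.2, ?_⟩
  · intro l a b hl ha hb
    exact h4 l a b hl (by rw [hL _ (hlt _ _ ha)]; exact ha) (by rw [hL _ (hlt _ _ hb)]; exact hb)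
  · intro l hl hl'
    exact h8 l hl (by simp; omega)
  · have := hg.2
    cases z <;> simp only [bs, ot] at * <;> omega

theorem PC.toSt {u : List A} (t : List (RLetter A)) (z : RLetter A) (i j : ℕ → ℕ) (p : ℕ)
    (h : PC u (z :: t).reverse i j) (hp : stepR u z (bs z (i t.length) (j t.length)) = some p)
    (h1 : i t.length < p) (h2 : p < j t.length) :
    St u (z :: t) (i t.length) (j t.length) p := by
  induction t generalizing z p with
  | nil =>
    obtain ⟨e1, e2, -⟩ := h
    simp only [List.length_nil, e1, e2] at *
    cases z with
    | X a => exact St.x1 a p hp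
    | Y a => exact St.y1 a p hp
  | cons w t ih =>
    simp only [List.length_cons] at *
    obtain ⟨g1, g2, g3, g4, g5⟩ := h.pre (by omega)
    have := ih w _ g1 g2 g4 g5
    cases z with
    | X a =>
      simp only [bs, ot, stepR] at *
      rw [← g3] at this
      exact St.xs _ _ _ _ _ _ this hp h2
    | Y a =>
      simp only [bs, ot, stepR] at *
      rw [← g3] at this
      exact St.ys _ _ _ _ _ _ this hp h1

theorem St.base {u : List A} {w : RLetter A} {t : List (RLetter A)} {i j p : ℕ}
    (h : St u (w :: t) i j p) : stepR u w (bs w i j) = some p := by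
  cases h <;> assumption

theorem St.toPC {u : List A} {s : List (RLetter A)} {I J p : ℕ} (h : St u s I J p) :
    ∃ i j, PC u s.reverse i j ∧ i (s.length - 1) = I ∧ j (s.length - 1) = J := by
  have gen : ∀ (w z : RLetter A) (t : List (RLetter A)) (i0 j0 q I J p : ℕ),
      St u (w :: t) i0 j0 q → St u (z :: w :: t) I J p →
      bs z I J = q → ot z I J = ot z i0 j0 →
      (∃ i j, PC u (w :: t).reverse i j ∧ i ((w :: t).length - 1) = i0 ∧
        j ((w :: t).length - 1) = j0) →
      ∃ i j, PC u (z :: w :: t).reverse i j ∧ i ((z :: w :: t).length - 1) = I ∧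
        j ((z :: w :: t).length - 1) = J := by
    rintro w z t i0 j0 q I J p hs hs' e1 e2 ⟨i, j, ⟨h2, h3, h4, h8⟩, ei, ej⟩
    have hb := hs.base
    have hbd := hs.bd
    have hbd' := hs'.bd
    rw [List.reverse_cons (as := w :: t)]
    simp only [List.length_cons, Nat.add_sub_cancel] at *
    have hlen : (w :: t).reverse.length = t.length + 1 := by simp
    have hlast : (w :: t).reverse[t.length]? = some w := by simp
    generalize (w :: t).reverse = r at *
    refine ⟨Function.update i (t.length+1) I, Function.update j (t.length+1) J, ⟨?_, ?_, ?_, ?_⟩, ?_, ?_⟩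
    · simpa [Function.update] using h2
    · simpa [Function.update] using h3
    · intro l a b hl ha hb'
      have hl' := (List.getElem?_eq_some_iff.1 hb').1
      simp only [List.length_append, List.length_singleton, hlen] at hl'
      by_cases hc : l = t.length + 1
      · subst hc
        rw [List.getElem?_append_right (by omega)] at hb'
        rw [List.getElem?_append_left (by simp; omega)] at ha
        simp only [Nat.add_sub_cancel, hlen, Nat.sub_self] at ha hb'
        simp only [hlast, Option.some.injEq] at ha
        simp only [List.getElem?_cons_zero, Option.some.injEq] at hb'
        subst ha hb'
        simp only [Nat.add_sub_cancel, Function.update_self]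
        rw [Function.update_of_ne (by omega), Function.update_of_ne (by omega), ei, ej, e1, e2]
        exact ⟨hb, rfl⟩
      · rw [List.getElem?_append_left (by omega)] at ha hb'
        rw [Function.update_of_ne hc, Function.update_of_ne hc, Function.update_of_ne (by omega),
          Function.update_of_ne (by omega)]
        exact h4 l a b hl ha hb'
    · intro l hl hl'
      simp only [List.length_append, List.length_singleton, hlen] at hl'
      by_cases hc : l = t.length + 1
      · subst hc
        simp only [Nat.add_sub_cancel, Function.update_self]
        rw [Function.update_of_ne (by omega), Function.update_of_ne (by omega), ei, ej]
        cases z <;> simp only [bs, ot] at * <;> omega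
      · rw [Function.update_of_ne hc, Function.update_of_ne hc, Function.update_of_ne (by omega),
          Function.update_of_ne (by omega)]
        exact h8 l hl (by omega)
    · simp
    · simp
  induction h with
  | x1 a p h =>
    refine ⟨fun _ => 0, fun _ => u.length + 1, ⟨rfl, rfl, ?_, ?_⟩, rfl, rfl⟩
    · intro l w z hl _ hz
      have := (List.getElem?_eq_some_iff.1 hz).1
      simp at this
      omega
    · intro l hl hl'
      simp at hl'
      omega
  | y1 a p h =>
    refine ⟨fun _ => 0, fun _ => u.length + 1, ⟨rfl, rfl, ?_, ?_⟩, rfl, rfl⟩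
    · intro l w z hl _ hz
      have := (List.getElem?_eq_some_iff.1 hz).1
      simp at this
      omega
    · intro l hl hl'
      simp at hl'
      omega
  | xs a s i j q p h h1 h2 ih =>
    cases s with
    | nil => exact h.nil.elim
    | cons w t => exact gen w _ t _ _ _ _ _ _ h (St.xs _ _ _ _ _ _ h h1 h2) rfl rfl ih
  | ys a s i j q p h h1 h2 ih =>
    cases s with
    | nil => exact h.nil.elim
    | cons w t => exact gen w _ t _ _ _ _ _ _ h (St.ys _ _ _ _ _ _ h h1 h2) rfl rfl ih

theorem condensed_iff (u : List A) (s : List (RLetter A)) :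
    Condensed u s.reverse ↔ ∃ i j p, St u s i j p := by
  rw [condensed_iff_PC]
  constructor
  · rintro ⟨p, i, j, h1, h2, h3, h4⟩
    cases s with
    | nil => simp [evalR] at h1
    | cons z t =>
      refine ⟨_, _, _, h2.toSt t z i j p ?_ (by simpa using h3) (by simpa using h4)⟩
      cases t with
      | nil =>
        have g1 := h2.1
        have g2 := h2.2.1
        cases z <;> simpa [evalR, evalFrom, stepR, startPos, bs, g1, g2] using h1
      | cons w t =>
        simp only [List.length_reverse, List.length_cons, Nat.add_sub_cancel] at *
        obtain ⟨g1, g2, g3, g4, g5⟩ := h2.pre (by omega)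
        have := (g1.toSt _ _ _ _ _ g2 g4 g5).eval
        rw [List.reverse_cons, evalR_append _ _ _ (by simp), this] at h1
        exact h1
  · rintro ⟨I, J, p, h⟩
    obtain ⟨i, j, h1, h2, h3⟩ := h.toPC
    refine ⟨p, i, j, h.eval, h1, ?_⟩
    rw [List.length_reverse, h2, h3]
    exact ⟨h.bd.1, h.bd.2.1⟩

def swp : RLetter A → RLetter A
  | .X a => .Y a
  | .Y a => .X a

theorem swp_swp (z : RLetter A) : swp (swp z) = z := by cases z <;> rfl

theorem rev_get (u : List A) (k : ℕ) (a : A) (h : 1 ≤ k) (h' : k ≤ u.length) :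
    u.reverse[(u.length + 1 - k) - 1]? = some a ↔ u[k-1]? = some a := by
  rw [List.getElem?_reverse (by omega)]
  have : u.length - 1 - (u.length + 1 - k - 1) = k - 1 := by omega
  rw [this]

theorem next_rev (u : List A) (a : A) (q p : ℕ) (hq : q ≤ u.length + 1)
    (h : nextOcc u a q = some p) :
    prevOcc u.reverse a (u.length + 1 - q) = some (u.length + 1 - p) := by
  rw [next_spec] at h
  rw [prev_spec]
  obtain ⟨h1, h2, h3⟩ := h
  have := occ_le h2
  refine ⟨by omega, by omega, (rev_get u p a (by omega) (by omega)).2 h2, ?_⟩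
  intro k hk1 hk2 hk
  have := h3 (u.length + 1 - k) (by omega) ((rev_get u _ a (by omega) (by omega)).1 (by
    rw [show u.length + 1 - (u.length + 1 - k) = k by omega]; exact hk))
  omega

theorem prev_rev (u : List A) (a : A) (q p : ℕ) (hq : q ≤ u.length + 1)
    (h : prevOcc u a q = some p) :
    nextOcc u.reverse a (u.length + 1 - q) = some (u.length + 1 - p) := by
  rw [prev_spec] at h
  rw [next_spec]
  obtain ⟨h0, h1, h2, h3⟩ := h
  have := occ_le h2
  refine ⟨by omega, (rev_get u p a (by omega) (by omega)).2 h2, ?_⟩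
  intro k hk1 hk
  have hk' := occ_le hk
  rw [List.length_reverse] at hk'
  have := h3 (u.length + 1 - k) (by omega) (by omega) ((rev_get u _ a (by omega) (by omega)).1 (by
    rw [show u.length + 1 - (u.length + 1 - k) = k by omega]; exact hk))
  omega

theorem St.rev {u : List A} {s : List (RLetter A)} {i j p : ℕ} (h : St u s i j p) :
    St u.reverse (s.map swp) (u.length + 1 - j) (u.length + 1 - i) (u.length + 1 - p) := by
  induction h with
  | x1 a p h =>
    have := St.y1 (u := u.reverse) a (u.length + 1 - p) (by
      rw [List.length_reverse]; exact next_rev u a 0 p (by omega) h)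
    simpa [swp] using this
  | y1 a p h =>
    have := St.x1 (u := u.reverse) a (u.length + 1 - p) (by
      simpa using prev_rev u a _ p le_rfl h)
    simpa [swp] using this
  | xs a s i j q p h h1 h2 ih =>
    have := h.bd
    exact St.ys a _ _ _ _ _ ih (next_rev u a q p (by omega) h1) (by omega)
  | ys a s i j q p h h1 h2 ih =>
    have := h.bd
    have h1' := (prev_spec _ _ _ _).1 h1
    exact St.xs a _ _ _ _ _ ih (prev_rev u a q p (by omega) h1) (by omega)

theorem ex_rev (u : List A) (s : List (RLetter A)) :
    (∃ i j p, St u.reverse s i j p) ↔ ∃ i j p, St u (s.map swp) i j p := by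
  constructor
  · rintro ⟨i, j, p, h⟩
    have := h.rev
    rw [List.reverse_reverse] at this
    exact ⟨_, _, _, this⟩
  · rintro ⟨i, j, p, h⟩
    have := h.rev
    rw [List.map_map, show (swp ∘ swp : RLetter A → RLetter A) = id from funext swp_swp,
      List.map_id] at this
    exact ⟨_, _, _, this⟩

theorem sameDir_comm (x y : RLetter A) : sameDir x y = sameDir y x := by
  cases x <;> cases y <;> rfl

theorem nb_split (l t : List (RLetter A)) (z : RLetter A) :
    numBlocks (l ++ z :: t) + 1 = numBlocks (l ++ [z]) + numBlocks (z :: t) := by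
  induction l with
  | nil => simp [numBlocks]; omega
  | cons x l ih =>
    cases l with
    | nil => simp only [List.nil_append, List.cons_append, numBlocks] at *; omega
    | cons y l => simp only [List.cons_append, numBlocks] at *; omega

theorem nb_rev (l : List (RLetter A)) : numBlocks l.reverse = numBlocks l := by
  induction l with
  | nil => rfl
  | cons x l ih =>
    cases l with
    | nil => rfl
    | cons y l =>
      have := nb_split l.reverse [x] y
      simp only [List.reverse_cons, List.append_assoc, List.cons_append, List.nil_append,
        numBlocks] at *
      rw [sameDir_comm y x] at this
      omega

theorem nb_swp (l : List (RLetter A)) : numBlocks (l.map swp) = numBlocks l := by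
  induction l with
  | nil => rfl
  | cons x l ih =>
    cases l with
    | nil => rfl
    | cons y l =>
      simp only [List.map_cons, numBlocks] at *
      rw [ih]
      have : sameDir (swp x) (swp y) = sameDir x y := by cases x <;> cases y <;> rfl
      rw [this]

theorem nb_two (t : List (RLetter A)) (a b : A) :
    2 ≤ numBlocks (RLetter.Y b :: (t ++ [RLetter.X a])) := by
  induction t generalizing b with
  | nil => simp [numBlocks, sameDir]
  | cons y t ih =>
    cases y with
    | Y c => simp only [List.cons_append, numBlocks]; have := ih c; omega
    | X c =>
      simp only [List.cons_append, numBlocks, sameDir]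
      have : ∀ (x : RLetter A) (l : List (RLetter A)), 1 ≤ numBlocks (x :: l) := by
        intro x l
        induction l generalizing x with
        | nil => simp [numBlocks]
        | cons y l ih => simp only [numBlocks]; have := ih y; omega
      have := this (RLetter.X c) (t ++ [RLetter.X a])
      simp; omega

def AllX (l : List (RLetter A)) : Prop := ∀ z ∈ l, ∃ a, z = RLetter.X a

theorem nb_allX (l : List (RLetter A)) (h : AllX l) : numBlocks l ≤ 1 := by
  induction l with
  | nil => simp [numBlocks]
  | cons x l ih =>
    cases l with
    | nil => simp [numBlocks]
    | cons y l =>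
      obtain ⟨a, rfl⟩ := h x (by simp)
      obtain ⟨b, rfl⟩ := h y (by simp)
      simp only [numBlocks, sameDir]
      have := ih (fun z hz => h z (by simp [hz]))
      simpa using this

theorem split_Y (s : List (RLetter A)) :
    AllX s ∨ ∃ l b t, AllX l ∧ s = l ++ RLetter.Y b :: t := by
  induction s with
  | nil => left; intro z hz; simp at hz
  | cons x s ih =>
    cases x with
    | Y b => right; exact ⟨[], b, s, fun z hz => by simp at hz, rfl⟩
    | X a =>
      rcases ih with h | ⟨l, b, t, h1, rfl⟩
      · left
        intro z hz
        rcases List.mem_cons.1 hz with rfl | hz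
        · exact ⟨a, rfl⟩
        · exact h z hz
      · right
        refine ⟨RLetter.X a :: l, b, t, ?_, rfl⟩
        intro z hz
        rcases List.mem_cons.1 hz with rfl | hz
        · exact ⟨a, rfl⟩
        · exact h1 z hz

theorem lift {u : List A} {l s1 s2 : List (RLetter A)} {I1 J1 k I2 J2 i j p : ℕ} (hl : AllX l)
    (h1 : St u s1 I1 J1 k) (h2 : St u s2 I2 J2 k) (h : St u (l ++ s1) i j p) :
    k ≤ p ∧ j = J1 ∧ (p < J2 ↔ ∃ i j p, St u (l ++ s2) i j p) ∧
    ∀ i' j' p', St u (l ++ s2) i' j' p' → j' = J2 ∧ p' = p := by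
  induction l generalizing i j p with
  | nil =>
    obtain ⟨rfl, rfl, rfl⟩ := h1.det h
    refine ⟨le_rfl, rfl, ⟨fun _ => ⟨_, _, _, h2⟩, fun _ => h2.bd.2.1⟩, ?_⟩
    intro i' j' p' h'
    obtain ⟨rfl, rfl, rfl⟩ := h2.det h'
    exact ⟨rfl, rfl⟩
  | cons x l ih =>
    obtain ⟨a, rfl⟩ := hl x (by simp)
    have hl' : AllX l := fun z hz => hl z (by simp [hz])
    have aux : ∀ s I J k, St u s I J k → l ++ s ≠ [] := by
      intro s I J k hs e
      simp only [List.append_eq_nil_iff] at e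
      rw [e.2] at hs
      exact hs.nil
    have n1 := aux _ _ _ _ h1
    have n2 := aux _ _ _ _ h2
    rw [List.cons_append] at h
    generalize hL1 : l ++ s1 = L1 at *
    cases h with
    | x1 => exact absurd rfl n1
    | xs _ _ i0 _ q _ g g1 g2 =>
      obtain ⟨c1, c2, c3, c4⟩ := ih hl' g
      have hqp := ((next_spec _ _ _ _).1 g1).1
      have c5 : ∀ i' j' p', St u (RLetter.X a :: l ++ s2) i' j' p' → j' = J2 ∧ p' = p := by
        intro i' j' p' h'
        rw [List.cons_append] at h'
        generalize hL2 : l ++ s2 = L2 at *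
        cases h' with
        | x1 => exact absurd rfl n2
        | xs _ _ _ _ _ _ f f1 f2 =>
          obtain ⟨rfl, rfl⟩ := c4 _ _ _ f
          rw [g1] at f1
          simp_all
      refine ⟨by omega, c2, ⟨?_, ?_⟩, c5⟩
      · intro hp
        obtain ⟨i', j', p', f⟩ := c3.1 (by omega)
        obtain ⟨rfl, rfl⟩ := c4 _ _ _ f
        exact ⟨_, _, _, St.xs a _ _ _ _ _ f g1 hp⟩
      · rintro ⟨i', j', p', f⟩
        obtain ⟨rfl, rfl⟩ := c5 _ _ _ f
        exact f.bd.2.1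

theorem testY {u : List A} {s : List (RLetter A)} {i j p f : ℕ} {c : A} (h : St u s i j p)
    (hf : nextOcc u c 0 = some f) (hi : i < f) :
    f < p ↔ ∃ i j p, St u (RLetter.Y c :: s) i j p := by
  rw [next_spec] at hf
  constructor
  · intro hp
    obtain ⟨g, hg⟩ := prev_ex u c p f (by omega) hp hf.2.1
    have := ((prev_spec _ _ _ _).1 hg).2.2.2 f hf.1 hp hf.2.1
    exact ⟨_, _, _, St.ys c _ _ _ _ _ h hg (by omega)⟩
  · rintro ⟨i', j', p', h'⟩
    cases h' with
    | y1 => exact h.nil.elim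
    | ys _ _ _ _ _ _ g g1 g2 =>
      obtain ⟨rfl, rfl, rfl⟩ := h.det g
      rw [prev_spec] at g1
      have := hf.2.2 p' g1.1 g1.2.2.1
      omega

def Same (p f p' f' : ℕ) : Prop := (p < f ↔ p' < f') ∧ (f < p ↔ f' < p')

theorem testX {u : List A} {l t : List (RLetter A)} {i j p f b0 : ℕ} {b c : A} (hl : AllX l)
    (h : St u (l ++ RLetter.Y b :: t) i j p) (hf : nextOcc u c 0 = some f)
    {I k : ℕ} (h1 : St u (RLetter.Y b :: t) I b0 k)
    (hk : k < f) (hj : f < j) :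
    p < f ↔ ∃ i j p, St u (l ++ [RLetter.Y b, RLetter.X c]) i j p := by
  have hj0 : j = b0 := (lift hl h1 h1 h).2.1
  have hpv : prevOcc u b b0 = some k := h1.base
  rw [prev_spec] at hpv
  have h2 : St u [RLetter.Y b, RLetter.X c] 0 f k := by
    refine St.ys b _ _ _ _ _ (St.x1 c f hf) ?_ (by omega)
    rw [prev_spec]
    exact ⟨hpv.1, hk, hpv.2.2.1, fun x hx1 hx2 hx => hpv.2.2.2 x hx1 (by omega) hx⟩
  exact (lift hl h1 h2 h).2.2.1

theorem St.suffix {u : List A} {l s : List (RLetter A)} {i j p : ℕ} (hs : s ≠ [])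
    (h : St u (l ++ s) i j p) : ∃ i j p, St u s i j p := by
  induction l generalizing i j p with
  | nil => exact ⟨_, _, _, h⟩
  | cons x l ih =>
    rw [List.cons_append] at h
    have : l ++ s ≠ [] := by simp [hs]
    generalize hL : l ++ s = L at *
    cases h with
    | x1 => exact absurd rfl this
    | y1 => exact absurd rfl this
    | xs _ _ _ _ _ _ g => exact ih g
    | ys _ _ _ _ _ _ g => exact ih g

theorem ne_of_occ {u : List A} {z c : A} {p f : ℕ} (h : u[p-1]? = some z)
    (h' : u[f-1]? = some c) (hz : z ≠ c) : p ≠ f := by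
  rintro rfl
  have := h.symm.trans h'
  simp at this; exact hz this

theorem stepX {u v : List A} {c z : A} {f f' p p' q q' : ℕ} (hf : nextOcc u c 0 = some f)
    (hf' : nextOcc v c 0 = some f') (h1 : nextOcc u z q = some p) (h1' : nextOcc v z q' = some p')
    (hs : Same q f q' f') (hd : q < f → q' < f' → p ≠ f → p' ≠ f' → (f < p ↔ f' < p')) :
    Same p f p' f' := by
  rw [next_spec] at h1 h1' hf hf'
  unfold Same at *
  by_cases hq : q < f
  · have hq' := hs.1.1 hq
    have h2 := h1.2.2 f hq
    have h2' := h1'.2.2 f' hq'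
    by_cases hz : z = c
    · subst hz
      have e1 := hf.2.2 p (by omega) h1.2.1
      have e2 := hf'.2.2 p' (by omega) h1'.2.1
      have := h2 hf.2.1
      have := h2' hf'.2.1
      omega
    · have ne := ne_of_occ h1.2.1 hf.2.1 hz
      have ne' := ne_of_occ h1'.2.1 hf'.2.1 hz
      have := hd hq hq' ne ne'
      omega
  · have : ¬ q' < f' := fun h => hq (hs.1.2 h)
    have := h1.1
    have := h1'.1
    omega

theorem main (m n : ℕ) (hm : 2 ≤ m) (u v : List A) (c : A)
    (H : ∀ (t : List (RLetter A)) (a : A), numBlocks (t ++ [RLetter.X a]) ≤ m →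
      (t ++ [RLetter.X a]).length ≤ n + 1 →
      ((∃ i j p, St u (t ++ [RLetter.X a]) i j p) ↔ ∃ i j p, St v (t ++ [RLetter.X a]) i j p))
    (f f' : ℕ) (hf : nextOcc u c 0 = some f) (hf' : nextOcc v c 0 = some f')
    (t : List (RLetter A)) (a : A) (hb : numBlocks (t ++ [RLetter.X a]) ≤ m)
    (hn : (t ++ [RLetter.X a]).length ≤ n) (i j p i' j' p' : ℕ)
    (hu : St u (t ++ [RLetter.X a]) i j p) (hv : St v (t ++ [RLetter.X a]) i' j' p') :
    Same i f i' f' ∧ Same j f j' f' ∧ Same p f p' f' := by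
  have sf := (next_spec _ _ _ _).1 hf
  have sf' := (next_spec _ _ _ _).1 hf'
  have bf := occ_le sf.2.1
  have bf' := occ_le sf'.2.1
  induction t generalizing i j p i' j' p' with
  | nil =>
    rw [List.nil_append] at *
    cases hu with
    | xs _ _ _ _ _ _ g => exact g.nil.elim
    | x1 _ _ hu =>
    cases hv with
    | xs _ _ _ _ _ _ g => exact g.nil.elim
    | x1 _ _ hv =>
    refine ⟨by unfold Same; omega, by unfold Same; omega, ?_⟩
    refine stepX hf hf' hu hv (by unfold Same; omega) ?_
    intro _ _ _ _
    rw [testY (St.x1 a p hu) hf sf.1, testY (St.x1 a p' hv) hf' sf'.1]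
    refine H [RLetter.Y c] a ?_ ?_
    · simp [numBlocks, sameDir]; omega
    · simp at *; omega
  | cons z t ih =>
    have hn0 : t ++ [RLetter.X a] ≠ [] := by simp
    have hb0 : numBlocks (t ++ [RLetter.X a]) ≤ m := by
      rw [List.cons_append] at hb
      generalize t ++ [RLetter.X a] = s at *
      cases s with
      | nil => simp [numBlocks]
      | cons y s => simp only [numBlocks] at *; omega
    have hl0 : (t ++ [RLetter.X a]).length ≤ n := by simp at *; omega
    replace ih := ih hb0 hl0
    rw [List.cons_append] at *
    have bu := hu.bd
    have bv := hv.bd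
    have hu0 := hu
    have hv0 := hv
    generalize hs : t ++ [RLetter.X a] = s at hu hv
    cases z with
    | X d =>
      cases hu with
      | x1 => exact absurd hs hn0
      | xs _ _ i0 _ q _ g g1 g2 =>
      cases hv with
      | x1 => exact absurd hs hn0
      | xs _ _ i0' _ q' _ g' g1' g2' =>
      rw [hs] at ih
      obtain ⟨s1, s2, s3⟩ := ih _ _ _ _ _ _ g g'
      refine ⟨s3, s2, stepX hf hf' g1 g1' s3 ?_⟩
      intro hq hq' ne ne'
      rcases split_Y s with hx | ⟨l, b, t2, hl, he⟩
      · rw [testY hu0 hf hq, testY hv0 hf' hq']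
        refine H (RLetter.Y c :: RLetter.X d :: t) a ?_ ?_
        · simp only [List.cons_append, hs]
          have : AllX (RLetter.X d :: s) := by
            intro z hz
            rcases List.mem_cons.1 hz with rfl | hz
            · exact ⟨d, rfl⟩
            · exact hx z hz
          have := nb_allX _ this
          simp only [numBlocks, sameDir] at *
          simp; omega
        · simp at *; omega
      · have ht2 : ∃ t3, t2 = t3 ++ [RLetter.X a] := by
          rcases List.eq_nil_or_concat t2 with rfl | ⟨t3, y, rfl⟩
          · rw [he] at hs
            have := (List.append_inj' hs rfl).2
            simp at this
          · rw [he] at hs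
            have hs' : t ++ [RLetter.X a] = (l ++ RLetter.Y b :: t3) ++ [y] := by simpa using hs
            have := (List.append_inj' hs' rfl).2
            simp at this
            exact ⟨t3, by simp [this]⟩
        obtain ⟨t3, rfl⟩ := ht2
        subst he
        obtain ⟨I, J, k, hk⟩ := g.suffix (by simp)
        obtain ⟨I', J', k', hk'⟩ := g'.suffix (by simp)
        have k1 := (lift hl hk hk g).1
        have k1' := (lift hl hk' hk' g').1
        have hl2 : AllX (RLetter.X d :: l) := by
          intro z hz
          rcases List.mem_cons.1 hz with rfl | hz
          · exact ⟨d, rfl⟩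
          · exact hl z hz
        rw [hs] at hu0 hv0
        by_cases hj : f < j
        · have hj' := s2.2.1 hj
          have T := testX hl2 (by simpa using hu0) hf hk (by omega) hj
          have T' := testX hl2 (by simpa using hv0) hf' hk' (by omega) hj'
          have HH := H (RLetter.X d :: l ++ [RLetter.Y b]) c (by
            have e1 := nb_split (RLetter.X d :: l) [RLetter.X c] (RLetter.Y b)
            have e2 := nb_split (RLetter.X d :: l) (t3 ++ [RLetter.X a]) (RLetter.Y b)
            have e3 := nb_two t3 a b
            have e4 : numBlocks [RLetter.Y b, RLetter.X c] = 2 := rfl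
            rw [hs] at hb
            simp only [List.append_assoc, List.cons_append, List.nil_append] at *
            omega) (by
            rw [hs] at hn
            simp at *
            omega)
          simp only [List.append_assoc, List.cons_append, List.nil_append] at *
          have := T.trans (HH.trans T'.symm)
          omega
        · have hj' : ¬ f' < j' := fun h => hj (s2.2.2 h)
          omega
    | Y d =>
      cases hu with
      | y1 => exact absurd hs hn0
      | ys _ _ _ j0 q _ g g1 g2 =>
      cases hv with
      | y1 => exact absurd hs hn0
      | ys _ _ _ j0' q' _ g' g1' g2' =>
      rw [hs] at ih
      obtain ⟨s1, s2, s3⟩ := ih _ _ _ _ _ _ g g'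
      refine ⟨s1, s3, ?_⟩
      rw [prev_spec] at g1 g1'
      by_cases hi : i < f
      · have hi' := s1.1.1 hi
        have T := testY hu0 hf hi
        have T' := testY hv0 hf' hi'
        have HH := H (RLetter.Y c :: RLetter.Y d :: t) a (by
            simp only [List.cons_append, numBlocks, sameDir] at *
            simpa using hb) (by simp at *; omega)
        have := T.trans (HH.trans T'.symm)
        unfold Same
        by_cases hz : d = c
        · subst hz
          have := sf.2.2 p (by omega) g1.2.2.1
          have := sf'.2.2 p' (by omega) g1'.2.2.1
          omega
        · have := ne_of_occ g1.2.2.1 sf.2.1 hz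
          have := ne_of_occ g1'.2.2.1 sf'.2.1 hz
          omega
      · have hi' : ¬ i' < f' := fun h => hi (s1.1.2 h)
        unfold Same
        omega

theorem Same.cmp {p f p' f' : ℕ} (h : Same p f p' f') : compare p f = compare p' f' := by
  unfold Same at h
  rcases lt_trichotomy p f with h1 | h1 | h1
  · rw [compare_lt_iff_lt.2 h1, compare_lt_iff_lt.2 (h.1.1 h1)]
  · rw [compare_eq_iff_eq.2 h1, compare_eq_iff_eq.2 (by omega)]
  · rw [compare_gt_iff_gt.2 h1, compare_gt_iff_gt.2 (h.2.1 h1)]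

/-- Order comparison of a condensed ranker against a single-letter
ranker of the same direction. -/
theorem statement13 (m n : ℕ) (hm : 2 ≤ m) (hmn : m ≤ n) (u v : List A) :
    (∀ (c : A) (r : List (RLetter A)),
       uRX m n r → startsX r →
       Condensed u r → Condensed v r →
       Defined u [RLetter.X c] → Defined v [RLetter.X c] →
       trir m (n+1) u v →
       compare (pos u r) (pos u [RLetter.X c]) =
         compare (pos v r) (pos v [RLetter.X c])) ∧
    (∀ (c : A) (r : List (RLetter A)),
       uRY m n r → startsY r →
       Condensed u r → Condensed v r →
       Defined u [RLetter.Y c] → Defined v [RLetter.Y c] →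
       tril m (n+1) u v →
       compare (pos u r) (pos u [RLetter.Y c]) =
         compare (pos v r) (pos v [RLetter.Y c])) := by
  constructor
  · rintro c r hr ⟨a, t, rfl⟩ cu cv du dv ht
    have hr' : numBlocks (RLetter.X a :: t) ≤ m ∧ (RLetter.X a :: t).length ≤ n := by
      rcases hr with ⟨m', n', h1, h2, h3, h4, -⟩ | ⟨m', n', h1, h2, h3, h4, h5, h6, h7⟩
      · omega
      · simp at h7
    have e : RLetter.X a :: t = (t.reverse ++ [RLetter.X a]).reverse := by simp
    rw [e] at cu cv hr' ⊢
    rw [nb_rev, List.length_reverse] at hr'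
    rw [condensed_iff] at cu cv
    obtain ⟨i, j, p, hu⟩ := cu
    obtain ⟨i', j', p', hv⟩ := cv
    obtain ⟨f, hf⟩ := Option.isSome_iff_exists.1 du
    obtain ⟨f', hf'⟩ := Option.isSome_iff_exists.1 dv
    have hf0 : nextOcc u c 0 = some f := by
      simpa [evalR, evalFrom, stepR, startPos] using hf
    have hf0' : nextOcc v c 0 = some f' := by
      simpa [evalR, evalFrom, stepR, startPos] using hf'
    unfold pos
    rw [hu.eval, hv.eval, hf, hf']
    refine (main m n hm u v c ?_ f f' hf0 hf0' _ a hr'.1 hr'.2 _ _ _ _ _ _ hu hv).2.2.cmp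
    intro s b h1 h2
    rw [← condensed_iff, ← condensed_iff]
    refine ht _ (Or.inl ⟨_, _, h1, h2, by rw [nb_rev], by simp, b, s.reverse, by simp⟩)
  · rintro c r hr ⟨a, t, rfl⟩ cu cv du dv ht
    have hr' : numBlocks (RLetter.Y a :: t) ≤ m ∧ (RLetter.Y a :: t).length ≤ n := by
      rcases hr with ⟨m', n', h1, h2, h3, h4, -⟩ | ⟨m', n', h1, h2, h3, h4, h5, h6, h7⟩
      · omega
      · simp at h7
    have e : RLetter.Y a :: t = (t.reverse ++ [RLetter.Y a]).reverse := by simp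
    rw [e] at cu cv hr' ⊢
    rw [nb_rev, List.length_reverse] at hr'
    rw [condensed_iff] at cu cv
    obtain ⟨i, j, p, hu⟩ := cu
    obtain ⟨i', j', p', hv⟩ := cv
    obtain ⟨f, hf⟩ := Option.isSome_iff_exists.1 du
    obtain ⟨f', hf'⟩ := Option.isSome_iff_exists.1 dv
    have hf0 : prevOcc u c (u.length + 1) = some f := by
      simpa [evalR, evalFrom, stepR, startPos] using hf
    have hf0' : prevOcc v c (v.length + 1) = some f' := by
      simpa [evalR, evalFrom, stepR, startPos] using hf'
    unfold pos
    rw [hu.eval, hv.eval, hf, hf']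
    have ru := hu.rev
    have rv := hv.rev
    have rf := prev_rev _ _ _ _ le_rfl hf0
    have rf' := prev_rev _ _ _ _ le_rfl hf0'
    rw [Nat.sub_self] at rf rf'
    have e2 : (t.reverse ++ [RLetter.Y a]).map swp = t.reverse.map swp ++ [RLetter.X a] := by
      simp [swp]
    have hb : numBlocks (t.reverse.map swp ++ [RLetter.X a]) ≤ m := by
      rw [← e2, nb_swp]; exact hr'.1
    have hl : (t.reverse.map swp ++ [RLetter.X a]).length ≤ n := by
      rw [← e2, List.length_map]; exact hr'.2
    rw [e2] at ru rv
    have M := (main m n hm u.reverse v.reverse c ?_ _ _ rf rf' _ a hb hl _ _ _ _ _ _ ru rv).2.2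
    · have b1 := hu.bd
      have b2 := hv.bd
      rw [prev_spec] at hf0 hf0'
      refine Same.cmp ?_
      unfold Same at *
      simp only [Option.getD_some]
      omega
    intro s b h1 h2
    rw [ex_rev, ex_rev, ← condensed_iff, ← condensed_iff]
    refine ht _ (Or.inl ⟨_, _, h1, h2, by rw [nb_rev, nb_swp], by simp, b, (s.map swp).reverse, by simp [swp]⟩)

end RankerPaper
end

section
/- Let n ≥ m ≥ 2, let r = X_a s ∈ uR^X_m and r' = X_b s' ∈ uR^X_{m-1} be rankers starting with X-letters, with |r| + |r'| ≤ n. Let u, v ∈ A* be such that r and r' are condensed on both u and v. If u ⊳_{m,n} v, then ord(r(u), r'(u)) = ord(r(v), r'(v)). Dually, if r ∈ uR^Y_m and r' ∈ uR^Y_{m-1} start with Y-letters, |r| + |r'| ≤ n, r and r' are condensed on u and v, and u ⊲_{m,n} v, then ord(r(u), r'(u)) = ord(r(v), r'(v)). -/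
namespace RankerPaper

variable {A : Type*} [DecidableEq A]

set_option linter.all false
/-! ### State-machine description of condensed rankers -/

def Step (f : ℤ → Option A) : RLetter A → ℤ → ℤ → ℤ → ℤ → ℤ → ℤ → Prop
  | .X c, _, p, j, k, q, l => k = p ∧ l = j ∧ p < q ∧ q < j ∧ f q = some c ∧
      ∀ y, p < y → y < q → f y ≠ some c
  | .Y c, i, p, _, k, q, l => k = i ∧ l = p ∧ i < q ∧ q < p ∧ f q = some c ∧
      ∀ y, q < y → y < p → f y ≠ some c

def Run (f : ℤ → Option A) : List (RLetter A) → ℤ → ℤ → ℤ → ℤ → ℤ → ℤ → Prop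
  | [], i, p, j, k, q, l => k = i ∧ q = p ∧ l = j
  | z :: w, i, p, j, k, q, l => ∃ i1 p1 j1, Step f z i p j i1 p1 j1 ∧ Run f w i1 p1 j1 k q l

def CondS (f : ℤ → Option A) (w : List (RLetter A)) (i p j : ℤ) : Prop :=
  ∃ k q l, Run f w i p j k q l

theorem run_append (f : ℤ → Option A) (w w' : List (RLetter A)) (i p j k q l : ℤ) :
    Run f (w ++ w') i p j k q l ↔ ∃ i1 p1 j1, Run f w i p j i1 p1 j1 ∧ Run f w' i1 p1 j1 k q l := by
  induction w generalizing i p j with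
  | nil => simp [Run]
  | cons z w ih =>
    simp only [List.cons_append, Run, ih]
    constructor
    · rintro ⟨a, b, c, h, d, e, g, h2, h3⟩
      exact ⟨d, e, g, ⟨a, b, c, h, h2⟩, h3⟩
    · rintro ⟨d, e, g, ⟨a, b, c, h, h2⟩, h3⟩
      exact ⟨a, b, c, h, d, e, g, h2, h3⟩

theorem run_single (f : ℤ → Option A) (z : RLetter A) (i p j k q l : ℤ) :
    Run f [z] i p j k q l ↔ Step f z i p j k q l := by
  simp only [Run]
  constructor
  · rintro ⟨a, b, c, h, rfl, rfl, rfl⟩; exact h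
  · intro h; exact ⟨_, _, _, h, rfl, rfl, rfl⟩

theorem next_unique {f : ℤ → Option A} {c : A} {p q q' : ℤ} (h1 : p < q) (h2 : f q = some c)
    (h3 : ∀ y, p < y → y < q → f y ≠ some c) (h1' : p < q') (h2' : f q' = some c)
    (h3' : ∀ y, p < y → y < q' → f y ≠ some c) : q = q' := by
  rcases lt_trichotomy q q' with h | h | h
  · exact absurd h2 (h3' _ h1 h)
  · exact h
  · exact absurd h2' (h3 _ h1' h)

theorem prev_unique {f : ℤ → Option A} {c : A} {p q q' : ℤ} (h1 : q < p) (h2 : f q = some c)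
    (h3 : ∀ y, q < y → y < p → f y ≠ some c) (h1' : q' < p) (h2' : f q' = some c)
    (h3' : ∀ y, q' < y → y < p → f y ≠ some c) : q = q' := by
  rcases lt_trichotomy q q' with h | h | h
  · exact absurd h2' (h3 _ h h1')
  · exact h
  · exact absurd h2 (h3' _ h h1)

theorem step_unique {f : ℤ → Option A} {z : RLetter A} {i p j k q l k' q' l' : ℤ}
    (h : Step f z i p j k q l) (h' : Step f z i p j k' q' l') : k = k' ∧ q = q' ∧ l = l' := by
  cases z <;> simp only [Step] at h h'
  · obtain ⟨rfl, rfl, a, b, c, d⟩ := h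
    obtain ⟨rfl, rfl, a', b', c', d'⟩ := h'
    exact ⟨rfl, next_unique a c d a' c' d', rfl⟩
  · obtain ⟨rfl, rfl, a, b, c, d⟩ := h
    obtain ⟨rfl, rfl, a', b', c', d'⟩ := h'
    exact ⟨rfl, prev_unique b c d b' c' d', rfl⟩

theorem run_unique {f : ℤ → Option A} {w : List (RLetter A)} {i p j k q l k' q' l' : ℤ}
    (h : Run f w i p j k q l) (h' : Run f w i p j k' q' l') : k = k' ∧ q = q' ∧ l = l' := by
  induction w generalizing i p j with
  | nil => simp only [Run] at h h'; omega
  | cons z w ih =>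
    obtain ⟨a, b, c, h1, h2⟩ := h
    obtain ⟨a', b', c', h1', h2'⟩ := h'
    obtain ⟨rfl, rfl, rfl⟩ := step_unique h1 h1'
    exact ih h2 h2'

theorem step_inv {f : ℤ → Option A} {z : RLetter A} {i p j k q l : ℤ}
    (h : Step f z i p j k q l) (h1 : i ≤ p) (h2 : p ≤ j) :
    i ≤ k ∧ k < q ∧ q < l ∧ l ≤ j := by
  cases z <;> simp only [Step] at h <;> omega

theorem run_inv {f : ℤ → Option A} {w : List (RLetter A)} {i p j k q l : ℤ}
    (h : Run f w i p j k q l) (h1 : i ≤ p) (h2 : p ≤ j) :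
    i ≤ k ∧ k ≤ q ∧ q ≤ l ∧ l ≤ j ∧ (w ≠ [] → k < q ∧ q < l) := by
  induction w generalizing i p j with
  | nil => simp only [Run] at h; simp; omega
  | cons z w ih =>
    obtain ⟨a, b, c, h3, h4⟩ := h
    have := step_inv h3 h1 h2
    have := ih h4 (by omega) (by omega)
    rcases w with _ | ⟨y, w⟩
    · simp only [Run] at h4; simp; omega
    · have := this.2.2.2.2 (by simp); simp; omega

/-- The left (right) bound does not matter if the first letter is an X- (Y-) letter. -/
theorem run_startX {f : ℤ → Option A} {w : List (RLetter A)} (hw : startsX w) {i i' p j k q l : ℤ} :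
    Run f w i p j k q l ↔ Run f w i' p j k q l := by
  obtain ⟨a, t, rfl⟩ := hw
  simp only [Run, Step]

theorem run_startY {f : ℤ → Option A} {w : List (RLetter A)} (hw : startsY w) {i p j j' k q l : ℤ} :
    Run f w i p j k q l ↔ Run f w i p j' k q l := by
  obtain ⟨a, t, rfl⟩ := hw
  simp only [Run, Step]

/-! ### Block counting -/

theorem numBlocks_pos {w : List (RLetter A)} (h : w ≠ []) : 1 ≤ numBlocks w := by
  induction w with
  | nil => exact absurd rfl h
  | cons z w ih =>
    rcases w with _ | ⟨y, w⟩
    · simp [numBlocks]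
    · have := ih (by simp); simp only [numBlocks]; omega

theorem numBlocks_cons_le (z : RLetter A) (w : List (RLetter A)) :
    numBlocks w ≤ numBlocks (z :: w) := by
  rcases w with _ | ⟨y, w⟩ <;> simp [numBlocks]

theorem numBlocks_suffix (y w : List (RLetter A)) : numBlocks w ≤ numBlocks (y ++ w) := by
  induction y with
  | nil => simp
  | cons z y ih => exact ih.trans (numBlocks_cons_le z (y ++ w))

theorem numBlocks_X_startX {w : List (RLetter A)} (a : A) (hw : startsX w) :
    numBlocks (RLetter.X a :: w) = numBlocks w := by
  obtain ⟨b, t, rfl⟩ := hw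
  simp [numBlocks, sameDir]

theorem numBlocks_X_startY {w : List (RLetter A)} (a : A) (hw : startsY w) :
    numBlocks (RLetter.X a :: w) = numBlocks w + 1 := by
  obtain ⟨b, t, rfl⟩ := hw
  simp [numBlocks, sameDir]; omega

theorem numBlocks_XY {y w : List (RLetter A)} (hy : startsX y) (hw : startsY w) :
    numBlocks w + 1 ≤ numBlocks (y ++ w) := by
  obtain ⟨a, t, rfl⟩ := hy
  induction t generalizing a with
  | nil => simp [numBlocks_X_startY a hw]
  | cons z t ih =>
    cases z with
    | X b =>
      exact (ih b).trans (numBlocks_cons_le _ _)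
    | Y b =>
      have := numBlocks_suffix (RLetter.Y b :: t) w
      have h2 := numBlocks_X_startY (w := RLetter.Y b :: t ++ w) a ⟨b, t ++ w, rfl⟩
      simp only [List.cons_append] at *
      omega

def allX (w : List (RLetter A)) : Prop := ∀ z ∈ w, ∃ c, z = RLetter.X c

theorem numBlocks_allX_snocY {w : List (RLetter A)} (hw : allX w) (a : A) :
    numBlocks (w ++ [RLetter.Y a]) ≤ 2 := by
  induction w with
  | nil => simp [numBlocks]
  | cons z w ih =>
    have h := ih (fun z hz => hw z (by simp [hz]))
    obtain ⟨c, rfl⟩ := hw z (by simp)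
    rcases w with _ | ⟨y, w⟩
    · simp [numBlocks, sameDir]
    · obtain ⟨d, rfl⟩ := hw y (by simp)
      simpa [numBlocks, sameDir] using h

/-! ### Agreement -/

def AgX (f g : ℤ → Option A) (m n : ℕ) (i j i' j' : ℤ) : Prop :=
  ∀ w, startsX w → numBlocks w ≤ m → w.length ≤ n → (CondS f w i i j ↔ CondS g w i' i' j')

def AgY (f g : ℤ → Option A) (m n : ℕ) (i j i' j' : ℤ) : Prop :=
  ∀ w, startsY w → numBlocks w ≤ m → w.length ≤ n → (CondS f w i j j ↔ CondS g w i' j' j')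

theorem cond_X_consX {f : ℤ → Option A} {a : A} {i j x k l : ℤ}
    (hx : Step f (.X a) i i j k x l) {w : List (RLetter A)} (hw : startsX w) :
    CondS f (RLetter.X a :: w) i i j ↔ CondS f w x x j := by
  constructor
  · rintro ⟨_, _, _, i1, p1, j1, h1, h2⟩
    obtain ⟨rfl, rfl, rfl⟩ := step_unique h1 hx
    obtain ⟨-, rfl, -⟩ := hx
    exact ⟨_, _, _, (run_startX hw).1 h2⟩
  · rintro ⟨k0, q0, l0, h2⟩
    refine ⟨k0, q0, l0, _, _, _, hx, ?_⟩
    obtain ⟨-, rfl, -⟩ := hx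
    exact (run_startX hw).1 h2

theorem cond_X_consY {f : ℤ → Option A} {a : A} {i j x k l : ℤ}
    (hx : Step f (.X a) i i j k x l) {w : List (RLetter A)} (hw : startsY w) :
    CondS f (RLetter.X a :: w) i i j ↔ CondS f w i x x := by
  constructor
  · rintro ⟨_, _, _, i1, p1, j1, h1, h2⟩
    obtain ⟨rfl, rfl, rfl⟩ := step_unique h1 hx
    obtain ⟨rfl, -, -⟩ := hx
    exact ⟨_, _, _, (run_startY hw).1 h2⟩
  · rintro ⟨k0, q0, l0, h2⟩
    refine ⟨k0, q0, l0, _, _, _, hx, ?_⟩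
    obtain ⟨rfl, -, -⟩ := hx
    exact (run_startY hw).1 h2

theorem AgX.right {f g : ℤ → Option A} {m n : ℕ} {i j i' j' : ℤ} (h : AgX f g m (n+1) i j i' j')
    {a : A} {x k l x' k' l' : ℤ} (hx : Step f (.X a) i i j k x l)
    (hx' : Step g (.X a) i' i' j' k' x' l') : AgX f g m n x j x' j' := by
  intro w hw h1 h2
  rw [← cond_X_consX hx hw, ← cond_X_consX hx' hw]
  exact h _ ⟨_, _, rfl⟩ (by rw [numBlocks_X_startX a hw]; exact h1) (by simp; omega)

theorem AgX.left {f g : ℤ → Option A} {m n : ℕ} {i j i' j' : ℤ}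
    (h : AgX f g (m+1) (n+1) i j i' j')
    {a : A} {x k l x' k' l' : ℤ} (hx : Step f (.X a) i i j k x l)
    (hx' : Step g (.X a) i' i' j' k' x' l') : AgY f g m n i x i' x' := by
  intro w hw h1 h2
  rw [← cond_X_consY hx hw, ← cond_X_consY hx' hw]
  exact h _ ⟨_, _, rfl⟩ (by rw [numBlocks_X_startY a hw]; omega) (by simp; omega)

/-! ### Duality -/

def flipL : RLetter A → RLetter A
  | .X a => .Y a
  | .Y a => .X a

theorem flipL_flipL (z : RLetter A) : flipL (flipL z) = z := by cases z <;> rfl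

theorem map_flip_flip (w : List (RLetter A)) : (w.map flipL).map flipL = w := by
  induction w with
  | nil => rfl
  | cons z w ih => simp only [List.map_cons, ih, flipL_flipL]

theorem numBlocks_flip (w : List (RLetter A)) : numBlocks (w.map flipL) = numBlocks w := by
  induction w with
  | nil => rfl
  | cons z w ih =>
    rcases w with _ | ⟨y, w⟩
    · simp [numBlocks]
    · simp only [List.map_cons, numBlocks] at ih ⊢
      rw [ih]
      cases z <;> cases y <;> simp [flipL, sameDir]

theorem step_flip {f : ℤ → Option A} {z : RLetter A} {i p j k q l : ℤ}
    (h : Step f z i p j k q l) :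
    Step (fun x => f (-x)) (flipL z) (-j) (-p) (-i) (-l) (-q) (-k) := by
  cases z <;> simp only [Step, flipL, neg_neg] at h ⊢
  · obtain ⟨a, b, c, d, e, h⟩ := h
    exact ⟨by omega, by omega, by omega, by omega, e, fun y h1 h2 => h _ (by omega) (by omega)⟩
  · obtain ⟨a, b, c, d, e, h⟩ := h
    exact ⟨by omega, by omega, by omega, by omega, e, fun y h1 h2 => h _ (by omega) (by omega)⟩

theorem run_flip {f : ℤ → Option A} {w : List (RLetter A)} {i p j k q l : ℤ}
    (h : Run f w i p j k q l) :
    Run (fun x => f (-x)) (w.map flipL) (-j) (-p) (-i) (-l) (-q) (-k) := by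
  induction w generalizing i p j with
  | nil => simp only [Run, List.map_nil] at h ⊢; omega
  | cons z w ih =>
    obtain ⟨a, b, c, h1, h2⟩ := h
    exact ⟨_, _, _, step_flip h1, ih h2⟩

theorem cond_flip {f : ℤ → Option A} {w : List (RLetter A)} {i p j : ℤ} :
    CondS (fun x => f (-x)) w (-j) (-p) (-i) ↔ CondS f (w.map flipL) i p j := by
  constructor
  · rintro ⟨k, q, l, h⟩
    have := run_flip h
    simp only [neg_neg] at this
    exact ⟨_, _, _, this⟩
  · rintro ⟨k, q, l, h⟩
    have := run_flip h
    rw [map_flip_flip] at this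
    exact ⟨_, _, _, this⟩

theorem startsX_flip {w : List (RLetter A)} (h : startsX w) : startsY (w.map flipL) := by
  obtain ⟨a, t, rfl⟩ := h; exact ⟨a, t.map flipL, rfl⟩

theorem startsY_flip {w : List (RLetter A)} (h : startsY w) : startsX (w.map flipL) := by
  obtain ⟨a, t, rfl⟩ := h; exact ⟨a, t.map flipL, rfl⟩

theorem AgY.flip {f g : ℤ → Option A} {m n : ℕ} {i j i' j' : ℤ} (h : AgY f g m n i j i' j') :
    AgX (fun x => f (-x)) (fun x => g (-x)) m n (-j) (-i) (-j') (-i') := by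
  intro w hw h1 h2
  rw [cond_flip, cond_flip]
  exact h _ (startsX_flip hw) (by rwa [numBlocks_flip]) (by simpa using h2)

/-! ### Locating a ranker relative to the first `a` -/

theorem exists_prev {f : ℤ → Option A} {c : A} {x p : ℤ} (hx : x < p) (hf : f x = some c) :
    ∃ q, x ≤ q ∧ q < p ∧ f q = some c ∧ ∀ y, q < y → y < p → f y ≠ some c := by
  obtain ⟨q, ⟨h1, h2, h3⟩, h4⟩ := Int.exists_greatest_of_bdd
    (P := fun q => x ≤ q ∧ q < p ∧ f q = some c) ⟨p, fun z hz => by omega⟩ ⟨x, le_refl _, hx, hf⟩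
  refine ⟨q, h1, h2, h3, fun y hy hy2 hy3 => ?_⟩
  have := h4 y ⟨by omega, hy2, hy3⟩
  omega

theorem numBlocks_prefix (w t : List (RLetter A)) : numBlocks w ≤ numBlocks (w ++ t) := by
  induction w with
  | nil => simp [numBlocks]
  | cons z w ih =>
    rcases w with _ | ⟨y, w⟩
    · exact numBlocks_pos (by simp)
    · simp only [List.cons_append, numBlocks] at ih ⊢
      omega

def GoodG (f : ℤ → Option A) (x j : ℤ) (w : List (RLetter A)) (k p l : ℤ) : Prop :=
  ∃ kw lw, Run f w x x j kw p lw ∧ x ≤ kw ∧ (kw ≤ x ∨ kw ≤ k) ∧ l ≤ lw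

def GoodL (f : ℤ → Option A) (i x : ℤ) (w : List (RLetter A)) (k p l : ℤ) : Prop :=
  ∃ kw lw, Run f w i x x kw p lw ∧ kw ≤ k ∧ lw ≤ x ∧ (x ≤ lw ∨ l ≤ lw)

theorem G_ext {f : ℤ → Option A} {x j : ℤ} {w : List (RLetter A)} {k p l k1 p1 l1 : ℤ}
    {z : RLetter A} (h : GoodG f x j w k p l) (hp : x < p) (hs : Step f z k p l k1 p1 l1)
    (hp1 : x < p1) : GoodG f x j (w ++ [z]) k1 p1 l1 := by
  obtain ⟨kw, lw, h1, h2, h3, h4⟩ := h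
  cases z <;> simp only [Step] at hs
  · obtain ⟨rfl, rfl, a, b, c, d⟩ := hs
    refine ⟨k1, lw, (run_append ..).2 ⟨_, _, _, h1, (run_single ..).2 ?_⟩, by omega, by omega, by omega⟩
    exact ⟨rfl, rfl, by omega, by omega, c, d⟩
  · obtain ⟨rfl, rfl, a, b, c, d⟩ := hs
    refine ⟨kw, l1, (run_append ..).2 ⟨_, _, _, h1, (run_single ..).2 ?_⟩, by omega, by omega, by omega⟩
    exact ⟨rfl, rfl, by omega, by omega, c, d⟩

theorem G_conv {f : ℤ → Option A} {x j : ℤ} {w : List (RLetter A)} {k p l k1 p1 l1 : ℤ}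
    {c : A} (h : GoodG f x j w k p l) (hs : Step f (.Y c) k p l k1 p1 l1)
    (hc : CondS f (w ++ [.Y c]) x x j) : x < p1 := by
  obtain ⟨kw, lw, h1, h2, h3, h4⟩ := h
  obtain ⟨k2, q2, l2, h5⟩ := hc
  obtain ⟨i3, p3, j3, h6, h7⟩ := (run_append ..).1 h5
  obtain ⟨rfl, rfl, rfl⟩ := run_unique h6 h1
  rw [run_single] at h7
  simp only [Step] at h7 hs
  have := prev_unique hs.2.2.2.1 hs.2.2.2.2.1 hs.2.2.2.2.2 h7.2.2.2.1 h7.2.2.2.2.1 h7.2.2.2.2.2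
  omega

theorem L_ext {f : ℤ → Option A} {i x : ℤ} {w : List (RLetter A)} {k p l k1 p1 l1 : ℤ}
    {z : RLetter A} (h : GoodL f i x w k p l) (hp : p < x) (hs : Step f z k p l k1 p1 l1)
    (hp1 : p1 < x) : GoodL f i x (w ++ [z]) k1 p1 l1 := by
  obtain ⟨kw, lw, h1, h2, h3, h4⟩ := h
  cases z <;> simp only [Step] at hs
  · obtain ⟨rfl, rfl, a, b, c, d⟩ := hs
    refine ⟨k1, lw, (run_append ..).2 ⟨_, _, _, h1, (run_single ..).2 ?_⟩, by omega, by omega, by omega⟩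
    exact ⟨rfl, rfl, by omega, by omega, c, d⟩
  · obtain ⟨rfl, rfl, a, b, c, d⟩ := hs
    refine ⟨kw, l1, (run_append ..).2 ⟨_, _, _, h1, (run_single ..).2 ?_⟩, by omega, by omega, by omega⟩
    exact ⟨rfl, rfl, by omega, by omega, c, d⟩

theorem L_conv {f : ℤ → Option A} {i x : ℤ} {w : List (RLetter A)} {k p l k1 p1 l1 : ℤ}
    {c : A} (h : GoodL f i x w k p l) (hs : Step f (.X c) k p l k1 p1 l1)
    (hc : CondS f (w ++ [.X c]) i x x) : p1 < x := by
  obtain ⟨kw, lw, h1, h2, h3, h4⟩ := h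
  obtain ⟨k2, q2, l2, h5⟩ := hc
  obtain ⟨i3, p3, j3, h6, h7⟩ := (run_append ..).1 h5
  obtain ⟨rfl, rfl, rfl⟩ := run_unique h6 h1
  rw [run_single] at h7
  simp only [Step] at h7 hs
  have := next_unique hs.2.2.1 hs.2.2.2.2.1 hs.2.2.2.2.2 h7.2.2.1 h7.2.2.2.2.1 h7.2.2.2.2.2
  omega

theorem G_new {f : ℤ → Option A} {x j : ℤ} {k p l k1 p1 l1 : ℤ} {c : A}
    (hs : Step f (.X c) k p l k1 p1 l1) (hp : p ≤ x) (hp1 : x < p1) (hl : l ≤ j) :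
    GoodG f x j [.X c] k1 p1 l1 := by
  obtain ⟨rfl, rfl, a, b, c, d⟩ := hs
  exact ⟨x, j, (run_single ..).2 ⟨rfl, rfl, by omega, by omega, c, fun y h1 h2 => d y (by omega) h2⟩,
    by omega, by omega, by omega⟩

theorem L_new {f : ℤ → Option A} {i x : ℤ} {k p l k1 p1 l1 : ℤ} {c : A}
    (hs : Step f (.Y c) k p l k1 p1 l1) (hp : x ≤ p) (hp1 : p1 < x) (hl : i ≤ k) :
    GoodL f i x [.Y c] k1 p1 l1 := by
  obtain ⟨rfl, rfl, a, b, c, d⟩ := hs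
  exact ⟨i, x, (run_single ..).2 ⟨rfl, rfl, by omega, by omega, c, fun y h1 h2 => d y h1 (by omega)⟩,
    by omega, by omega, by omega⟩

/-- `x` is the first `a` in `(i;j)`; an X-step from left of `x`. -/
theorem X_eq {f : ℤ → Option A} {a c : A} {i j x k0 l0 k p l k1 p1 l1 : ℤ}
    (hx : Step f (.X a) i i j k0 x l0) (hs : Step f (.X c) k p l k1 p1 l1) (hi : i ≤ p)
    (hp : p < x) : p1 = x ↔ c = a := by
  simp only [Step] at hx hs
  obtain ⟨-, -, -, -, h1, h2⟩ := hx
  obtain ⟨-, -, h3, h4, h5, h6⟩ := hs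
  constructor
  · rintro rfl; rw [h1] at h5; exact (Option.some.inj h5).symm
  · rintro rfl
    exact next_unique h3 h5 h6 hp h1 (fun y h _ => h2 y (by omega) (by omega))

/-- A Y-step from right of `x` ending not right of `x`. -/
theorem Y_eq {f : ℤ → Option A} {a c : A} {i j x k0 l0 k p l k1 p1 l1 : ℤ}
    (hx : Step f (.X a) i i j k0 x l0) (hs : Step f (.Y c) k p l k1 p1 l1)
    (hp : x < p) (hp1 : p1 ≤ x) : p1 = x ↔ c = a := by
  simp only [Step] at hx hs
  obtain ⟨-, -, -, -, h1, h2⟩ := hx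
  obtain ⟨-, -, h3, h4, h5, h6⟩ := hs
  constructor
  · rintro rfl; rw [h1] at h5; exact (Option.some.inj h5).symm
  · rintro rfl
    by_contra hne
    exact h6 x (by omega) hp h1

/-- All-X rankers: compare with `x` through an additional `Y a`. -/
theorem allX_test {f : ℤ → Option A} {a c : A} {i j x k0 l0 k p l k1 p1 l1 : ℤ}
    {q : List (RLetter A)} (hx : Step f (.X a) i i j k0 x l0) (hr : Run f q i i j k p l)
    (hs : Step f (.X c) k p l k1 p1 l1) (hp : p < x) (hi : i ≤ p) :
    CondS f (q ++ [.X c] ++ [.Y a]) i i j ↔ x < p1 := by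
  have hr1 : Run f (q ++ [.X c]) i i j k1 p1 l1 := (run_append ..).2 ⟨_, _, _, hr, (run_single ..).2 hs⟩
  simp only [Step] at hx hs
  constructor
  · rintro ⟨k2, q2, l2, h⟩
    obtain ⟨i3, p3, j3, h6, h7⟩ := (run_append ..).1 h
    obtain ⟨rfl, rfl, rfl⟩ := run_unique h6 hr1
    rw [run_single] at h7
    simp only [Step] at h7
    by_contra hlt
    exact hx.2.2.2.2.2 q2 (by omega) (by omega) h7.2.2.2.2.1
  · intro h
    obtain ⟨q2, h1, h2, h3, h4⟩ := exists_prev h hx.2.2.2.2.1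
    exact ⟨k1, q2, p1, (run_append ..).2 ⟨_, _, _, hr1, (run_single ..).2
      ⟨rfl, rfl, by omega, h2, h3, h4⟩⟩⟩

def Loc (f g : ℤ → Option A) (i j i' j' x x' : ℤ) (q : List (RLetter A))
    (k p l k' p' l' : ℤ) : Prop :=
  (p = x ∧ p' = x') ∨
  (x < p ∧ x' < p' ∧ ∃ y w, q = y ++ w ∧ startsX w ∧
    GoodG f x j w k p l ∧ GoodG g x' j' w k' p' l') ∨
  (p < x ∧ p' < x' ∧ ∃ y w, q = y ++ w ∧ startsX y ∧ startsY w ∧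
    GoodL f i x w k p l ∧ GoodL g i' x' w k' p' l') ∨
  (p < x ∧ p' < x' ∧ ((allX q ∧ l = j ∧ l' = j') ∨ (l < x ∧ l' < x')) ∧
    ∀ c t, q = RLetter.X c :: t → ∀ k1 y l1, Step f (.X c) i i j k1 y l1 → y < x)

theorem startsX_append {w : List (RLetter A)} (h : startsX w) (t : List (RLetter A)) :
    startsX (w ++ t) := by
  obtain ⟨a, s, rfl⟩ := h; exact ⟨a, s ++ t, rfl⟩

theorem startsY_append {w : List (RLetter A)} (h : startsY w) (t : List (RLetter A)) :
    startsY (w ++ t) := by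
  obtain ⟨a, s, rfl⟩ := h; exact ⟨a, s ++ t, rfl⟩

theorem startsX_len {w : List (RLetter A)} (h : startsX w) : 1 ≤ w.length := by
  obtain ⟨a, s, rfl⟩ := h; simp

theorem locate {f g : ℤ → Option A} {m n : ℕ} {i j i' j' : ℤ} (hm : 2 ≤ m)
    (h : AgX f g m n i j i' j') {a : A} {x k0 l0 x' k0' l0' : ℤ}
    (hx : Step f (.X a) i i j k0 x l0) (hx' : Step g (.X a) i' i' j' k0' x' l0')
    (q : List (RLetter A)) : ∀ (hq : q = [] ∨ startsX q) (hb : numBlocks q ≤ m)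
    (hl : q.length + 1 ≤ n) (k p l k' p' l' : ℤ)
    (hr : Run f q i i j k p l) (hr' : Run g q i' i' j' k' p' l'),
    Loc f g i j i' j' x x' q k p l k' p' l' := by
  have hij : i < x ∧ x < j := by simp only [Step] at hx; omega
  have hij' : i' < x' ∧ x' < j' := by simp only [Step] at hx'; omega
  induction q using List.reverseRecOn with
  | nil =>
    intro _ _ _ k p l k' p' l' hr hr'
    simp only [Run] at hr hr'
    right; right; right
    refine ⟨by omega, by omega, Or.inl ⟨by simp [allX], by omega, by omega⟩, ?_⟩
    intro c t ht; simp at ht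
  | append_singleton q z ih =>
    intro hq hb hl k1 p1 l1 k1' p1' l1' hr1 hr1'
    obtain ⟨k, p, l, hr, hs⟩ := (run_append ..).1 hr1
    obtain ⟨k', p', l', hr', hs'⟩ := (run_append ..).1 hr1'
    rw [run_single] at hs hs'
    have hq : startsX (q ++ [z]) := by rcases hq with hq | hq; (· simp at hq); exact hq
    have hq0 : q = [] ∨ startsX q := by
      rcases q with _ | ⟨y, q⟩
      · simp
      · obtain ⟨c, t, ht⟩ := hq
        right; exact ⟨c, q, by simp at ht; simp [ht.1]⟩
    have hb0 : numBlocks q ≤ m := (numBlocks_prefix q [z]).trans hb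
    have hinv := run_inv hr (le_refl _) (by omega)
    have hinv' := run_inv hr' (le_refl _) (by omega)
    simp only [List.length_append, List.length_singleton] at hl
    rcases ih hq0 hb0 (by omega) k p l k' p' l' hr hr' with hE | hG | hL | hZ
    · obtain ⟨hp, hp'⟩ := hE
      have hq1 : startsX q := by
        rcases hq0 with rfl | hq0
        · simp only [Run] at hr; omega
        · exact hq0
      cases z with
      | X c =>
        have e := hs.2.2.1
        have e' := hs'.2.2.1
        exact Or.inr (Or.inl ⟨by omega, by omega, q, [.X c], rfl, ⟨c, [], rfl⟩,
          G_new hs (by omega) (by omega) (by omega), G_new hs' (by omega) (by omega) (by omega)⟩)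
      | Y c =>
        have e := hs.2.2.2.1
        have e' := hs'.2.2.2.1
        exact Or.inr (Or.inr (Or.inl ⟨by omega, by omega, q, [.Y c], rfl, hq1, ⟨c, [], rfl⟩,
          L_new hs (by omega) (by omega) (by omega), L_new hs' (by omega) (by omega) (by omega)⟩))
    · obtain ⟨hp, hp', y, w, rfl, hw, hg, hg'⟩ := hG
      cases z with
      | X c =>
        have e := hs.2.2.1
        have e' := hs'.2.2.1
        exact Or.inr (Or.inl ⟨by omega, by omega, y, w ++ [.X c], by simp, startsX_append hw _,
          G_ext hg hp hs (by omega), G_ext hg' hp' hs' (by omega)⟩)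
      | Y c =>
        have hiff : x < p1 ↔ x' < p1' := by
          have hwX := startsX_append hw [.Y c]
          have hbl := numBlocks_suffix y (w ++ [.Y c])
          rw [← List.append_assoc] at hbl
          have key := h (.X a :: (w ++ [.Y c])) ⟨_, _, rfl⟩
            (by rw [numBlocks_X_startX a hwX]; omega) (by simp at hl ⊢; omega)
          rw [cond_X_consX hx hwX, cond_X_consX hx' hwX] at key
          constructor
          · intro hh
            obtain ⟨_, _, hc, -⟩ := G_ext hg hp hs hh
            exact G_conv hg' hs' (key.1 ⟨_, _, _, hc⟩)
          · intro hh
            obtain ⟨_, _, hc, -⟩ := G_ext hg' hp' hs' hh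
            exact G_conv hg hs (key.2 ⟨_, _, _, hc⟩)
        by_cases hc1 : x < p1
        · have hc1' := hiff.1 hc1
          exact Or.inr (Or.inl ⟨hc1, hc1', y, w ++ [.Y c], by simp, startsX_append hw _,
            G_ext hg hp hs hc1, G_ext hg' hp' hs' hc1'⟩)
        · have hc1' : ¬ x' < p1' := fun hh => hc1 (hiff.2 hh)
          have e1 := Y_eq hx hs hp (by omega)
          have e1' := Y_eq hx' hs' hp' (by omega)
          by_cases hca : c = a
          · exact Or.inl ⟨e1.2 hca, e1'.2 hca⟩
          · have e2 := mt e1.1 hca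
            have e2' := mt e1'.1 hca
            have hyw : startsX (y ++ w) := by
              rcases hq0 with hq0 | hq0
              · obtain ⟨d, s, rfl⟩ := hw
                simp at hq0
              · exact hq0
            exact Or.inr (Or.inr (Or.inl ⟨by omega, by omega, y ++ w, [.Y c], rfl, hyw,
              ⟨c, [], rfl⟩, L_new hs (by omega) (by omega) (by omega),
              L_new hs' (by omega) (by omega) (by omega)⟩))
    · obtain ⟨hp, hp', y, w, rfl, hy, hw, hg, hg'⟩ := hL
      cases z with
      | Y c =>
        have e := hs.2.2.2.1
        have e' := hs'.2.2.2.1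
        exact Or.inr (Or.inr (Or.inl ⟨by omega, by omega, y, w ++ [.Y c], by simp, hy,
          startsY_append hw _,
          L_ext hg hp hs (by omega), L_ext hg' hp' hs' (by omega)⟩))
      | X c =>
        have hiff : p1 < x ↔ p1' < x' := by
          have hwX := startsY_append hw [.X c]
          have hbl := numBlocks_XY hy hwX
          rw [← List.append_assoc] at hbl
          have hyl := startsX_len hy
          have key := h (.X a :: (w ++ [.X c])) ⟨_, _, rfl⟩
            (by rw [numBlocks_X_startY a hwX]; omega) (by simp at hl ⊢; omega)
          rw [cond_X_consY hx hwX, cond_X_consY hx' hwX] at key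
          constructor
          · intro hh
            obtain ⟨_, _, hc, -⟩ := L_ext hg hp hs hh
            exact L_conv hg' hs' (key.1 ⟨_, _, _, hc⟩)
          · intro hh
            obtain ⟨_, _, hc, -⟩ := L_ext hg' hp' hs' hh
            exact L_conv hg hs (key.2 ⟨_, _, _, hc⟩)
        by_cases hc1 : p1 < x
        · have hc1' := hiff.1 hc1
          exact Or.inr (Or.inr (Or.inl ⟨hc1, hc1', y, w ++ [.X c], by simp, hy,
            startsY_append hw _, L_ext hg hp hs hc1, L_ext hg' hp' hs' hc1'⟩))
        · have hc1' : ¬ p1' < x' := fun hh => hc1 (hiff.2 hh)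
          have e1 := X_eq hx hs (by omega) hp
          have e1' := X_eq hx' hs' (by omega) hp'
          by_cases hca : c = a
          · exact Or.inl ⟨e1.2 hca, e1'.2 hca⟩
          · have e2 := mt e1.1 hca
            have e2' := mt e1'.1 hca
            exact Or.inr (Or.inl ⟨by omega, by omega, y ++ w, [.X c], rfl,
              ⟨c, [], rfl⟩, G_new hs (by omega) (by omega) (by omega),
              G_new hs' (by omega) (by omega) (by omega)⟩)
    · obtain ⟨hp, hp', hd, hfst⟩ := hZ
      have hfst1 : p1 < x → ∀ d t, q ++ [z] = RLetter.X d :: t →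
          ∀ k1 y l1, Step f (.X d) i i j k1 y l1 → y < x := by
        intro hp1x d t hdt k2 y l2 hst
        rcases q with _ | ⟨y0, q⟩
        · simp only [Run] at hr
          obtain ⟨rfl, rfl, rfl⟩ := hr
          simp at hdt
          obtain ⟨rfl, -⟩ := hdt
          obtain ⟨-, rfl, -⟩ := step_unique hst hs
          exact hp1x
        · simp at hdt
          obtain ⟨rfl, -⟩ := hdt
          exact hfst d q rfl _ _ _ hst
      cases z with
      | Y c =>
        have e := hs.2.2.2.1
        have e' := hs'.2.2.2.1
        have e2 := hs.2.1
        have e2' := hs'.2.1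
        exact Or.inr (Or.inr (Or.inr ⟨by omega, by omega, Or.inr (by omega),
          hfst1 (by omega)⟩))
      | X c =>
        have e2 := hs.2.1
        have e2' := hs'.2.1
        rcases hd with ⟨hall, hlj, hlj'⟩ | ⟨hlx, hlx'⟩
        · have hall1 : allX (q ++ [.X c]) := by
            intro z hz
            rcases List.mem_append.1 hz with hz | hz
            · exact hall z hz
            · simp at hz; exact ⟨c, hz⟩
          have key := h (q ++ [.X c] ++ [.Y a]) (startsX_append hq _)
            ((numBlocks_allX_snocY hall1 a).trans hm) (by simp; omega)
          rw [allX_test hx hr hs hp (by omega), allX_test hx' hr' hs' hp' (by omega)] at key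
          have e1 := X_eq hx hs (by omega) hp
          have e1' := X_eq hx' hs' (by omega) hp'
          by_cases hca : c = a
          · exact Or.inl ⟨e1.2 hca, e1'.2 hca⟩
          · have e3 := mt e1.1 hca
            have e3' := mt e1'.1 hca
            by_cases hc1 : x < p1
            · have hc1' := key.1 hc1
              exact Or.inr (Or.inl ⟨by omega, by omega, q, [.X c], rfl,
                ⟨c, [], rfl⟩, G_new hs (by omega) (by omega) (by omega),
                G_new hs' (by omega) (by omega) (by omega)⟩)
            · have hc1' : ¬ x' < p1' := fun hh => hc1 (key.2 hh)
              exact Or.inr (Or.inr (Or.inr ⟨by omega, by omega,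
                Or.inl ⟨hall1, by omega, by omega⟩, hfst1 (by omega)⟩))
        · have e := hs.2.2.2.1
          have e' := hs'.2.2.2.1
          exact Or.inr (Or.inr (Or.inr ⟨by omega, by omega, Or.inr (by omega),
            hfst1 (by omega)⟩))

/-! ### The comparison theorem -/

def CmpStmt (A : Type*) (n : ℕ) : Prop :=
  ∀ (m : ℕ) (f g : ℤ → Option A) (i j i' j' : ℤ) (r r' : List (RLetter A))
    (k p l k' p' l' k2 q l2 k2' q' l2' : ℤ),
    AgX f g m n i j i' j' → startsX r → startsX r' → numBlocks r ≤ m → numBlocks r' ≤ m →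
    numBlocks r + numBlocks r' < 2 * m → r.length + r'.length ≤ n →
    Run f r i i j k p l → Run g r i' i' j' k' p' l' →
    Run f r' i i j k2 q l2 → Run g r' i' i' j' k2' q' l2' →
    ((p < q ↔ p' < q') ∧ (q < p ↔ q' < p'))

def CmpStmtY (A : Type*) (n : ℕ) : Prop :=
  ∀ (m : ℕ) (f g : ℤ → Option A) (i j i' j' : ℤ) (r r' : List (RLetter A))
    (k p l k' p' l' k2 q l2 k2' q' l2' : ℤ),
    AgY f g m n i j i' j' → startsY r → startsY r' → numBlocks r ≤ m → numBlocks r' ≤ m →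
    numBlocks r + numBlocks r' < 2 * m → r.length + r'.length ≤ n →
    Run f r i j j k p l → Run g r i' j' j' k' p' l' →
    Run f r' i j j k2 q l2 → Run g r' i' j' j' k2' q' l2' →
    ((p < q ↔ p' < q') ∧ (q < p ↔ q' < p'))

theorem CmpStmt.dual {n : ℕ} (h : CmpStmt A n) : CmpStmtY A n := by
  intro m f g i j i' j' r r' k p l k' p' l' k2 q l2 k2' q' l2' hA hr hr' h1 h2 h3 h4 a b c d
  have := h m _ _ _ _ _ _ (r.map flipL) (r'.map flipL) _ _ _ _ _ _ _ _ _ _ _ _ hA.flip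
    (startsY_flip hr) (startsY_flip hr') (by rwa [numBlocks_flip]) (by rwa [numBlocks_flip])
    (by rwa [numBlocks_flip, numBlocks_flip]) (by simpa using h4)
    (run_flip a) (run_flip b) (run_flip c) (run_flip d)
  omega

theorem cmp_core {n : ℕ} (ih : CmpStmt A n)
    {m : ℕ} {f g : ℤ → Option A} {i j i' j' : ℤ} {a : A} {s r' : List (RLetter A)}
    {k p l k' p' l' k2 q l2 k2' q' l2' : ℤ}
    (hA : AgX f g m (n+1) i j i' j') (hr' : startsX r')
    (h1 : numBlocks (RLetter.X a :: s) ≤ m) (h2 : numBlocks r' ≤ m)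
    (h3 : numBlocks (RLetter.X a :: s) + numBlocks r' < 2 * m)
    (h4 : (RLetter.X a :: s).length + r'.length ≤ n + 1)
    {k0 x l0 k0' x' l0' : ℤ}
    (hx : Step f (.X a) i i j k0 x l0) (hx' : Step g (.X a) i' i' j' k0' x' l0')
    (ha : Run f s k0 x l0 k p l) (hb : Run g s k0' x' l0' k' p' l')
    (hc : Run f r' i i j k2 q l2) (hd : Run g r' i' i' j' k2' q' l2')
    (hord : ∀ c t, r' = RLetter.X c :: t → ∀ k1 y l1, Step f (.X c) i i j k1 y l1 → x ≤ y) :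
    ((p < q ↔ p' < q') ∧ (q < p ↔ q' < p')) := by
  have hr0 : r' ≠ [] := by obtain ⟨c, t, rfl⟩ := hr'; simp
  have e1 := numBlocks_pos hr0
  have e2 := numBlocks_pos (w := RLetter.X a :: s) (by simp)
  obtain ⟨m, rfl⟩ : ∃ m', m = m' + 1 := ⟨m - 1, by omega⟩
  simp only [List.length_cons] at h4
  have hloc := locate (by omega) hA hx hx' r' (Or.inr hr') h2 (by omega) _ _ _ _ _ _ hc hd
  have hxi := hx.1
  have hxj := hx.2.1
  have hxl := hx.2.2.1
  have hxr := hx.2.2.2.1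
  have hxi' := hx'.1
  have hxj' := hx'.2.1
  have hxl' := hx'.2.2.1
  have hxr' := hx'.2.2.2.1
  subst hxi hxj hxi' hxj'
  rcases s with _ | ⟨z, s⟩
  · simp only [Run] at ha hb
    rcases hloc with hE | hG | hL | hZ
    · omega
    · have := hG.1; have := hG.2.1; omega
    · have := hL.1; have := hL.2.1; omega
    · have := hZ.1; have := hZ.2.1; omega
  · cases z with
    | X c =>
      have hs : startsX (RLetter.X c :: s) := ⟨_, _, rfl⟩
      rw [run_startX hs (i' := x)] at ha
      rw [run_startX hs (i' := x')] at hb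
      have i1 := (run_inv ha (by omega) (by omega)).2.2.2.2 (by simp)
      have i2 := run_inv ha (by omega) (by omega)
      have i1' := (run_inv hb (by omega) (by omega)).2.2.2.2 (by simp)
      have i2' := run_inv hb (by omega) (by omega)
      rcases hloc with hE | hG | hL | hZ
      · omega
      · obtain ⟨g1, g2, y, w, rfl, hw, ⟨_, _, hg, -⟩, ⟨_, _, hg', -⟩⟩ := hG
        rw [numBlocks_X_startX a hs] at *
        have := numBlocks_suffix y w
        simp only [List.length_append] at h4
        exact ih _ _ _ _ _ _ _ _ _ _ _ _ _ _ _ _ _ _ _ _ _ (hA.right hx hx') hs hw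
          (by omega) (by omega) (by omega) (by simp at *; omega) ha hb hg hg'
      · have := hL.1; have := hL.2.1; omega
      · have := hZ.1; have := hZ.2.1; omega
    | Y c =>
      have hs : startsY (RLetter.Y c :: s) := ⟨_, _, rfl⟩
      rw [run_startY hs (j' := x)] at ha
      rw [run_startY hs (j' := x')] at hb
      have i1 := (run_inv ha (by omega) (by omega)).2.2.2.2 (by simp)
      have i2 := run_inv ha (by omega) (by omega)
      have i1' := (run_inv hb (by omega) (by omega)).2.2.2.2 (by simp)
      have i2' := run_inv hb (by omega) (by omega)
      rcases hloc with hE | hG | hL | hZ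
      · omega
      · have := hG.1; have := hG.2.1; omega
      · obtain ⟨g1, g2, y, w, rfl, hy, hw, ⟨_, _, hg, -⟩, ⟨_, _, hg', -⟩⟩ := hL
        rw [numBlocks_X_startY a hs] at *
        have := numBlocks_XY hy hw
        simp only [List.length_append] at h4
        exact ih.dual _ _ _ _ _ _ _ _ _ _ _ _ _ _ _ _ _ _ _ _ _ (hA.left hx hx') hs hw
          (by omega) (by omega) (by omega) (by simp at *; omega) ha hb hg hg'
      · exfalso
        obtain ⟨d, t, rfl⟩ := hr'
        obtain ⟨_, _, _, hst, -⟩ := hc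
        have := hZ.2.2.2 d t rfl _ _ _ hst
        have := hord d t rfl _ _ _ hst
        omega

theorem cmp_main (n : ℕ) : CmpStmt A n := by
  induction n with
  | zero =>
    intro m f g i j i' j' r r' k p l k' p' l' k2 q l2 k2' q' l2' hA hr hr' h1 h2 h3 h4
    have := startsX_len hr
    omega
  | succ n ih =>
    intro m f g i j i' j' r r' k p l k' p' l' k2 q l2 k2' q' l2' hA hr hr' h1 h2 h3 h4 ha hb hc hd
    obtain ⟨a, s, rfl⟩ := hr
    obtain ⟨b, s', rfl⟩ := hr'
    obtain ⟨_, x, _, hx, ha1⟩ := id ha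
    obtain ⟨_, x', _, hx', hb1⟩ := id hb
    obtain ⟨_, y, _, hy, hc1⟩ := id hc
    obtain ⟨_, y', _, hy', hd1⟩ := id hd
    by_cases hxy : x ≤ y
    · refine cmp_core ih hA ⟨_, _, rfl⟩ h1 h2 h3 h4 hx hx' ha1 hb1 hc hd ?_
      intro c t ht k1 z l1 hst
      simp at ht
      obtain ⟨rfl, -⟩ := ht
      obtain ⟨-, rfl, -⟩ := step_unique hst hy
      exact hxy
    · have := cmp_core ih hA ⟨_, _, rfl⟩ h2 h1 (by omega) (by omega) hy hy' hc1 hd1 ha hb (by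
        intro c t ht k1 z l1 hst
        simp at ht
        obtain ⟨rfl, -⟩ := ht
        obtain ⟨-, rfl, -⟩ := step_unique hst hx
        omega)
      exact ⟨this.2, this.1⟩

/-! ### Bridge to the original definitions -/

def wf (u : List A) : ℤ → Option A := fun x => if 0 < x then u[x.toNat - 1]? else none

theorem nextOcc_spec (u : List A) (a : A) (q p : ℕ) : nextOcc u a q = some p ↔
    q < p ∧ u[p-1]? = some a ∧ ∀ x, q < x → x < p → u[x-1]? ≠ some a := by
  unfold nextOcc
  rw [List.head?_filter, List.find?_range_eq_some]
  simp only [decide_eq_true_eq, List.mem_range, Bool.not_eq_true', decide_eq_false_iff_not]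
  constructor
  · rintro ⟨⟨h1, h2⟩, h3, h4⟩
    exact ⟨h1, h2, fun x hx hx2 hx3 => h4 x hx2 ⟨hx, hx3⟩⟩
  · rintro ⟨h1, h2, h3⟩
    refine ⟨⟨h1, h2⟩, ?_, fun x hx hx2 => h3 x hx2.1 hx hx2.2⟩
    have := (List.getElem?_eq_some_iff.1 h2).1
    omega

theorem prevOcc_spec (u : List A) (a : A) (q p : ℕ) : prevOcc u a q = some p ↔
    1 ≤ p ∧ p < q ∧ u[p-1]? = some a ∧ ∀ x, p < x → x < q → u[x-1]? ≠ some a := by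
  unfold prevOcc
  set P : ℕ → Bool := fun i => decide (1 ≤ i ∧ i < q ∧ u[i-1]? = some a) with hP
  have hgen : ∀ N, ((List.range N).filter P).getLast? = some p ↔
      p < N ∧ P p ∧ ∀ x, p < x → x < N → ¬ P x := by
    intro N
    induction N with
    | zero => simp
    | succ N ih =>
      rw [List.range_succ, List.filter_append]
      by_cases hN : P N
      · simp only [List.filter_cons, hN, if_true, List.filter_nil, List.getLast?_append,
          List.getLast?_singleton, Option.some_or, Option.some.injEq]
        constructor
        · rintro rfl
          exact ⟨by omega, hN, fun x h1 h2 => by omega⟩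
        · rintro ⟨h1, h2, h3⟩
          by_contra hne
          exact h3 N (by omega) (by omega) hN
      · simp only [List.filter_cons, hN, List.filter_nil, Bool.false_eq_true, if_false,
          List.append_nil, ih]
        constructor
        · rintro ⟨h1, h2, h3⟩
          refine ⟨by omega, h2, fun x h4 h5 => ?_⟩
          rcases Nat.lt_succ_iff_lt_or_eq.1 h5 with h | rfl
          · exact h3 x h4 h
          · exact hN
        · rintro ⟨h1, h2, h3⟩
          refine ⟨?_, h2, fun x h4 h5 => h3 x h4 (by omega)⟩
          rcases Nat.lt_succ_iff_lt_or_eq.1 h1 with h | rfl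
          · exact h
          · exact absurd h2 hN
  rw [hgen]
  simp only [hP, decide_eq_true_eq]
  constructor
  · rintro ⟨h1, ⟨h2, h3, h4⟩, h5⟩
    refine ⟨h2, h3, h4, fun x h6 h7 h8 => ?_⟩
    have := (List.getElem?_eq_some_iff.1 h8).1
    exact h5 x h6 (by omega) ⟨by omega, h7, h8⟩
  · rintro ⟨h2, h3, h4, h5⟩
    have := (List.getElem?_eq_some_iff.1 h4).1
    exact ⟨by omega, ⟨h2, h3, h4⟩, fun x h6 h7 h8 => h5 x h6 h8.2.1 h8.2.2⟩

theorem wf_nat (u : List A) (x : ℕ) (h : 0 < x) : wf u (x : ℤ) = u[x-1]? := by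
  unfold wf
  rw [if_pos (by omega)]; simp

theorem wf_some {u : List A} {x : ℤ} {a : A} (h : wf u x = some a) : 0 < x := by
  unfold wf at h
  by_contra hh
  rw [if_neg hh] at h; simp at h

theorem stepX_iff (u : List A) (a : A) (i p j k q l : ℕ) :
    Step (wf u) (.X a) i p j k q l ↔ (k = p ∧ l = j ∧ nextOcc u a p = some q ∧ q < j) := by
  rw [nextOcc_spec]
  simp only [Step]
  constructor
  · rintro ⟨h1, h2, h3, h4, h5, h6⟩
    refine ⟨by omega, by omega, ⟨by omega, ?_, ?_⟩, by omega⟩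
    · rwa [wf_nat u q (by omega)] at h5
    · intro x hx hx2
      rw [← wf_nat u x (by omega)]
      exact h6 x (by omega) (by omega)
  · rintro ⟨h1, h2, ⟨h3, h4, h5⟩, h6⟩
    refine ⟨by omega, by omega, by omega, by omega, by rwa [wf_nat u q (by omega)], ?_⟩
    intro y hy hy2
    lift y to ℕ using by omega
    rw [wf_nat u y (by omega)]
    exact h5 y (by omega) (by omega)

theorem stepY_iff (u : List A) (a : A) (i p j k q l : ℕ) :
    Step (wf u) (.Y a) i p j k q l ↔ (k = i ∧ l = p ∧ prevOcc u a p = some q ∧ i < q) := by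
  rw [prevOcc_spec]
  simp only [Step]
  constructor
  · rintro ⟨h1, h2, h3, h4, h5, h6⟩
    refine ⟨by omega, by omega, ⟨by omega, by omega, ?_, ?_⟩, by omega⟩
    · rwa [wf_nat u q (by omega)] at h5
    · intro x hx hx2
      rw [← wf_nat u x (by omega)]
      exact h6 x (by omega) (by omega)
  · rintro ⟨h1, h2, ⟨h3, h4, h5, h7⟩, h6⟩
    refine ⟨by omega, by omega, by omega, by omega, by rwa [wf_nat u q (by omega)], ?_⟩
    intro y hy hy2
    lift y to ℕ using by omega
    rw [wf_nat u y (by omega)]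
    exact h7 y (by omega) (by omega)

/-- Steps from natural positions end in natural positions. -/
theorem step_nat {u : List A} {z : RLetter A} {i p j : ℕ} {k q l : ℤ}
    (h : Step (wf u) z i p j k q l) : ∃ k' q' l' : ℕ, k = k' ∧ q = q' ∧ l = l' := by
  cases z
  · have := wf_some h.2.2.2.2.1
    exact ⟨p, q.toNat, j, h.1, by omega, h.2.1⟩
  · have := wf_some h.2.2.2.2.1
    exact ⟨i, q.toNat, p, h.1, by omega, h.2.1⟩

def st : RLetter A → ℕ → ℕ → ℕ
  | .X _, i, _ => i
  | .Y _, _, j => j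

def Chain (u : List A) (r : List (RLetter A)) (i j : ℕ → ℕ) (p : ℕ) : Prop :=
    (∀ ℓ a b, 1 ≤ ℓ → r[ℓ-1]? = some (RLetter.X a) → r[ℓ]? = some (RLetter.X b) →
        nextOcc u a (i (ℓ-1)) = some (i ℓ) ∧ j ℓ = j (ℓ-1)) ∧
    (∀ ℓ a b, 1 ≤ ℓ → r[ℓ-1]? = some (RLetter.Y a) → r[ℓ]? = some (RLetter.Y b) →
        i ℓ = i (ℓ-1) ∧ prevOcc u a (j (ℓ-1)) = some (j ℓ)) ∧
    (∀ ℓ a b, 1 ≤ ℓ → r[ℓ-1]? = some (RLetter.X a) → r[ℓ]? = some (RLetter.Y b) →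
        i ℓ = i (ℓ-1) ∧ nextOcc u a (i (ℓ-1)) = some (j ℓ)) ∧
    (∀ ℓ a b, 1 ≤ ℓ → r[ℓ-1]? = some (RLetter.Y a) → r[ℓ]? = some (RLetter.X b) →
        prevOcc u a (j (ℓ-1)) = some (i ℓ) ∧ j ℓ = j (ℓ-1)) ∧
    (∀ ℓ, 1 ≤ ℓ → ℓ < r.length →
        i (ℓ-1) ≤ i ℓ ∧ j ℓ ≤ j (ℓ-1) ∧ (i (ℓ-1) < i ℓ ∨ j ℓ < j (ℓ-1))) ∧
    i (r.length - 1) < p ∧ p < j (r.length - 1)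

/-- one step of the chain -/
def CStep (u : List A) : RLetter A → RLetter A → ℕ → ℕ → ℕ → ℕ → Prop
  | .X a, .X _, i, j, i1, j1 => nextOcc u a i = some i1 ∧ j1 = j
  | .Y a, .Y _, i, j, i1, j1 => i1 = i ∧ prevOcc u a j = some j1
  | .X a, .Y _, i, j, i1, j1 => i1 = i ∧ nextOcc u a i = some j1
  | .Y a, .X _, i, j, i1, j1 => prevOcc u a j = some i1 ∧ j1 = j

theorem chain_cons (u : List A) (z z2 : RLetter A) (r : List (RLetter A)) (i j : ℕ → ℕ) (p : ℕ) :
    Chain u (z :: z2 :: r) i j p ↔ CStep u z z2 (i 0) (j 0) (i 1) (j 1) ∧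
      (i 0 ≤ i 1 ∧ j 1 ≤ j 0 ∧ (i 0 < i 1 ∨ j 1 < j 0)) ∧
      Chain u (z2 :: r) (fun t => i (t+1)) (fun t => j (t+1)) p := by
  constructor
  · rintro ⟨h1, h2, h3, h4, h5, h6⟩
    refine ⟨?_, h5 1 (by omega) (by simp), ?_, ?_, ?_, ?_, ?_, h6⟩
    · cases z <;> cases z2
      · exact h1 1 _ _ (by omega) rfl rfl
      · exact h3 1 _ _ (by omega) rfl rfl
      · exact h4 1 _ _ (by omega) rfl rfl
      · exact h2 1 _ _ (by omega) rfl rfl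
    · intro ℓ a b h
      obtain ⟨t, rfl⟩ : ∃ t, ℓ = t + 1 := ⟨ℓ - 1, by omega⟩
      exact h1 (t+2) a b (by omega)
    · intro ℓ a b h
      obtain ⟨t, rfl⟩ : ∃ t, ℓ = t + 1 := ⟨ℓ - 1, by omega⟩
      exact h2 (t+2) a b (by omega)
    · intro ℓ a b h
      obtain ⟨t, rfl⟩ : ∃ t, ℓ = t + 1 := ⟨ℓ - 1, by omega⟩
      exact h3 (t+2) a b (by omega)
    · intro ℓ a b h
      obtain ⟨t, rfl⟩ : ∃ t, ℓ = t + 1 := ⟨ℓ - 1, by omega⟩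
      exact h4 (t+2) a b (by omega)
    · intro ℓ h h'
      obtain ⟨t, rfl⟩ : ∃ t, ℓ = t + 1 := ⟨ℓ - 1, by omega⟩
      exact h5 (t+2) (by omega) (by simp at *; omega)
  · rintro ⟨h0, h0', h1, h2, h3, h4, h5, h6⟩
    refine ⟨?_, ?_, ?_, ?_, ?_, h6⟩
    · intro ℓ a b h ha hb
      obtain ⟨t, rfl⟩ : ∃ t, ℓ = t + 1 := ⟨ℓ - 1, by omega⟩
      rcases t with _ | t
      · simp at ha hb; subst ha hb; exact h0
      · exact h1 (t+1) a b (by omega) ha hb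
    · intro ℓ a b h ha hb
      obtain ⟨t, rfl⟩ : ∃ t, ℓ = t + 1 := ⟨ℓ - 1, by omega⟩
      rcases t with _ | t
      · simp at ha hb; subst ha hb; exact h0
      · exact h2 (t+1) a b (by omega) ha hb
    · intro ℓ a b h ha hb
      obtain ⟨t, rfl⟩ : ∃ t, ℓ = t + 1 := ⟨ℓ - 1, by omega⟩
      rcases t with _ | t
      · simp at ha hb; subst ha hb; exact h0
      · exact h3 (t+1) a b (by omega) ha hb
    · intro ℓ a b h ha hb
      obtain ⟨t, rfl⟩ : ∃ t, ℓ = t + 1 := ⟨ℓ - 1, by omega⟩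
      rcases t with _ | t
      · simp at ha hb; subst ha hb; exact h0
      · exact h4 (t+1) a b (by omega) ha hb
    · intro ℓ h h'
      obtain ⟨t, rfl⟩ : ∃ t, ℓ = t + 1 := ⟨ℓ - 1, by omega⟩
      rcases t with _ | t
      · exact h0'
      · exact h5 (t+1) (by omega) (by simp at *; omega)

theorem chain_single (u : List A) (z : RLetter A) (i j : ℕ → ℕ) (p : ℕ) :
    Chain u [z] i j p ↔ i 0 < p ∧ p < j 0 := by
  constructor
  · rintro ⟨-, -, -, -, -, h⟩; exact h
  · intro h
    refine ⟨?_, ?_, ?_, ?_, ?_, h⟩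
    · intro ℓ a b h _ hb
      rw [List.getElem?_eq_none (by simp; omega)] at hb; simp at hb
    · intro ℓ a b h _ hb
      rw [List.getElem?_eq_none (by simp; omega)] at hb; simp at hb
    · intro ℓ a b h _ hb
      rw [List.getElem?_eq_none (by simp; omega)] at hb; simp at hb
    · intro ℓ a b h _ hb
      rw [List.getElem?_eq_none (by simp; omega)] at hb; simp at hb
    · intro ℓ h h'; simp at h'; omega

theorem bridge_to (u : List A) (r : List (RLetter A)) : ∀ (z : RLetter A) (i j : ℕ → ℕ) (p : ℕ),
    evalFrom u (z :: r) (st z (i 0) (j 0)) = some p → Chain u (z :: r) i j p →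
    ∃ k l : ℤ, Run (wf u) (z :: r) (i 0) (st z (i 0) (j 0)) (j 0) k p l := by
  induction r with
  | nil =>
    intro z i j p he hc
    rw [chain_single] at hc
    have he' : stepR u z (st z (i 0) (j 0)) = some p := by
      simpa [evalFrom, Option.bind_eq_some_iff] using he
    cases z with
    | X a => exact ⟨_, _, (run_single ..).2 ((stepX_iff ..).2 ⟨rfl, rfl, he', hc.2⟩)⟩
    | Y a => exact ⟨_, _, (run_single ..).2 ((stepY_iff ..).2 ⟨rfl, rfl, he', hc.1⟩)⟩
  | cons z2 r ih =>
    intro z i j p he hc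
    rw [chain_cons] at hc
    obtain ⟨h0, h1, h2⟩ := hc
    rw [evalFrom, Option.bind_eq_some_iff] at he
    obtain ⟨y, hy, he⟩ := he
    have hst : st z2 (i 1) (j 1) = y := by
      cases z <;> cases z2 <;> simp only [CStep, st, stepR] at h0 hy ⊢
      · rw [h0.1] at hy; exact Option.some.inj hy
      · rw [h0.2] at hy; exact Option.some.inj hy
      · rw [h0.1] at hy; exact Option.some.inj hy
      · rw [h0.2] at hy; exact Option.some.inj hy
    obtain ⟨k, l, hrun⟩ := ih z2 (fun t => i (t+1)) (fun t => j (t+1)) p (by rw [← hst] at he; exact he) h2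
    simp only [zero_add] at hrun
    have hbd : i 1 < j 1 := by
      obtain ⟨_, _, _, hs, -⟩ := id hrun
      cases z2 <;> simp only [Step, st] at hs <;> omega
    refine ⟨k, l, ?_⟩
    cases z with
    | X a =>
      cases z2 with
      | X b =>
        obtain ⟨h3, h4⟩ := h0
        exact ⟨_, _, _, (stepX_iff u a (i 0) (i 0) (j 0) (i 0) (i 1) (j 0)).2 ⟨rfl, rfl, h3, by omega⟩,
          (run_startX ⟨_, _, rfl⟩).1 (h4 ▸ hrun)⟩
      | Y b =>
        obtain ⟨h3, h4⟩ := h0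
        exact ⟨_, _, _, (stepX_iff u a (i 0) (i 0) (j 0) (i 0) (j 1) (j 0)).2 ⟨rfl, rfl, h4, by omega⟩,
          (run_startY ⟨_, _, rfl⟩).1 (h3 ▸ hrun)⟩
    | Y a =>
      cases z2 with
      | X b =>
        obtain ⟨h3, h4⟩ := h0
        exact ⟨_, _, _, (stepY_iff u a (i 0) (j 0) (j 0) (i 0) (i 1) (j 0)).2 ⟨rfl, rfl, h3, by omega⟩,
          (run_startX ⟨_, _, rfl⟩).1 (h4 ▸ hrun)⟩
      | Y b =>
        obtain ⟨h3, h4⟩ := h0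
        exact ⟨_, _, _, (stepY_iff u a (i 0) (j 0) (j 0) (i 0) (j 1) (j 0)).2 ⟨rfl, rfl, h4, by omega⟩,
          (run_startY ⟨_, _, rfl⟩).1 (h3 ▸ hrun)⟩

theorem bridge_from (u : List A) (r : List (RLetter A)) : ∀ (z : RLetter A) (i0 j0 : ℕ) (k q l : ℤ),
    Run (wf u) (z :: r) i0 (st z i0 j0) j0 k q l →
    ∃ (i j : ℕ → ℕ) (p : ℕ), q = p ∧ i 0 = i0 ∧ j 0 = j0 ∧
      evalFrom u (z :: r) (st z i0 j0) = some p ∧ Chain u (z :: r) i j p := by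
  induction r with
  | nil =>
    intro z i0 j0 k q l h
    rw [run_single] at h
    obtain ⟨k, q, l, rfl, rfl, rfl⟩ := step_nat h
    refine ⟨fun _ => i0, fun _ => j0, q, rfl, rfl, rfl, ?_⟩
    rw [chain_single]
    simp only [evalFrom]
    cases z with
    | X a =>
      have h1 := (stepX_iff ..).1 h
      have h2 := h.2.2.1
      simp only [st, stepR] at *
      rw [h1.2.2.1]
      exact ⟨rfl, by omega, by omega⟩
    | Y a =>
      have h1 := (stepY_iff ..).1 h
      have h2 := h.2.2.2.1
      simp only [st, stepR] at *
      rw [h1.2.2.1]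
      exact ⟨rfl, by omega, by omega⟩
  | cons z2 r ih =>
    intro z i0 j0 k q l h
    obtain ⟨i1, y, j1, hs, hr⟩ := h
    obtain ⟨i1, y, j1, rfl, rfl, rfl⟩ := step_nat hs
    have hstep : stepR u z (st z i0 j0) = some y := by
      cases z with
      | X a => exact ((stepX_iff ..).1 hs).2.2.1
      | Y a => exact ((stepY_iff ..).1 hs).2.2.1
    obtain ⟨I, J, hst, hC, hN, hr2⟩ : ∃ I J : ℕ, st z2 I J = y ∧ CStep u z z2 i0 j0 I J ∧
        (i0 ≤ I ∧ J ≤ j0 ∧ (i0 < I ∨ J < j0)) ∧ Run (wf u) (z2 :: r) I y J k q l := by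
      cases z with
      | X a =>
        obtain ⟨h1, h2, h3, h4⟩ := (stepX_iff ..).1 hs
        have h5 := hs.2.2.1
        simp only [st] at *
        subst h1 h2
        cases z2 with
        | X b => exact ⟨y, _, rfl, ⟨h3, rfl⟩, by omega, (run_startX ⟨_, _, rfl⟩).1 hr⟩
        | Y b => exact ⟨_, y, rfl, ⟨rfl, h3⟩, by omega, (run_startY ⟨_, _, rfl⟩).1 hr⟩
      | Y a =>
        obtain ⟨h1, h2, h3, h4⟩ := (stepY_iff ..).1 hs
        have h5 := hs.2.2.2.1
        simp only [st] at *
        subst h1 h2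
        cases z2 with
        | X b => exact ⟨y, _, rfl, ⟨h3, rfl⟩, by omega, (run_startX ⟨_, _, rfl⟩).1 hr⟩
        | Y b => exact ⟨_, y, rfl, ⟨rfl, h3⟩, by omega, (run_startY ⟨_, _, rfl⟩).1 hr⟩
    rw [← hst] at hr2
    obtain ⟨i, j, p, h1, h2, h3, h4, h5⟩ := ih z2 I J k q l hr2
    refine ⟨fun t => Nat.casesOn t i0 i, fun t => Nat.casesOn t j0 j, p, h1, rfl, rfl, ?_, ?_⟩
    · rw [evalFrom, hstep, ← hst]; exact h4
    · rw [chain_cons]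
      subst h2 h3
      exact ⟨hC, hN, h5⟩

theorem cond_iff (u : List A) (z : RLetter A) (r : List (RLetter A)) :
    Condensed u (z :: r) ↔
      CondS (wf u) (z :: r) (0 : ℕ) (st z 0 (u.length + 1)) (u.length + 1 : ℕ) := by
  have hstart : startPos u z = st z 0 (u.length + 1) := by cases z <;> rfl
  constructor
  · rintro ⟨p, i, j, he, hi, hj, hc⟩
    simp only [evalR, hstart] at he
    rw [← hi, ← hj] at he ⊢
    obtain ⟨k, l, h⟩ := bridge_to u r z i j p he hc
    exact ⟨k, p, l, h⟩
  · rintro ⟨k, q, l, h⟩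
    obtain ⟨i, j, p, rfl, hi, hj, he, hc⟩ := bridge_from u r z 0 (u.length + 1) k q l h
    exact ⟨p, i, j, by simpa only [evalR, hstart] using he, hi, hj, hc⟩

theorem run_pos {u : List A} {z : RLetter A} {r : List (RLetter A)} (h : Condensed u (z :: r)) :
    ∃ k l : ℤ, Run (wf u) (z :: r) (0 : ℕ) (st z 0 (u.length + 1)) (u.length + 1 : ℕ)
      k (pos u (z :: r)) l := by
  obtain ⟨k, q, l, h⟩ := (cond_iff u z r).1 h
  have hstart : startPos u z = st z 0 (u.length + 1) := by cases z <;> rfl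
  obtain ⟨i, j, p, rfl, hi, hj, he, hc⟩ := bridge_from u r z 0 (u.length + 1) k q l h
  have : pos u (z :: r) = p := by simp only [pos, evalR, hstart, he, Option.getD_some]
  rw [this]
  exact ⟨k, l, h⟩

theorem compare_of {p q p' q' : ℕ}
    (h : ((p : ℤ) < q ↔ (p' : ℤ) < q') ∧ ((q : ℤ) < p ↔ (q' : ℤ) < p')) :
    compare p q = compare p' q' := by
  rcases lt_trichotomy p q with h1 | h1 | h1
  · rw [compare_lt_iff_lt.2 h1, compare_lt_iff_lt.2 (by omega)]
  · rw [compare_eq_iff_eq.2 h1, compare_eq_iff_eq.2 (by omega)]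
  · rw [compare_gt_iff_gt.2 h1, compare_gt_iff_gt.2 (by omega)]

theorem blocks_of_uRXm {m : ℕ} {a : A} {s : List (RLetter A)} (h : uRXm m (RLetter.X a :: s)) :
    numBlocks (RLetter.X a :: s) ≤ m := by
  obtain ⟨n, -, ⟨m', n', h1, -, h2, -⟩ | ⟨m', n', -, -, -, -, b, t, ht⟩⟩ := h
  · omega
  · simp at ht

theorem blocks_of_uRYm {m : ℕ} {a : A} {s : List (RLetter A)} (h : uRYm m (RLetter.Y a :: s)) :
    numBlocks (RLetter.Y a :: s) ≤ m := by
  obtain ⟨n, -, ⟨m', n', h1, -, h2, -⟩ | ⟨m', n', -, -, -, -, b, t, ht⟩⟩ := h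
  · omega
  · simp at ht

/-- Order comparison of condensed rankers starting with the same
direction. -/
theorem statement14 (m n : ℕ) (hm : 2 ≤ m) (hmn : m ≤ n) (u v : List A) :
    (∀ (a b : A) (s s' : List (RLetter A)),
       uRXm m (RLetter.X a :: s) → uRXm (m-1) (RLetter.X b :: s') →
       (RLetter.X a :: s).length + (RLetter.X b :: s').length ≤ n →
       Condensed u (RLetter.X a :: s) → Condensed v (RLetter.X a :: s) →
       Condensed u (RLetter.X b :: s') → Condensed v (RLetter.X b :: s') →
       trir m n u v →
       compare (pos u (RLetter.X a :: s)) (pos u (RLetter.X b :: s')) =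
         compare (pos v (RLetter.X a :: s)) (pos v (RLetter.X b :: s'))) ∧
    (∀ (a b : A) (s s' : List (RLetter A)),
       uRYm m (RLetter.Y a :: s) → uRYm (m-1) (RLetter.Y b :: s') →
       (RLetter.Y a :: s).length + (RLetter.Y b :: s').length ≤ n →
       Condensed u (RLetter.Y a :: s) → Condensed v (RLetter.Y a :: s) →
       Condensed u (RLetter.Y b :: s') → Condensed v (RLetter.Y b :: s') →
       tril m n u v →
       compare (pos u (RLetter.Y a :: s)) (pos u (RLetter.Y b :: s')) =
         compare (pos v (RLetter.Y a :: s)) (pos v (RLetter.Y b :: s'))) := by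
  constructor
  · intro a b s s' h1 h2 hl c1 c2 c3 c4 ht
    have b1 := blocks_of_uRXm h1
    have b2 := blocks_of_uRXm h2
    obtain ⟨_, _, r1⟩ := run_pos c1
    obtain ⟨_, _, r2⟩ := run_pos c2
    obtain ⟨_, _, r3⟩ := run_pos c3
    obtain ⟨_, _, r4⟩ := run_pos c4
    apply compare_of
    refine cmp_main n m (wf u) (wf v) (0 : ℕ) (u.length + 1 : ℕ) (0 : ℕ) (v.length + 1 : ℕ)
      _ _ _ _ _ _ _ _ _ _ _ _ _ _ ?_ ⟨_, _, rfl⟩ ⟨_, _, rfl⟩ b1 (by omega) (by omega) hl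
      r1 r2 r3 r4
    rintro w ⟨c, t, rfl⟩ hw1 hw2
    have := ht (RLetter.X c :: t) (Or.inl ⟨_, _, hw1, hw2, rfl, rfl, _, _, rfl⟩)
    rw [cond_iff, cond_iff] at this
    exact this
  · intro a b s s' h1 h2 hl c1 c2 c3 c4 ht
    have b1 := blocks_of_uRYm h1
    have b2 := blocks_of_uRYm h2
    obtain ⟨_, _, r1⟩ := run_pos c1
    obtain ⟨_, _, r2⟩ := run_pos c2
    obtain ⟨_, _, r3⟩ := run_pos c3
    obtain ⟨_, _, r4⟩ := run_pos c4
    apply compare_of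
    refine (cmp_main n).dual m (wf u) (wf v) (0 : ℕ) (u.length + 1 : ℕ) (0 : ℕ) (v.length + 1 : ℕ)
      _ _ _ _ _ _ _ _ _ _ _ _ _ _ ?_ ⟨_, _, rfl⟩ ⟨_, _, rfl⟩ b1 (by omega) (by omega) hl
      r1 r2 r3 r4
    rintro w ⟨c, t, rfl⟩ hw1 hw2
    have := ht (RLetter.Y c :: t) (Or.inl ⟨_, _, hw1, hw2, rfl, rfl, _, _, rfl⟩)
    rw [cond_iff, cond_iff] at this
    exact this

end RankerPaper
end

section
/- Let n ≥ m ≥ 1 and let u, v ∈ A* satisfy u ⊳_{m+1,2n} v or u ⊲_{m+1,2n} v. Then the following three conditions hold: (WI1c) u and v agree on condensed rankers from uR_{m,n}; (WI2c) whenever r ∈ uR_{m,n} and r' ∈ uR_{m-1,n-1} are both condensed on u and on v, ord(r(u),r'(u)) = ord(r(v),r'(v)); (WI3c) whenever r ∈ uR_{m,n} and r' ∈ uR_{m,n-1} are both condensed on u and on v and end with different direction letters (one ends with an X-letter and the other with a Y-letter), ord(r(u),r'(u)) = ord(r(v),r'(v)). -/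
namespace RankerPaper

variable {A : Type*} [DecidableEq A]

set_option linter.unusedSectionVars false
set_option linter.unusedVariables false

/-! ### Abstract words over the integers -/

/-- `x` is the position reached by letter `z` in the open interval `(i;j)`. -/
def Fst (w : ℤ → Option A) (i j : ℤ) : RLetter A → ℤ → Prop
  | .X a, x => i < x ∧ x < j ∧ w x = some a ∧ ∀ y, i < y → y < x → w y ≠ some a
  | .Y a, x => i < x ∧ x < j ∧ w x = some a ∧ ∀ y, x < y → y < j → w y ≠ some a

/-- `p` is the position of the ranker, condensed in the interval `(i;j)`. -/
def CC (w : ℤ → Option A) : List (RLetter A) → ℤ → ℤ → ℤ → Prop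
  | [], _, _, _ => False
  | z :: t, i, j, p => ∃ x, Fst w i j z x ∧
      ((t = [] ∧ p = x) ∨ (startsX t ∧ CC w t x j p) ∨ (startsY t ∧ CC w t i x p))

def DD (w : ℤ → Option A) (r : List (RLetter A)) (i j : ℤ) : Prop := ∃ p, CC w r i j p

def lab : RLetter A → A
  | .X a => a
  | .Y a => a


theorem Fst.lt {w : ℤ → Option A} {i j : ℤ} {z : RLetter A} {x : ℤ} (h : Fst w i j z x) :
    i < x ∧ x < j ∧ w x = some (lab z) := by
  cases z <;> exact ⟨h.1, h.2.1, h.2.2.1⟩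

theorem Fst.uniq {w : ℤ → Option A} {i j : ℤ} {z : RLetter A} {x y : ℤ} (h : Fst w i j z x)
    (h' : Fst w i j z y) : x = y := by
  cases z with
  | X a =>
    obtain ⟨h1, h2, h3, h4⟩ := h
    obtain ⟨g1, g2, g3, g4⟩ := h'
    by_contra hne
    rcases lt_or_gt_of_ne hne with h | h
    · exact g4 x h1 h h3
    · exact h4 y g1 h g3
  | Y a =>
    obtain ⟨h1, h2, h3, h4⟩ := h
    obtain ⟨g1, g2, g3, g4⟩ := h'
    by_contra hne
    rcases lt_or_gt_of_ne hne with h | h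
    · exact h4 y h g2 g3
    · exact g4 x h h2 h3

/-- the reversed word -/
def rv (w : ℤ → Option A) : ℤ → Option A := fun x => w (-x)

def fl : RLetter A → RLetter A
  | .X a => .Y a
  | .Y a => .X a

theorem fl_fl (z : RLetter A) : fl (fl z) = z := by cases z <;> rfl

theorem rv_rv (w : ℤ → Option A) : rv (rv w) = w := by funext x; simp [rv]

theorem map_fl_fl (r : List (RLetter A)) : (r.map fl).map fl = r := by
  simp [List.map_map, Function.comp_def, fl_fl]

theorem Fst.rev {w : ℤ → Option A} {i j : ℤ} {z : RLetter A} {x : ℤ} (h : Fst w i j z x) :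
    Fst (rv w) (-j) (-i) (fl z) (-x) := by
  cases z with
  | X a =>
    obtain ⟨h1, h2, h3, h4⟩ := h
    refine ⟨by omega, by omega, by simpa [rv] using h3, ?_⟩
    intro y hy hy'
    exact h4 (-y) (by omega) (by omega)
  | Y a =>
    obtain ⟨h1, h2, h3, h4⟩ := h
    refine ⟨by omega, by omega, by simpa [rv] using h3, ?_⟩
    intro y hy hy'
    exact h4 (-y) (by omega) (by omega)

theorem startsX.fl {r : List (RLetter A)} (h : startsX r) : startsY (r.map fl) := by
  obtain ⟨a, t, rfl⟩ := h
  exact ⟨a, t.map _, rfl⟩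

theorem startsY.fl {r : List (RLetter A)} (h : startsY r) : startsX (r.map fl) := by
  obtain ⟨a, t, rfl⟩ := h
  exact ⟨a, t.map _, rfl⟩

theorem CC.rev {w : ℤ → Option A} : ∀ {r : List (RLetter A)} {i j p : ℤ}, CC w r i j p →
    CC (rv w) (r.map fl) (-j) (-i) (-p)
  | [], _, _, _, h => h.elim
  | z :: t, i, j, p, h => by
    obtain ⟨x, hx, h⟩ := h
    refine ⟨-x, hx.rev, ?_⟩
    rcases h with ⟨rfl, rfl⟩ | ⟨h1, h2⟩ | ⟨h1, h2⟩
    · exact Or.inl ⟨rfl, rfl⟩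
    · exact Or.inr (Or.inr ⟨h1.fl, h2.rev⟩)
    · exact Or.inr (Or.inl ⟨h1.fl, h2.rev⟩)

theorem DD.rev {w : ℤ → Option A} {r : List (RLetter A)} {i j : ℤ} (h : DD w r i j) :
    DD (rv w) (r.map fl) (-j) (-i) := by
  obtain ⟨p, hp⟩ := h
  exact ⟨_, hp.rev⟩

theorem DD_rev {w : ℤ → Option A} {r : List (RLetter A)} {i j : ℤ} :
    DD (rv w) (r.map fl) (-j) (-i) ↔ DD w r i j := by
  constructor
  · intro h
    have := h.rev
    simpa [rv_rv, map_fl_fl, -List.map_map] using this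
  · exact DD.rev

theorem nb_fl : ∀ (r : List (RLetter A)), numBlocks (r.map fl) = numBlocks r
  | [] => rfl
  | [_] => rfl
  | z :: w :: t => by
    have := nb_fl (w :: t)
    simp only [List.map_cons] at this ⊢
    simp only [numBlocks, this]
    cases z <;> cases w <;> rfl

theorem CC.bd {w : ℤ → Option A} : ∀ {r : List (RLetter A)} {i j p : ℤ}, CC w r i j p →
    i < p ∧ p < j
  | [], _, _, _, h => h.elim
  | z :: t, i, j, p, h => by
    obtain ⟨x, hx, h⟩ := h
    have := hx.lt
    rcases h with ⟨rfl, rfl⟩ | ⟨h1, h2⟩ | ⟨h1, h2⟩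
    · omega
    · have := h2.bd; omega
    · have := h2.bd; omega

theorem CC.uniq {w : ℤ → Option A} : ∀ {r : List (RLetter A)} {i j p q : ℤ}, CC w r i j p →
    CC w r i j q → p = q
  | [], _, _, _, _, h, _ => h.elim
  | z :: t, i, j, p, q, h, h' => by
    obtain ⟨x, hx, h⟩ := h
    obtain ⟨y, hy, h'⟩ := h'
    obtain rfl := hx.uniq hy
    rcases h with ⟨rfl, rfl⟩ | ⟨⟨a, s, rfl⟩, h2⟩ | ⟨⟨a, s, rfl⟩, h2⟩
    · rcases h' with ⟨h, rfl⟩ | ⟨⟨_, _, h⟩, _⟩ | ⟨⟨_, _, h⟩, _⟩ <;> simp_all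
    · rcases h' with ⟨h, rfl⟩ | ⟨_, h3⟩ | ⟨⟨_, _, h⟩, _⟩
      · simp_all
      · exact h2.uniq h3
      · simp_all
    · rcases h' with ⟨h, rfl⟩ | ⟨⟨_, _, h⟩, _⟩ | ⟨_, h3⟩
      · simp_all
      · simp_all
      · exact h2.uniq h3

theorem DD_cons {w : ℤ → Option A} {z : RLetter A} {t : List (RLetter A)} {i j x : ℤ}
    (hx : Fst w i j z x) :
    DD w (z :: t) i j ↔ (t = [] ∨ (startsX t ∧ DD w t x j) ∨ (startsY t ∧ DD w t i x)) := by
  constructor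
  · rintro ⟨p, y, hy, h⟩
    obtain rfl := hx.uniq hy
    rcases h with ⟨rfl, rfl⟩ | ⟨h1, h2⟩ | ⟨h1, h2⟩
    · exact Or.inl rfl
    · exact Or.inr (Or.inl ⟨h1, _, h2⟩)
    · exact Or.inr (Or.inr ⟨h1, _, h2⟩)
  · rintro (rfl | ⟨h, p, hp⟩ | ⟨h, p, hp⟩)
    · exact ⟨x, x, hx, Or.inl ⟨rfl, rfl⟩⟩
    · exact ⟨p, x, hx, Or.inr (Or.inl ⟨h, hp⟩)⟩
    · exact ⟨p, x, hx, Or.inr (Or.inr ⟨h, hp⟩)⟩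

theorem startsX_X (a : A) (t : List (RLetter A)) : startsX (RLetter.X a :: t) := ⟨a, t, rfl⟩
theorem startsY_Y (a : A) (t : List (RLetter A)) : startsY (RLetter.Y a :: t) := ⟨a, t, rfl⟩
theorem not_startsX_Y (a : A) (t : List (RLetter A)) : ¬ startsX (RLetter.Y a :: t) := by
  rintro ⟨b, s, h⟩; simp at h
theorem not_startsY_X (a : A) (t : List (RLetter A)) : ¬ startsY (RLetter.X a :: t) := by
  rintro ⟨b, s, h⟩; simp at h

theorem DD_consX {w : ℤ → Option A} {z : RLetter A} {t : List (RLetter A)} {i j x : ℤ}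
    (hx : Fst w i j z x) (ht : startsX t) : DD w (z :: t) i j ↔ DD w t x j := by
  obtain ⟨a, s, rfl⟩ := ht
  rw [DD_cons hx]
  simp [startsX_X, not_startsY_X]

theorem DD_consY {w : ℤ → Option A} {z : RLetter A} {t : List (RLetter A)} {i j x : ℤ}
    (hx : Fst w i j z x) (ht : startsY t) : DD w (z :: t) i j ↔ DD w t i x := by
  obtain ⟨a, s, rfl⟩ := ht
  rw [DD_cons hx]
  simp [startsY_Y, not_startsX_Y]

theorem DD_fst {w : ℤ → Option A} {z : RLetter A} {t : List (RLetter A)} {i j : ℤ}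
    (h : DD w (z :: t) i j) : ∃ x, Fst w i j z x := by
  obtain ⟨p, x, hx, _⟩ := h
  exact ⟨x, hx⟩

theorem exX {w : ℤ → Option A} {a : A} {i j : ℤ} (h : ∃ x, i < x ∧ x < j ∧ w x = some a) :
    ∃ x, Fst w i j (.X a) x := by
  classical
  obtain ⟨x, h1, h2, h3⟩ := h
  obtain ⟨d, hd⟩ := Int.eq_ofNat_of_zero_le (show 0 ≤ x - i - 1 by omega)
  have hex : ∃ d : ℕ, w (i + 1 + d) = some a := ⟨d, by rw [← hd]; convert h3 using 2; ring⟩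
  refine ⟨i + 1 + (Nat.find hex : ℕ), by omega, ?_, Nat.find_spec hex, ?_⟩
  · have : Nat.find hex ≤ d := Nat.find_min' hex (by rw [← hd]; convert h3 using 2; ring)
    omega
  · intro y hy hy' hw
    obtain ⟨e, he⟩ := Int.eq_ofNat_of_zero_le (show 0 ≤ y - i - 1 by omega)
    have := Nat.find_min hex (m := e) (by omega)
    apply this
    rw [← he, ← hw]; congr 1; ring

theorem exZ {w : ℤ → Option A} {z : RLetter A} {i j : ℤ} :
    (∃ x, Fst w i j z x) ↔ ∃ x, i < x ∧ x < j ∧ w x = some (lab z) := by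
  constructor
  · rintro ⟨x, hx⟩
    exact ⟨x, hx.lt⟩
  · intro h
    cases z with
    | X a => exact exX h
    | Y a =>
      obtain ⟨x, h1, h2, h3⟩ := h
      have : ∃ x, Fst (rv w) (-j) (-i) (.X a) x := by
        apply exX
        exact ⟨-x, by omega, by omega, by simpa [rv, lab] using h3⟩
      obtain ⟨y, hy⟩ := this
      have := hy.rev
      simp only [rv_rv, neg_neg] at this
      exact ⟨_, this⟩

theorem DD_one {w : ℤ → Option A} {z : RLetter A} {i j : ℤ} :
    DD w [z] i j ↔ ∃ x, i < x ∧ x < j ∧ w x = some (lab z) := by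
  rw [← exZ]
  constructor
  · exact DD_fst
  · rintro ⟨x, hx⟩
    exact (DD_cons hx).2 (Or.inl rfl)

theorem nb_XX (a b : A) (t : List (RLetter A)) :
    numBlocks (RLetter.X a :: RLetter.X b :: t) = numBlocks (RLetter.X b :: t) := by
  simp [numBlocks, sameDir]
theorem nb_YY (a b : A) (t : List (RLetter A)) :
    numBlocks (RLetter.Y a :: RLetter.Y b :: t) = numBlocks (RLetter.Y b :: t) := by
  simp [numBlocks, sameDir]
theorem nb_XY (a b : A) (t : List (RLetter A)) :
    numBlocks (RLetter.X a :: RLetter.Y b :: t) = 1 + numBlocks (RLetter.Y b :: t) := by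
  simp [numBlocks, sameDir]
theorem nb_YX (a b : A) (t : List (RLetter A)) :
    numBlocks (RLetter.Y a :: RLetter.X b :: t) = 1 + numBlocks (RLetter.X b :: t) := by
  simp [numBlocks, sameDir]
theorem nb_one (z : RLetter A) : numBlocks [z] = 1 := rfl
theorem nb_pos : ∀ (z : RLetter A) (t : List (RLetter A)), 1 ≤ numBlocks (z :: t)
  | _, [] => le_refl _
  | z, w :: t => by
    have := nb_pos w t
    simp only [numBlocks]; omega

/-! ### agreement on intervals -/

def AX (b k : ℕ) (u : ℤ → Option A) (i j : ℤ) (v : ℤ → Option A) (i' j' : ℤ) : Prop :=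
  ∀ r, startsX r → numBlocks r ≤ b → r.length ≤ k → (DD u r i j ↔ DD v r i' j')

def AY (b k : ℕ) (u : ℤ → Option A) (i j : ℤ) (v : ℤ → Option A) (i' j' : ℤ) : Prop :=
  ∀ r, startsY r → numBlocks r ≤ b → r.length ≤ k → (DD u r i j ↔ DD v r i' j')

section shrink
variable {u v : ℤ → Option A} {i j i' j' x x' : ℤ} {a : A} {b k : ℕ}

theorem AX.mono {c l : ℕ} (h : AX b k u i j v i' j') (hc : c ≤ b) (hl : l ≤ k) :
    AX c l u i j v i' j' := fun r h1 h2 h3 => h r h1 (by omega) (by omega)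

theorem AY.mono {c l : ℕ} (h : AY b k u i j v i' j') (hc : c ≤ b) (hl : l ≤ k) :
    AY c l u i j v i' j' := fun r h1 h2 h3 => h r h1 (by omega) (by omega)

theorem AX.rev (h : AX b k u i j v i' j') : AY b k (rv u) (-j) (-i) (rv v) (-j') (-i') := by
  intro r h1 h2 h3
  have := h (r.map fl) h1.fl (by rwa [nb_fl]) (by simpa using h3)
  rw [← DD_rev, ← @DD_rev _ _ v] at this
  simpa [map_fl_fl, -List.map_map] using this

theorem AY.rev (h : AY b k u i j v i' j') : AX b k (rv u) (-j) (-i) (rv v) (-j') (-i') := by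
  intro r h1 h2 h3
  have := h (r.map fl) h1.fl (by rwa [nb_fl]) (by simpa using h3)
  rw [← DD_rev, ← @DD_rev _ _ v] at this
  simpa [map_fl_fl, -List.map_map] using this

/-- from reversed to original -/
theorem AY.of_rev (h : AX b k (rv u) (-j) (-i) (rv v) (-j') (-i')) : AY b k u i j v i' j' := by
  have := h.rev
  simpa [rv_rv] using this

theorem AX.of_rev (h : AY b k (rv u) (-j) (-i) (rv v) (-j') (-i')) : AX b k u i j v i' j' := by
  have := h.rev
  simpa [rv_rv] using this

/-- first `a`, right part, X-rankers -/
theorem AX.fR (h : AX b (k+1) u i j v i' j') (hx : Fst u i j (.X a) x)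
    (hx' : Fst v i' j' (.X a) x') : AX b k u x j v x' j' := by
  intro r h1 h2 h3
  rw [← DD_consX hx h1, ← DD_consX hx' h1]
  refine h _ (startsX_X _ _) ?_ (by simpa using h3)
  obtain ⟨c, s, rfl⟩ := h1
  rwa [nb_XX]

/-- first `a`, left part, Y-rankers -/
theorem AX.fLY (h : AX (b+1) (k+1) u i j v i' j') (hx : Fst u i j (.X a) x)
    (hx' : Fst v i' j' (.X a) x') : AY b k u i x v i' x' := by
  intro r h1 h2 h3
  rw [← DD_consY hx h1, ← DD_consY hx' h1]
  refine h _ (startsX_X _ _) ?_ (by simpa using h3)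
  obtain ⟨c, s, rfl⟩ := h1
  rw [nb_XY]; omega

theorem Fst.restrX {w : ℤ → Option A} {i j x y : ℤ} {a : A} (h : Fst w i j (.X a) x)
    (h1 : i ≤ y) (h2 : y < x) : Fst w y j (.X a) x := by
  obtain ⟨g1, g2, g3, g4⟩ := h
  exact ⟨h2, g2, g3, fun z hz hz' => g4 z (by omega) hz'⟩

theorem Fst.restrX' {w : ℤ → Option A} {i j x y : ℤ} {a : A} (h : Fst w i j (.X a) x)
    (h2 : x < y) : Fst w i y (.X a) x := by
  obtain ⟨g1, g2, g3, g4⟩ := h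
  exact ⟨g1, h2, g3, g4⟩

theorem Fst.extX {w : ℤ → Option A} {i j y l : ℤ} {a : A} (h : Fst w i j (.X a) y)
    (h1 : j ≤ l) : Fst w i l (.X a) y := by
  obtain ⟨g1, g2, g3, g4⟩ := h
  exact ⟨g1, by omega, g3, g4⟩

theorem Fst.restrY {w : ℤ → Option A} {i j x y : ℤ} {a : A} (h : Fst w i j (.Y a) x)
    (h1 : y < x) : Fst w y j (.Y a) x := by
  obtain ⟨g1, g2, g3, g4⟩ := h
  exact ⟨h1, g2, g3, g4⟩

theorem Fst.restrY' {w : ℤ → Option A} {i j x y : ℤ} {a : A} (h : Fst w i j (.Y a) x)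
    (h1 : y ≤ j) (h2 : x < y) : Fst w i y (.Y a) x := by
  obtain ⟨g1, g2, g3, g4⟩ := h
  exact ⟨g1, h2, g3, fun z hz hz' => g4 z hz (by omega)⟩

end shrink

section shrink2
variable {u v : ℤ → Option A} {i j i' j' x x' : ℤ} {a : A} {b k : ℕ}

theorem left_core {t : List (RLetter A)} {c : A}
    (h : AX b k u i j v i' j') (hxj : x ≤ j) (hxj' : x' ≤ j')
    (hb : numBlocks (RLetter.X c :: t) ≤ b) (hk : (RLetter.X c :: t).length ≤ k)
    (hocc : (∃ y, i < y ∧ y < x ∧ u y = some c) ↔ (∃ y, i' < y ∧ y < x' ∧ v y = some c))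
    (hrec : ∀ y y', Fst u i x (.X c) y → Fst v i' x' (.X c) y' → startsX t →
      (DD u t y x ↔ DD v t y' x')) :
    DD u (RLetter.X c :: t) i x ↔ DD v (RLetter.X c :: t) i' x' := by
  have hocc' : (∃ y, Fst u i x (.X c) y) ↔ (∃ y, Fst v i' x' (.X c) y) := by
    rw [exZ, exZ]; exact hocc
  by_cases hy : ∃ y, Fst u i x (.X c) y
  · obtain ⟨y', hy'⟩ := hocc'.1 hy
    obtain ⟨y, hy⟩ := hy
    have key := h (RLetter.X c :: t) (startsX_X _ _) hb hk
    rw [DD_cons (hy.extX hxj), DD_cons (hy'.extX hxj')] at key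
    rw [DD_cons hy, DD_cons hy']
    rcases t with _ | ⟨z, s⟩
    · simp
    cases z with
    | X d =>
      have := hrec y y' hy hy' (startsX_X _ _)
      simp [startsX_X, not_startsY_X, this]
    | Y d =>
      simp only [startsY_Y, not_startsX_Y] at key ⊢
      simpa using key
  · have hy' : ¬ ∃ y, Fst v i' x' (.X c) y := fun h => hy (hocc'.2 h)
    constructor
    · intro h; exact (hy (DD_fst h)).elim
    · intro h; exact (hy' (DD_fst h)).elim

theorem test_lL {w : ℤ → Option A} {i j x : ℤ} {a c : A} (h : Fst w i j (.Y a) x) :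
    (∃ y, i < y ∧ y < x ∧ w y = some c) ↔ DD w [.X c, .X a] i j := by
  obtain ⟨h1, h2, h3, h4⟩ := h
  constructor
  · intro hy
    obtain ⟨y, hy⟩ := exX hy
    rw [DD_consX (hy.extX h2.le) (startsX_X _ _), DD_one]
    exact ⟨x, hy.lt.2.1, h2, h3⟩
  · intro hd
    obtain ⟨y, hy⟩ := DD_fst hd
    rw [DD_consX hy (startsX_X _ _), DD_one] at hd
    obtain ⟨z, hz1, hz2, hz3⟩ := hd
    refine ⟨y, hy.lt.1, ?_, hy.lt.2.2⟩
    by_contra hlt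
    exact h4 z (by omega) hz2 hz3

theorem test_fL {w : ℤ → Option A} {i j x : ℤ} {a c : A} (h : Fst w i j (.X a) x) :
    (∃ y, i < y ∧ y < x ∧ w y = some c) ↔ DD w [.X a, .Y c] i j := by
  rw [DD_consY h (startsY_Y _ _), DD_one]
  rfl

theorem AX.lL : ∀ {k : ℕ} {i i' : ℤ}, AX b (k+1) u i j v i' j' → Fst u i j (.Y a) x →
    Fst v i' j' (.Y a) x' → AX b k u i x v i' x'
  | 0, i, i', h, hx, hx' => by
    rintro r ⟨c, t, rfl⟩ h2 h3
    simp at h3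
  | k+1, i, i', h, hx, hx' => by
    rintro r ⟨c, t, rfl⟩ h2 h3
    have hb := nb_pos (RLetter.X c) t
    refine left_core (h.mono le_rfl (Nat.le_succ _)) hx.lt.2.1.le hx'.lt.2.1.le h2 h3 ?_ ?_
    · rw [test_lL hx, test_lL hx']
      exact h _ (startsX_X _ _) (by rw [nb_XX, nb_one]; omega) (by simp)
    · intro y y' hy hy' ht
      have e := h.fR (hy.extX hx.lt.2.1.le) (hy'.extX hx'.lt.2.1.le)
      have := AX.lL e (hx.restrY hy.lt.2.1) (hx'.restrY hy'.lt.2.1)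
      refine this t ht ?_ (by simp at h3; omega)
      obtain ⟨d, s, rfl⟩ := ht
      rwa [nb_XX] at h2

theorem AX.fL (hb2 : 2 ≤ b) : ∀ {k : ℕ} {i i' : ℤ}, AX b (k+1) u i j v i' j' →
    Fst u i j (.X a) x → Fst v i' j' (.X a) x' → AX b k u i x v i' x'
  | 0, i, i', h, hx, hx' => by
    rintro r ⟨c, t, rfl⟩ h2 h3
    simp at h3
  | k+1, i, i', h, hx, hx' => by
    rintro r ⟨c, t, rfl⟩ h2 h3
    refine left_core (h.mono le_rfl (Nat.le_succ _)) hx.lt.2.1.le hx'.lt.2.1.le h2 h3 ?_ ?_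
    · rw [test_fL hx, test_fL hx']
      exact h _ (startsX_X _ _) (by rw [nb_XY, nb_one]; omega) (by simp)
    · intro y y' hy hy' ht
      have e := h.fR (hy.extX hx.lt.2.1.le) (hy'.extX hx'.lt.2.1.le)
      have := AX.fL hb2 e (hx.restrX hy.lt.1.le hy.lt.2.1) (hx'.restrX hy'.lt.1.le hy'.lt.2.1)
      refine this t ht ?_ (by simp at h3; omega)
      obtain ⟨d, s, rfl⟩ := ht
      rwa [nb_XX] at h2

/-- duals -/
theorem AY.lL (h : AY b (k+1) u i j v i' j') (hx : Fst u i j (.Y a) x)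
    (hx' : Fst v i' j' (.Y a) x') : AY b k u i x v i' x' :=
  AY.of_rev (h.rev.fR hx.rev hx'.rev)

theorem AY.lRX (h : AY (b+1) (k+1) u i j v i' j') (hx : Fst u i j (.Y a) x)
    (hx' : Fst v i' j' (.Y a) x') : AX b k u x j v x' j' :=
  AX.of_rev (h.rev.fLY hx.rev hx'.rev)

theorem AY.fR (h : AY b (k+1) u i j v i' j') (hx : Fst u i j (.X a) x)
    (hx' : Fst v i' j' (.X a) x') : AY b k u x j v x' j' :=
  AY.of_rev (h.rev.lL hx.rev hx'.rev)

theorem AY.lR (hb : 2 ≤ b) (h : AY b (k+1) u i j v i' j') (hx : Fst u i j (.Y a) x)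
    (hx' : Fst v i' j' (.Y a) x') : AY b k u x j v x' j' :=
  AY.of_rev (AX.fL hb h.rev hx.rev hx'.rev)

end shrink2

/-! ### the pivot lemma -/

def TT (m : ℕ) (r : List (RLetter A)) : Prop :=
  (startsX r ∧ numBlocks r ≤ m+1) ∨ (startsY r ∧ numBlocks r ≤ m)

def HL (k : ℕ) (u : ℤ → Option A) (i j : ℤ) (v : ℤ → Option A) (i' j' : ℤ)
    (r : List (RLetter A)) : Prop :=
  (∃ m, AX (m+1) k u i j v i' j' ∧ AY m k u i j v i' j' ∧ TT m r) ∨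
  (AX 1 k u i j v i' j' ∧ AY 2 k u i j v i' j')

def HR (k : ℕ) (u : ℤ → Option A) (i j : ℤ) (v : ℤ → Option A) (i' j' : ℤ)
    (r : List (RLetter A)) : Prop :=
  HL k (rv u) (-j) (-i) (rv v) (-j') (-i') (r.map fl)

section pivot
variable {u v : ℤ → Option A} {i j i' j' x x' : ℤ} {a : A} {b k : ℕ}

theorem HL.alph {r : List (RLetter A)} (h : HL (k+1) u i j v i' j' r) (c : A) :
    (∃ y, i < y ∧ y < j ∧ u y = some c) ↔ (∃ y, i' < y ∧ y < j' ∧ v y = some c) := by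
  have hX : AX 1 1 u i j v i' j' := by
    rcases h with ⟨m, h1, h2, h3⟩ | ⟨h1, h2⟩
    · exact h1.mono (by omega) (by omega)
    · exact h1.mono (by omega) (by omega)
  have := hX [.X c] (startsX_X _ _) le_rfl le_rfl
  rwa [DD_one, DD_one] at this

theorem HR.alph {r : List (RLetter A)} (h : HR (k+1) u i j v i' j' r) (c : A) :
    (∃ y, i < y ∧ y < j ∧ u y = some c) ↔ (∃ y, i' < y ∧ y < j' ∧ v y = some c) := by
  have e : ∀ (w : ℤ → Option A) (i j : ℤ), (∃ y, i < y ∧ y < j ∧ w y = some c) ↔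
      (∃ y, -j < y ∧ y < -i ∧ rv w y = some c) := by
    intro w i j
    constructor
    · rintro ⟨y, h1, h2, h3⟩
      exact ⟨-y, by omega, by omega, by simpa [rv] using h3⟩
    · rintro ⟨y, h1, h2, h3⟩
      exact ⟨-y, by omega, by omega, h3⟩
  rw [e, e v]
  exact HL.alph h c

theorem HL.shrink {z : RLetter A} {t : List (RLetter A)} (h : HL (k+1) u i j v i' j' (z :: t))
    (ht : startsX t) (hx : Fst u i j z x) (hx' : Fst v i' j' z x') :
    HL k u x j v x' j' t := by
  cases z with
  | X c =>
    rcases h with ⟨m, h1, h2, h3⟩ | ⟨h1, h2⟩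
    · refine Or.inl ⟨m, h1.fR hx hx', h2.fR hx hx', Or.inl ⟨ht, ?_⟩⟩
      obtain ⟨d, s, rfl⟩ := ht
      rcases h3 with ⟨_, h3⟩ | ⟨h3, _⟩
      · rwa [nb_XX] at h3
      · exact (not_startsY_X _ _ h3).elim
    · exact Or.inr ⟨h1.fR hx hx', h2.fR hx hx'⟩
  | Y c =>
    right
    rcases h with ⟨m, h1, h2, h3⟩ | ⟨h1, h2⟩
    · have hm : 2 ≤ m := by
        obtain ⟨d, s, rfl⟩ := ht
        rcases h3 with ⟨h3, _⟩ | ⟨_, h3⟩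
        · exact (not_startsX_Y _ _ h3).elim
        · rw [nb_YX] at h3
          have := nb_pos (RLetter.X d) s
          omega
      have h2' : AY 2 (k+1) u i j v i' j' := h2.mono hm le_rfl
      exact ⟨AY.lRX h2' hx hx', AY.lR le_rfl h2' hx hx'⟩
    · exact ⟨AY.lRX h2 hx hx', AY.lR le_rfl h2 hx hx'⟩

theorem HL.keep {z : RLetter A} {t : List (RLetter A)} (h : HL (k+1) u i j v i' j' (z :: t))
    (ht : startsY t) : HL k u i j v i' j' t := by
  rcases h with ⟨m, h1, h2, h3⟩ | ⟨h1, h2⟩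
  · refine Or.inl ⟨m, h1.mono le_rfl (by omega), h2.mono le_rfl (by omega), Or.inr ⟨ht, ?_⟩⟩
    obtain ⟨d, s, rfl⟩ := ht
    cases z with
    | X c =>
      rcases h3 with ⟨_, h3⟩ | ⟨h3, _⟩
      · rw [nb_XY] at h3; omega
      · exact (not_startsY_X _ _ h3).elim
    | Y c =>
      rcases h3 with ⟨h3, _⟩ | ⟨_, h3⟩
      · exact (not_startsX_Y _ _ h3).elim
      · rwa [nb_YY] at h3
  · exact Or.inr ⟨h1.mono le_rfl (by omega), h2.mono le_rfl (by omega)⟩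

theorem HR.shrink {z : RLetter A} {t : List (RLetter A)} (h : HR (k+1) u i j v i' j' (z :: t))
    (ht : startsY t) (hx : Fst u i j z x) (hx' : Fst v i' j' z x') :
    HR k u i x v i' x' t :=
  HL.shrink (z := fl z) h ht.fl hx.rev hx'.rev

theorem HR.keep {z : RLetter A} {t : List (RLetter A)} (h : HR (k+1) u i j v i' j' (z :: t))
    (ht : startsX t) : HR k u i j v i' j' t :=
  HL.keep (z := fl z) h ht.fl

theorem CC.extY {w : ℤ → Option A} : ∀ {r : List (RLetter A)} {i l j p : ℤ}, startsY r →
    CC w r i j p → l ≤ i → CC w r l j p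
  | [], _, _, _, _, h, h', _ => h'.elim
  | z :: t, i, l, j, p, h, h', hl => by
    obtain ⟨a, s, hs⟩ := h
    obtain ⟨rfl, rfl⟩ := List.cons.inj hs
    obtain ⟨x, hx, hh⟩ := h'
    refine ⟨x, hx.restrY (by have := hx.lt; omega), ?_⟩
    rcases hh with hh | hh | ⟨h1, h2⟩
    · exact Or.inl hh
    · exact Or.inr (Or.inl hh)
    · exact Or.inr (Or.inr ⟨h1, h2.extY h1 hl⟩)

theorem CC.extX {w : ℤ → Option A} {r : List (RLetter A)} {i l j p : ℤ} (h : startsX r)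
    (h' : CC w r i j p) (hl : j ≤ l) : CC w r i l p := by
  have := (CC.extY h.fl h'.rev (neg_le_neg hl)).rev
  simpa [rv_rv, map_fl_fl, -List.map_map] using this

def Out (u : ℤ → Option A) (i q j : ℤ) (v : ℤ → Option A) (i' q' j' : ℤ)
    (r : List (RLetter A)) (p p' : ℤ) : Prop :=
  (p = q ∧ p' = q') ∨
  (∃ s, s <:+ r ∧ (s = r ∨ startsY s) ∧ CC u s i q p ∧ CC v s i' q' p') ∨
  (∃ s, s <:+ r ∧ (s = r ∨ startsX s) ∧ CC u s q j p ∧ CC v s q' j' p')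

/-- restrict a one-letter step to the left of the pivot -/
theorem Fst.toL {w : ℤ → Option A} {i j x q : ℤ} {z : RLetter A} (h : Fst w i j z x)
    (h1 : x < q) (h2 : q ≤ j) : Fst w i q z x := by
  cases z with
  | X c => exact h.restrX' h1
  | Y c => exact h.restrY' h2 h1

theorem Fst.toR {w : ℤ → Option A} {i j x q : ℤ} {z : RLetter A} (h : Fst w i j z x)
    (h1 : q < x) (h2 : i ≤ q) : Fst w q j z x := by
  cases z with
  | X c => exact h.restrX h2 h1
  | Y c => exact h.restrY h1

theorem trich {q q' : ℤ} {z : RLetter A} (hq : i < q ∧ q < j) (hq' : i' < q' ∧ q' < j')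
    (hlab : u q = v q')
    (hL : (∃ y, i < y ∧ y < q ∧ u y = some (lab z)) ↔
      (∃ y, i' < y ∧ y < q' ∧ v y = some (lab z)))
    (hR : (∃ y, q < y ∧ y < j ∧ u y = some (lab z)) ↔
      (∃ y, q' < y ∧ y < j' ∧ v y = some (lab z)))
    (hx : Fst u i j z x) (hx' : Fst v i' j' z x') :
    (x < q ∧ x' < q') ∨ (x = q ∧ x' = q') ∨ (q < x ∧ q' < x') := by
  cases z with
  | X c =>
    obtain ⟨h1, h2, h3, h4⟩ := hx
    obtain ⟨g1, g2, g3, g4⟩ := hx'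
    simp only [lab] at hL hR
    rcases lt_trichotomy x q with h | h | h
    · obtain ⟨y, y1, y2, y3⟩ := hL.1 ⟨x, h1, h, h3⟩
      left; refine ⟨h, ?_⟩
      by_contra hc
      exact g4 y y1 (by omega) y3
    · right; left
      refine ⟨h, ?_⟩
      rcases lt_trichotomy x' q' with g | g | g
      · obtain ⟨y, y1, y2, y3⟩ := hL.2 ⟨x', g1, g, g3⟩
        exact (h4 y y1 (by omega) y3).elim
      · exact g
      · exact (g4 q' hq'.1 g (by rw [← hlab, ← h, h3])).elim
    · right; right
      refine ⟨h, ?_⟩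
      rcases lt_trichotomy x' q' with g | g | g
      · obtain ⟨y, y1, y2, y3⟩ := hL.2 ⟨x', g1, g, g3⟩
        exact (h4 y y1 (by omega) y3).elim
      · exact (h4 q hq.1 h (by rw [hlab, ← g, g3])).elim
      · exact g
  | Y c =>
    obtain ⟨h1, h2, h3, h4⟩ := hx
    obtain ⟨g1, g2, g3, g4⟩ := hx'
    simp only [lab] at hL hR
    rcases lt_trichotomy x q with h | h | h
    · left; refine ⟨h, ?_⟩
      rcases lt_trichotomy x' q' with g | g | g
      · exact g
      · exact (h4 q h hq.2 (by rw [hlab, ← g, g3])).elim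
      · obtain ⟨y, y1, y2, y3⟩ := hR.2 ⟨x', g, g2, g3⟩
        exact (h4 y (by omega) y2 y3).elim
    · right; left
      refine ⟨h, ?_⟩
      rcases lt_trichotomy x' q' with g | g | g
      · exact (g4 q' g hq'.2 (by rw [← hlab, ← h, h3])).elim
      · exact g
      · obtain ⟨y, y1, y2, y3⟩ := hR.2 ⟨x', g, g2, g3⟩
        exact (h4 y (by omega) y2 y3).elim
    · right; right
      obtain ⟨y, y1, y2, y3⟩ := hR.1 ⟨x, h, h2, h3⟩
      refine ⟨h, ?_⟩
      by_contra hc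
      exact g4 y (by omega) y2 y3

theorem CC_nil {w : ℤ → Option A} {z : RLetter A} {i j p : ℤ} (h : CC w [z] i j p) :
    Fst w i j z p := by
  obtain ⟨y, hy, h⟩ := h
  rcases h with ⟨_, rfl⟩ | ⟨⟨_, _, h⟩, _⟩ | ⟨⟨_, _, h⟩, _⟩
  · exact hy
  · simp at h
  · simp at h

theorem CC_X {w : ℤ → Option A} {z : RLetter A} {t : List (RLetter A)} {i j p x : ℤ}
    (hx : Fst w i j z x) (ht : startsX t) : CC w (z :: t) i j p ↔ CC w t x j p := by
  constructor
  · rintro ⟨y, hy, h⟩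
    obtain rfl := hx.uniq hy
    obtain ⟨d, s, rfl⟩ := ht
    rcases h with ⟨h, _⟩ | ⟨_, h⟩ | ⟨h, _⟩
    · simp at h
    · exact h
    · exact (not_startsY_X _ _ h).elim
  · intro h
    exact ⟨x, hx, Or.inr (Or.inl ⟨ht, h⟩)⟩

theorem CC_Y {w : ℤ → Option A} {z : RLetter A} {t : List (RLetter A)} {i j p x : ℤ}
    (hx : Fst w i j z x) (ht : startsY t) : CC w (z :: t) i j p ↔ CC w t i x p := by
  constructor
  · rintro ⟨y, hy, h⟩
    obtain rfl := hx.uniq hy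
    obtain ⟨d, s, rfl⟩ := ht
    rcases h with ⟨h, _⟩ | ⟨h, _⟩ | ⟨_, h⟩
    · simp at h
    · exact (not_startsX_Y _ _ h).elim
    · exact h
  · intro h
    exact ⟨x, hx, Or.inr (Or.inr ⟨ht, h⟩)⟩

theorem CC_sing {w : ℤ → Option A} {z : RLetter A} {i j p : ℤ} (h : Fst w i j z p) :
    CC w [z] i j p := ⟨p, h, Or.inl ⟨rfl, rfl⟩⟩

theorem CC_fst {w : ℤ → Option A} {z : RLetter A} {t : List (RLetter A)} {i j p : ℤ}
    (h : CC w (z :: t) i j p) : ∃ x, Fst w i j z x := by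
  obtain ⟨x, hx, _⟩ := h
  exact ⟨x, hx⟩

theorem casesXY (t : List (RLetter A)) : t = [] ∨ startsX t ∨ startsY t := by
  rcases t with _ | ⟨z, s⟩
  · exact Or.inl rfl
  · cases z with
    | X a => exact Or.inr (Or.inl (startsX_X _ _))
    | Y a => exact Or.inr (Or.inr (startsY_Y _ _))

theorem pivot_lemma : ∀ (r : List (RLetter A)) (k : ℕ) {i j i' j' q q' p p' : ℤ},
    i < q ∧ q < j → i' < q' ∧ q' < j' → u q = v q' →
    HL k u i q v i' q' r → HR k u q j v q' j' r → r.length ≤ k →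
    CC u r i j p → CC v r i' j' p' → Out u i q j v i' q' j' r p p'
  | [], _, _, _, _, _, _, _, _, _, _, _, _, _, _, _, h, _ => h.elim
  | z :: t, 0, _, _, _, _, _, _, _, _, _, _, _, _, _, hlen, _, _ => by simp at hlen
  | z :: t, k+1, i, j, i', j', q, q', p, p', hq, hq', hlab, hL, hR, hlen, hc, hc' => by
    obtain ⟨x, hx⟩ := CC_fst hc
    obtain ⟨x', hx'⟩ := CC_fst hc'
    have hlt : t.length ≤ k := by simpa using hlen
    have b1 := hx.lt
    have b2 := hx'.lt
    rcases trich hq hq' hlab (hL.alph _) (hR.alph _) hx hx' with ⟨h, h'⟩ | ⟨h, h'⟩ | ⟨h, h'⟩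
    · have fx := hx.toL h hq.2.le
      have fx' := hx'.toL h' hq'.2.le
      rcases casesXY t with rfl | ht | ht
      · obtain rfl := hx.uniq (CC_nil hc)
        obtain rfl := hx'.uniq (CC_nil hc')
        exact Or.inr (Or.inl ⟨_, List.suffix_rfl, Or.inl rfl, CC_sing fx, CC_sing fx'⟩)
      · rw [CC_X hx ht] at hc
        rw [CC_X hx' ht] at hc'
        rcases pivot_lemma t k ⟨h, hq.2⟩ ⟨h', hq'.2⟩ hlab (hL.shrink ht fx fx')
          (hR.keep ht) hlt hc hc' with o | ⟨s, o1, o2, o3, o4⟩ | ⟨s, o1, o2, o3, o4⟩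
        · exact Or.inl o
        · rcases o2 with rfl | o2
          · refine Or.inr (Or.inl ⟨_, List.suffix_rfl, Or.inl rfl, ?_, ?_⟩)
            · rwa [CC_X fx ht]
            · rwa [CC_X fx' ht]
          · exact Or.inr (Or.inl ⟨s, o1.trans (List.suffix_cons _ _), Or.inr o2,
              o3.extY o2 b1.1.le, o4.extY o2 b2.1.le⟩)
        · refine Or.inr (Or.inr ⟨s, o1.trans (List.suffix_cons _ _), Or.inr ?_, o3, o4⟩)
          rcases o2 with rfl | o2
          · exact ht
          · exact o2
      · rw [CC_Y hx ht, ← CC_Y fx ht] at hc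
        rw [CC_Y hx' ht, ← CC_Y fx' ht] at hc'
        exact Or.inr (Or.inl ⟨_, List.suffix_rfl, Or.inl rfl, hc, hc'⟩)
    · subst h h'
      rcases casesXY t with rfl | ht | ht
      · exact Or.inl ⟨(CC_nil hc).uniq hx, (CC_nil hc').uniq hx'⟩
      · rw [CC_X hx ht] at hc
        rw [CC_X hx' ht] at hc'
        exact Or.inr (Or.inr ⟨t, List.suffix_cons _ _, Or.inr ht, hc, hc'⟩)
      · rw [CC_Y hx ht] at hc
        rw [CC_Y hx' ht] at hc'
        exact Or.inr (Or.inl ⟨t, List.suffix_cons _ _, Or.inr ht, hc, hc'⟩)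
    · have fx := hx.toR h hq.1.le
      have fx' := hx'.toR h' hq'.1.le
      rcases casesXY t with rfl | ht | ht
      · obtain rfl := hx.uniq (CC_nil hc)
        obtain rfl := hx'.uniq (CC_nil hc')
        exact Or.inr (Or.inr ⟨_, List.suffix_rfl, Or.inl rfl, CC_sing fx, CC_sing fx'⟩)
      · rw [CC_X hx ht, ← CC_X fx ht] at hc
        rw [CC_X hx' ht, ← CC_X fx' ht] at hc'
        exact Or.inr (Or.inr ⟨_, List.suffix_rfl, Or.inl rfl, hc, hc'⟩)
      · rw [CC_Y hx ht] at hc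
        rw [CC_Y hx' ht] at hc'
        rcases pivot_lemma t k ⟨hq.1, h⟩ ⟨hq'.1, h'⟩ hlab (hL.keep ht)
          (hR.shrink ht fx fx') hlt hc hc' with o | ⟨s, o1, o2, o3, o4⟩ | ⟨s, o1, o2, o3, o4⟩
        · exact Or.inl o
        · refine Or.inr (Or.inl ⟨s, o1.trans (List.suffix_cons _ _), Or.inr ?_, o3, o4⟩)
          rcases o2 with rfl | o2
          · exact ht
          · exact o2
        · rcases o2 with rfl | o2
          · refine Or.inr (Or.inr ⟨_, List.suffix_rfl, Or.inl rfl, ?_, ?_⟩)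
            · rwa [CC_Y fx ht]
            · rwa [CC_Y fx' ht]
          · exact Or.inr (Or.inr ⟨s, o1.trans (List.suffix_cons _ _), Or.inr o2,
              o3.extX o2 b1.2.1.le, o4.extX o2 b2.2.1.le⟩)
end pivot

/-! ### the main comparison claim -/

def SO (p q p' q' : ℤ) : Prop :=
  (p < q ∧ p' < q') ∨ (p = q ∧ p' = q') ∨ (q < p ∧ q' < p')

theorem SO.symm {p q p' q' : ℤ} (h : SO p q p' q') : SO q p q' p' := by
  unfold SO at *; omega

theorem SO.of_neg {p q p' q' : ℤ} (h : SO (-p) (-q) (-p') (-q')) : SO p q p' q' := by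
  unfold SO at *; omega

def Dm (m : ℕ) (r r' : List (RLetter A)) : Prop :=
  (numBlocks r ≤ m ∧ numBlocks r' + 1 ≤ m) ∨ (numBlocks r + 1 ≤ m ∧ numBlocks r' ≤ m) ∨
  (numBlocks r ≤ m ∧ numBlocks r' ≤ m ∧ ((endsX r ∧ endsY r') ∨ (endsY r ∧ endsX r')))

theorem Dm.symm {m : ℕ} {r r' : List (RLetter A)} (h : Dm m r r') : Dm m r' r := by
  unfold Dm at *; tauto

theorem nb_cons_le (z : RLetter A) : ∀ (t : List (RLetter A)), numBlocks t ≤ numBlocks (z :: t)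
  | [] => Nat.zero_le _
  | w :: t => by simp only [numBlocks]; omega

theorem nb_suffix {s r : List (RLetter A)} (h : s <:+ r) : numBlocks s ≤ numBlocks r := by
  obtain ⟨l, rfl⟩ := h
  induction l with
  | nil => exact le_rfl
  | cons z l ih => exact ih.trans (nb_cons_le _ _)

theorem nb_suffix_YX {s : List (RLetter A)} (hs : startsX s) :
    ∀ {t : List (RLetter A)} {b : A}, s <:+ RLetter.Y b :: t →
      numBlocks s + 1 ≤ numBlocks (RLetter.Y b :: t)
  | t, b, h => by
    rcases List.suffix_cons_iff.1 h with rfl | h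
    · exact (not_startsX_Y _ _ hs).elim
    · rcases t with _ | ⟨z, t⟩
      · obtain ⟨a, s', rfl⟩ := hs
        simp at h
      · cases z with
        | X c =>
          rw [nb_YX]
          have := nb_suffix h
          omega
        | Y c =>
          rw [nb_YY]
          exact nb_suffix_YX hs h

theorem getLast_suffix {s r : List (RLetter A)} (h : s <:+ r) (hs : s ≠ []) :
    r.getLast? = s.getLast? := by
  obtain ⟨l, rfl⟩ := h
  rw [List.getLast?_append_of_ne_nil _ hs]

theorem CC.ne {w : ℤ → Option A} {r : List (RLetter A)} {i j p : ℤ} (h : CC w r i j p) :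
    r ≠ [] := by
  rintro rfl; exact h.elim

/-- `Dm` for suffixes, possibly decreasing block counts. -/
theorem Dm.suf {m e : ℕ} {r r' s s' : List (RLetter A)} (h : Dm (m+e) r r') (h1 : s <:+ r)
    (h2 : s' <:+ r') (n1 : s ≠ []) (n2 : s' ≠ []) (b1 : numBlocks s + e ≤ numBlocks r)
    (b2 : numBlocks s' + e ≤ numBlocks r') : Dm m s s' := by
  have e1 := getLast_suffix h1 n1
  have e2 := getLast_suffix h2 n2
  unfold Dm endsX endsY at *
  rw [e1, e2] at h
  rcases h with h | h | ⟨h3, h4, h5⟩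
  · left; omega
  · right; left; omega
  · right; right; exact ⟨by omega, by omega, h5⟩

theorem ends_fl (r : List (RLetter A)) :
    (endsX (r.map fl) ↔ endsY r) ∧ (endsY (r.map fl) ↔ endsX r) := by
  unfold endsX endsY
  simp only [List.getLast?_map]
  constructor
  · constructor
    · rintro ⟨a, h⟩
      rw [Option.map_eq_some_iff] at h
      obtain ⟨z, h1, h2⟩ := h
      cases z with
      | X b => simp [fl] at h2
      | Y b => exact ⟨b, h1⟩
    · rintro ⟨a, h⟩
      exact ⟨a, by rw [h]; rfl⟩
  · constructor
    · rintro ⟨a, h⟩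
      rw [Option.map_eq_some_iff] at h
      obtain ⟨z, h1, h2⟩ := h
      cases z with
      | X b => exact ⟨b, h1⟩
      | Y b => simp [fl] at h2
    · rintro ⟨a, h⟩
      exact ⟨a, by rw [h]; rfl⟩

theorem Dm.fl {m : ℕ} {r r' : List (RLetter A)} (h : Dm m r r') :
    Dm m (r.map fl) (r'.map fl) := by
  unfold Dm at *
  rw [nb_fl, nb_fl, (ends_fl r).1, (ends_fl r).2, (ends_fl r').1, (ends_fl r').2]
  tauto

def Claim (A : Type*) (k : ℕ) : Prop :=
  ∀ (m : ℕ) (u v : ℤ → Option A) (i j i' j' : ℤ) (r s : List (RLetter A)) (p q p' q' : ℤ),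
    AX (m+1) k u i j v i' j' → AY m k u i j v i' j' → r.length + s.length ≤ k → Dm m r s →
    CC u r i j p → CC u s i j q → CC v r i' j' p' → CC v s i' j' q' → SO p q p' q'

theorem Claim.rev {k : ℕ} (h : Claim A k) (m : ℕ) (u v : ℤ → Option A) (i j i' j' : ℤ)
    (r s : List (RLetter A)) (p q p' q' : ℤ) (h1 : AY (m+1) k u i j v i' j')
    (h2 : AX m k u i j v i' j') (h3 : r.length + s.length ≤ k) (h4 : Dm m r s)
    (c1 : CC u r i j p) (c2 : CC u s i j q) (c3 : CC v r i' j' p') (c4 : CC v s i' j' q') :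
    SO p q p' q' :=
  SO.of_neg (h m _ _ _ _ _ _ _ _ _ _ _ _ h1.rev h2.rev (by simpa using h3) h4.fl
    c1.rev c2.rev c3.rev c4.rev)

theorem Dm.le {m : ℕ} {r s : List (RLetter A)} (h : Dm m r s) :
    numBlocks r ≤ m ∧ numBlocks s ≤ m := by
  unfold Dm at h; omega

theorem claim_X {k : ℕ} (IH : Claim A k) (m : ℕ) (u v : ℤ → Option A) (i j i' j' : ℤ) (a : A)
    (t s : List (RLetter A)) (p q p' q' : ℤ)
    (h1 : AX (m+1) (k+1) u i j v i' j') (h2 : AY m (k+1) u i j v i' j')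
    (h3 : (RLetter.X a :: t).length + s.length ≤ k+1) (h4 : Dm m (RLetter.X a :: t) s)
    (c1 : CC u (RLetter.X a :: t) i j p) (c2 : CC u s i j q)
    (c3 : CC v (RLetter.X a :: t) i' j' p') (c4 : CC v s i' j' q') : SO p q p' q' := by
  obtain ⟨x, hx⟩ := CC_fst c1
  obtain ⟨x', hx'⟩ := CC_fst c3
  have b := hx.lt
  have b' := hx'.lt
  have hm : 1 ≤ m := (nb_pos _ _).trans h4.le.1
  have hsm := h4.le.2
  have LX := AX.fL (by omega) h1 hx hx'
  have LY := h1.fLY hx hx'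
  have RX' := h1.fR hx hx'
  have RY' := h2.fR hx hx'
  have hlen : t.length + s.length ≤ k := by simp at h3; omega
  have hT : TT m s := by
    rcases casesXY s with rfl | hs | hs
    · exact c2.elim
    · exact Or.inl ⟨hs, by omega⟩
    · exact Or.inr ⟨hs, hsm⟩
  have hO := pivot_lemma s k ⟨b.1, b.2.1⟩ ⟨b'.1, b'.2.1⟩ (b.2.2.trans b'.2.2.symm)
    (Or.inl ⟨m, LX, LY, hT⟩)
    (Or.inr ⟨(RY'.mono hm le_rfl).rev, (RX'.mono (c := 2) (by omega) le_rfl).rev⟩)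
    (by omega) c2 c4
  rcases casesXY t with rfl | ht | ht
  · obtain rfl := hx.uniq (CC_nil c1)
    obtain rfl := hx'.uniq (CC_nil c3)
    rcases hO with ⟨rfl, rfl⟩ | ⟨s', o1, o2, o3, o4⟩ | ⟨s', o1, o2, o3, o4⟩
    · exact Or.inr (Or.inl ⟨rfl, rfl⟩)
    · exact Or.inr (Or.inr ⟨o3.bd.2, o4.bd.2⟩)
    · exact Or.inl ⟨o3.bd.1, o4.bd.1⟩
  · rw [CC_X hx ht] at c1
    rw [CC_X hx' ht] at c3
    have d1 := c1.bd
    have d3 := c3.bd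
    rcases hO with ⟨rfl, rfl⟩ | ⟨s', o1, o2, o3, o4⟩ | ⟨s', o1, o2, o3, o4⟩
    · exact Or.inr (Or.inr ⟨d1.1, d3.1⟩)
    · have := o3.bd
      have := o4.bd
      exact Or.inr (Or.inr ⟨by omega, by omega⟩)
    · exact IH m u v x j x' j' t s' p q p' q' RX' RY' (by have := o1.length_le; omega)
        (Dm.suf (e := 0) h4 (List.suffix_cons _ _) o1 c1.ne o3.ne (nb_cons_le _ _)
          (nb_suffix o1)) c1 o3 c3 o4
  · rw [CC_Y hx ht] at c1
    rw [CC_Y hx' ht] at c3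
    have d1 := c1.bd
    have d3 := c3.bd
    rcases hO with ⟨rfl, rfl⟩ | ⟨s', o1, o2, o3, o4⟩ | ⟨s', o1, o2, o3, o4⟩
    · exact Or.inl ⟨d1.2, d3.2⟩
    · exact IH m u v i x i' x' t s' p q p' q' LX LY (by have := o1.length_le; omega)
        (Dm.suf (e := 0) h4 (List.suffix_cons _ _) o1 c1.ne o3.ne (nb_cons_le _ _)
          (nb_suffix o1)) c1 o3 c3 o4
    · have := o3.bd
      have := o4.bd
      exact Or.inl ⟨by omega, by omega⟩

theorem oneblock_Y : ∀ (t : List (RLetter A)) (a : A), numBlocks (RLetter.Y a :: t) ≤ 1 →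
    ¬ endsX (RLetter.Y a :: t)
  | [], a, _ => by rintro ⟨b, h⟩; simp at h
  | .X c :: t, a, h => by
    rw [nb_YX] at h
    have := nb_pos (RLetter.X c) t
    omega
  | .Y c :: t, a, h => by
    rw [nb_YY] at h
    have := oneblock_Y t c h
    unfold endsX at *
    rwa [List.getLast?_cons_cons]

theorem claim_Y {k : ℕ} (IH : Claim A k) (m : ℕ) (u v : ℤ → Option A) (i j i' j' : ℤ) (a c : A)
    (t s : List (RLetter A)) (p q p' q' x y : ℤ)
    (h1 : AX (m+1) (k+1) u i j v i' j') (h2 : AY m (k+1) u i j v i' j')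
    (h3 : (RLetter.Y a :: t).length + (RLetter.Y c :: s).length ≤ k+1)
    (h4 : Dm m (RLetter.Y a :: t) (RLetter.Y c :: s))
    (hx : Fst u i j (.Y a) x) (hy : Fst u i j (.Y c) y) (hyx : y ≤ x)
    (c1 : CC u (RLetter.Y a :: t) i j p) (c2 : CC u (RLetter.Y c :: s) i j q)
    (c3 : CC v (RLetter.Y a :: t) i' j' p') (c4 : CC v (RLetter.Y c :: s) i' j' q') :
    SO p q p' q' := by
  obtain ⟨x', hx'⟩ := CC_fst c3
  have b := hx.lt
  have b' := hx'.lt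
  have hsm := h4.le.2
  have hm : 2 ≤ m := by
    by_contra hm
    have n1 := nb_pos (RLetter.Y a) t
    have n2 := nb_pos (RLetter.Y c) s
    rcases h4 with h | h | ⟨g1, g2, ⟨g, _⟩ | ⟨_, g⟩⟩
    · omega
    · omega
    · exact oneblock_Y _ _ (by omega) g
    · exact oneblock_Y _ _ (by omega) g
  obtain ⟨m, rfl⟩ : ∃ l, m = l + 1 := ⟨m - 1, by omega⟩
  have LX := h1.lL hx hx'
  have LY := h2.lL hx hx'
  have RX' := AY.lRX h2 hx hx'
  have RY' := AY.lR hm h2 hx hx'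
  have hlen : t.length + (RLetter.Y c :: s).length ≤ k := by simp at h3 ⊢; omega
  have hO := pivot_lemma _ k ⟨b.1, b.2.1⟩ ⟨b'.1, b'.2.1⟩ (b.2.2.trans b'.2.2.symm)
    (Or.inl ⟨m+1, LX, LY, Or.inr ⟨startsY_Y _ _, hsm⟩⟩)
    (Or.inl ⟨m, RY'.rev, RX'.rev, Or.inl ⟨(startsY_Y _ _).fl, by rwa [nb_fl]⟩⟩)
    (by omega) c2 c4
  rcases casesXY t with rfl | ht | ht
  · obtain rfl := hx.uniq (CC_nil c1)
    obtain rfl := hx'.uniq (CC_nil c3)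
    rcases hO with ⟨rfl, rfl⟩ | ⟨s', o1, o2, o3, o4⟩ | ⟨s', o1, o2, o3, o4⟩
    · exact Or.inr (Or.inl ⟨rfl, rfl⟩)
    · exact Or.inr (Or.inr ⟨o3.bd.2, o4.bd.2⟩)
    · exact Or.inl ⟨o3.bd.1, o4.bd.1⟩
  · rw [CC_X hx ht] at c1
    rw [CC_X hx' ht] at c3
    have d1 := c1.bd
    have d3 := c3.bd
    rcases hO with ⟨rfl, rfl⟩ | ⟨s', o1, o2, o3, o4⟩ | ⟨s', o1, o2, o3, o4⟩
    · exact Or.inr (Or.inr ⟨d1.1, d3.1⟩)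
    · have := o3.bd
      have := o4.bd
      exact Or.inr (Or.inr ⟨by omega, by omega⟩)
    · have hs' : startsX s' := by
        rcases o2 with rfl | o2
        · obtain ⟨y2, hy2⟩ := CC_fst o3
          have := hy2.lt
          have := hy.2.2.2 y2 (by omega) (by omega)
          exact (this hy2.lt.2.2).elim
        · exact o2
      exact IH.rev m u v x j x' j' t s' p q p' q' RY' RX' (by have := o1.length_le; omega)
        (Dm.suf (e := 1) h4 (List.suffix_cons _ _) o1 c1.ne o3.ne
          (nb_suffix_YX ht (List.suffix_cons _ _)) (nb_suffix_YX hs' o1)) c1 o3 c3 o4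
  · rw [CC_Y hx ht] at c1
    rw [CC_Y hx' ht] at c3
    have d1 := c1.bd
    have d3 := c3.bd
    rcases hO with ⟨rfl, rfl⟩ | ⟨s', o1, o2, o3, o4⟩ | ⟨s', o1, o2, o3, o4⟩
    · exact Or.inl ⟨d1.2, d3.2⟩
    · exact IH (m+1) u v i x i' x' t s' p q p' q' LX LY (by have := o1.length_le; omega)
        (Dm.suf (e := 0) h4 (List.suffix_cons _ _) o1 c1.ne o3.ne (nb_cons_le _ _)
          (nb_suffix o1)) c1 o3 c3 o4
    · have := o3.bd
      have := o4.bd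
      exact Or.inl ⟨by omega, by omega⟩

theorem claim_all : ∀ k, Claim A k
  | 0 => by
    intro m u v i j i' j' r s p q p' q' _ _ h3 _ c1 _ _ _
    have : r = [] := by
      apply List.eq_nil_of_length_eq_zero; omega
    exact (c1.ne this).elim
  | k+1 => by
    intro m u v i j i' j' r s p q p' q' h1 h2 h3 h4 c1 c2 c3 c4
    have IH : Claim A k := claim_all k
    rcases casesXY r with rfl | ⟨a, t, rfl⟩ | ⟨a, t, rfl⟩
    · exact c1.elim
    · exact claim_X IH m u v i j i' j' a t s p q p' q' h1 h2 h3 h4 c1 c2 c3 c4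
    · rcases casesXY s with rfl | ⟨c, s, rfl⟩ | ⟨c, s, rfl⟩
      · exact c2.elim
      · exact (claim_X IH m u v i j i' j' c s _ q p q' p' h1 h2 (by omega) h4.symm
          c2 c1 c4 c3).symm
      · obtain ⟨x, hx⟩ := CC_fst c1
        obtain ⟨y, hy⟩ := CC_fst c2
        rcases le_total y x with h | h
        · exact claim_Y IH m u v i j i' j' a c t s p q p' q' x y h1 h2 h3 h4 hx hy h c1 c2 c3 c4
        · exact (claim_Y IH m u v i j i' j' c a s t q p q' p' y x h1 h2 (by omega) h4.symm
            hy hx h c2 c1 c4 c3).symm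

/-! ### connection to the concrete definitions -/

/-- the integer-indexed word of a list -/
def wd (u : List A) : ℤ → Option A := fun x => if 1 ≤ x then u[x.toNat - 1]? else none

theorem wd_nat (u : List A) (n : ℕ) (hn : 1 ≤ n) : wd u n = u[n-1]? := by
  unfold wd; rw [if_pos (by exact_mod_cast hn)]; simp

theorem head_sorted {R : ℕ → ℕ → Prop} (hR : ∀ x y, R x y → ¬ R y x) {l : List ℕ} {p : ℕ}
    (h : l.Pairwise R) : l.head? = some p ↔ p ∈ l ∧ ∀ y ∈ l, y = p ∨ R p y := by
  rcases l with _ | ⟨c, l⟩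
  · simp
  · rw [List.pairwise_cons] at h
    simp only [List.head?_cons, Option.some.injEq]
    constructor
    · rintro rfl
      refine ⟨by simp, ?_⟩
      intro y hy
      rcases List.mem_cons.1 hy with rfl | hy
      · exact Or.inl rfl
      · exact Or.inr (h.1 y hy)
    · rintro ⟨h1, h2⟩
      rcases List.mem_cons.1 h1 with rfl | h1
      · rfl
      · rcases h2 c (by simp) with h3 | h3
        · exact h3
        · exact (hR _ _ h3 (h.1 p h1)).elim

theorem get_lt {u : List A} {n : ℕ} {a : A} (h : u[n]? = some a) : n < u.length := by
  by_contra hc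
  rw [List.getElem?_eq_none (by omega)] at h
  simp at h

theorem nextOcc_iff (u : List A) (a : A) (q p : ℕ) :
    nextOcc u a q = some p ↔
      (q < p ∧ u[p-1]? = some a ∧ ∀ y, q < y → y < p → u[y-1]? ≠ some a) := by
  unfold nextOcc
  rw [head_sorted (R := (· < ·)) (fun x y h => by omega)
    (List.Pairwise.filter _ List.pairwise_lt_range)]
  simp only [List.mem_filter, List.mem_range, decide_eq_true_eq]
  constructor
  · rintro ⟨⟨h1, h2, h3⟩, h4⟩
    refine ⟨h2, h3, fun y hy hy' h => ?_⟩
    have := h4 y ⟨by omega, hy, h⟩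
    omega
  · rintro ⟨h1, h2, h3⟩
    have := get_lt h2
    refine ⟨⟨by omega, h1, h2⟩, ?_⟩
    rintro y ⟨y1, y2, y3⟩
    by_contra hc
    exact h3 y y2 (by omega) y3

theorem prevOcc_iff (u : List A) (a : A) (q p : ℕ) :
    prevOcc u a q = some p ↔ (1 ≤ p ∧ p < q ∧ u[p-1]? = some a ∧
      ∀ y, p < y → y < q → u[y-1]? ≠ some a) := by
  unfold prevOcc
  rw [List.getLast?_eq_head?_reverse, head_sorted (R := (· > ·)) (fun x y h => by omega)
    (List.pairwise_reverse.2 (List.Pairwise.filter _ List.pairwise_lt_range))]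
  simp only [List.mem_reverse, List.mem_filter, List.mem_range, decide_eq_true_eq]
  constructor
  · rintro ⟨⟨h1, h2, h3, h4⟩, h5⟩
    refine ⟨h2, h3, h4, fun y hy hy' h => ?_⟩
    have := get_lt h
    have := h5 y ⟨by omega, by omega, hy', h⟩
    omega
  · rintro ⟨h1, h2, h3, h4⟩
    have := get_lt h3
    refine ⟨⟨by omega, h1, h2, h3⟩, ?_⟩
    rintro y ⟨y1, y2, y3, y4⟩
    by_contra hc
    exact h4 y (by omega) y3 y4

theorem fstX_iff (u : List A) (a : A) (i j p : ℕ) :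
    Fst (wd u) i j (.X a) p ↔ nextOcc u a i = some p ∧ p < j := by
  rw [nextOcc_iff]
  constructor
  · rintro ⟨h1, h2, h3, h4⟩
    have e1 : i < p := by omega
    rw [wd_nat _ _ (by omega)] at h3
    refine ⟨⟨e1, h3, ?_⟩, by omega⟩
    intro y hy hy'
    have := h4 y (by omega) (by omega)
    rwa [wd_nat _ _ (by omega)] at this
  · rintro ⟨⟨h1, h2, h3⟩, h4⟩
    refine ⟨by omega, by omega, by rwa [wd_nat _ _ (by omega)], ?_⟩
    intro y hy hy'
    lift y to ℕ using by omega
    rw [wd_nat _ _ (by omega)]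
    exact h3 y (by omega) (by omega)

theorem fstY_iff (u : List A) (a : A) (i j p : ℕ) :
    Fst (wd u) i j (.Y a) p ↔ prevOcc u a j = some p ∧ i < p := by
  rw [prevOcc_iff]
  constructor
  · rintro ⟨h1, h2, h3, h4⟩
    rw [wd_nat _ _ (by omega)] at h3
    refine ⟨⟨by omega, by omega, h3, ?_⟩, by omega⟩
    intro y hy hy'
    have := h4 y (by omega) (by omega)
    rwa [wd_nat _ _ (by omega)] at this
  · rintro ⟨⟨h0, h1, h2, h3⟩, h4⟩
    refine ⟨by omega, by omega, by rwa [wd_nat _ _ (by omega)], ?_⟩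
    intro y hy hy'
    lift y to ℕ using by omega
    rw [wd_nat _ _ (by omega)]
    exact h3 y (by omega) (by omega)

def Stp (u : List A) : RLetter A → RLetter A → ℕ → ℕ → ℕ → ℕ → Prop
  | .X a, .X _, i, j, i', j' => nextOcc u a i = some i' ∧ j' = j
  | .Y a, .Y _, i, j, i', j' => i' = i ∧ prevOcc u a j = some j'
  | .X a, .Y _, i, j, i', j' => i' = i ∧ nextOcc u a i = some j'
  | .Y a, .X _, i, j, i', j' => prevOcc u a j = some i' ∧ j' = j

def Chn (u : List A) (r : List (RLetter A)) (i j : ℕ → ℕ) (p : ℕ) : Prop :=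
  (∀ l z z', r[l]? = some z → r[l+1]? = some z' →
    Stp u z z' (i l) (j l) (i (l+1)) (j (l+1)) ∧
      i l ≤ i (l+1) ∧ j (l+1) ≤ j l ∧ (i l < i (l+1) ∨ j (l+1) < j l)) ∧
  i (r.length - 1) < p ∧ p < j (r.length - 1)

theorem Condensed_iff_Chn (u : List A) (r : List (RLetter A)) :
    Condensed u r ↔ ∃ (p : ℕ) (i j : ℕ → ℕ), evalR u r = some p ∧ i 0 = 0 ∧
      j 0 = u.length + 1 ∧ Chn u r i j p := by
  unfold Condensed Chn
  constructor
  · rintro ⟨p, i, j, h1, h2, h3, hXX, hYY, hXY, hYX, h4, h5⟩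
    refine ⟨p, i, j, h1, h2, h3, ?_, h5⟩
    intro l z z' hz hz'
    refine ⟨?_, h4 (l+1) (by omega) (get_lt hz')⟩
    cases z with
    | X a =>
      cases z' with
      | X b => exact hXX (l+1) a b (by omega) hz hz'
      | Y b => exact hXY (l+1) a b (by omega) hz hz'
    | Y a =>
      cases z' with
      | X b => exact hYX (l+1) a b (by omega) hz hz'
      | Y b => exact hYY (l+1) a b (by omega) hz hz'
  · rintro ⟨p, i, j, h1, h2, h3, h4, h5⟩
    refine ⟨p, i, j, h1, h2, h3, ?_, ?_, ?_, ?_, ?_, h5⟩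
    · rintro (_ | l) a b hl hz hz'
      · omega
      · exact (h4 l _ _ hz hz').1
    · rintro (_ | l) a b hl hz hz'
      · omega
      · exact (h4 l _ _ hz hz').1
    · rintro (_ | l) a b hl hz hz'
      · omega
      · exact (h4 l _ _ hz hz').1
    · rintro (_ | l) a b hl hz hz'
      · omega
      · exact (h4 l _ _ hz hz').1
    · rintro (_ | l) hl hz
      · omega
      · exact (h4 l _ _ (List.getElem?_eq_getElem (by omega)) (List.getElem?_eq_getElem hz)).2

def sp : RLetter A → ℕ → ℕ → ℕ
  | .X _, i, _ => i
  | .Y _, _, j => j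

theorem Chn.tail {u : List A} {z z' : RLetter A} {t : List (RLetter A)} {i j : ℕ → ℕ} {p : ℕ}
    (h : Chn u (z :: z' :: t) i j p) :
    Chn u (z' :: t) (fun l => i (l+1)) (fun l => j (l+1)) p := by
  obtain ⟨h1, h2, h3⟩ := h
  refine ⟨fun l y y' hy hy' => h1 (l+1) y y' (by simpa using hy) (by simpa using hy'), ?_, ?_⟩
  · simpa using h2
  · simpa using h3

theorem Chn.bd {u : List A} : ∀ {r : List (RLetter A)} {i j : ℕ → ℕ} {p : ℕ}, r ≠ [] →
    Chn u r i j p → i 0 < p ∧ p < j 0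
  | [], _, _, _, h, _ => (h rfl).elim
  | [z], i, j, p, _, h => h.2
  | z :: z' :: t, i, j, p, _, h => by
    have h1 := h.tail.bd (by simp)
    have h2 := h.1 0 z z' rfl rfl
    simp only [zero_add] at h1 h2
    omega

theorem Chn.toCC {u : List A} : ∀ {r : List (RLetter A)} {z : RLetter A} {i j : ℕ → ℕ} {p : ℕ},
    evalFrom u (z :: r) (sp z (i 0) (j 0)) = some p → Chn u (z :: r) i j p →
    CC (wd u) (z :: r) (i 0) (j 0) p
  | [], z, i, j, p, he, h => by
    have hb := h.bd (by simp)
    apply CC_sing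
    have he' : stepR u z (sp z (i 0) (j 0)) = some p := by
      simpa [evalFrom, Option.bind_eq_some_iff] using he
    cases z with
    | X a => exact (fstX_iff _ _ _ _ _).2 ⟨he', hb.2⟩
    | Y a => exact (fstY_iff _ _ _ _ _).2 ⟨he', hb.1⟩
  | z' :: t, z, i, j, p, he, h => by
    have hb := h.bd (by simp)
    have hb' := h.tail.bd (by simp)
    have h2 := h.1 0 z z' rfl rfl
    have ih := fun hh => Chn.toCC hh h.tail
    simp only [zero_add] at hb hb' h2 ih
    rw [evalFrom, Option.bind_eq_some_iff] at he
    obtain ⟨x, hx, he⟩ := he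
    cases z with
    | X a =>
      cases z' with
      | X b =>
        obtain ⟨⟨g1, g2⟩, g3⟩ := h2
        obtain rfl : i 1 = x := Option.some.inj (g1.symm.trans hx)
        rw [← g2]
        refine (CC_X ((fstX_iff _ _ _ _ _).2 ⟨g1, by omega⟩) (startsX_X _ _)).2 ?_
        exact ih he
      | Y b =>
        obtain ⟨⟨g1, g2⟩, g3⟩ := h2
        obtain rfl : j 1 = x := Option.some.inj (g2.symm.trans hx)
        rw [g1] at ih
        refine (CC_Y ((fstX_iff _ _ _ _ _).2 ⟨g2, by omega⟩) (startsY_Y _ _)).2 ?_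
        exact ih he
    | Y a =>
      cases z' with
      | X b =>
        obtain ⟨⟨g1, g2⟩, g3⟩ := h2
        obtain rfl : i 1 = x := Option.some.inj (g1.symm.trans hx)
        rw [g2] at ih
        refine (CC_X ((fstY_iff _ _ _ _ _).2 ⟨g1, by omega⟩) (startsX_X _ _)).2 ?_
        exact ih he
      | Y b =>
        obtain ⟨⟨g1, g2⟩, g3⟩ := h2
        obtain rfl : j 1 = x := Option.some.inj (g2.symm.trans hx)
        rw [← g1]
        refine (CC_Y ((fstY_iff _ _ _ _ _).2 ⟨g2, by omega⟩) (startsY_Y _ _)).2 ?_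
        exact ih he

def consF (c : ℕ) (f : ℕ → ℕ) : ℕ → ℕ
  | 0 => c
  | n+1 => f n

theorem Chn.cons {u : List A} {z z' : RLetter A} {t : List (RLetter A)} {i j : ℕ → ℕ}
    {p i0 j0 : ℕ} (h : Chn u (z' :: t) i j p)
    (hs : Stp u z z' i0 j0 (i 0) (j 0) ∧
      i0 ≤ i 0 ∧ j 0 ≤ j0 ∧ (i0 < i 0 ∨ j 0 < j0)) :
    Chn u (z :: z' :: t) (consF i0 i) (consF j0 j) p := by
  refine ⟨?_, h.2⟩
  rintro (_ | l) y y' hy hy'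
  · simp at hy hy'
    subst hy hy'
    exact hs
  · exact h.1 l y y' (by simpa using hy) (by simpa using hy')

theorem CC.toChn {u : List A} : ∀ {r : List (RLetter A)} {z : RLetter A} {i0 j0 : ℕ} {p : ℤ},
    CC (wd u) (z :: r) i0 j0 p → ∃ (q : ℕ) (i j : ℕ → ℕ), p = q ∧ i 0 = i0 ∧ j 0 = j0 ∧
      evalFrom u (z :: r) (sp z i0 j0) = some q ∧ Chn u (z :: r) i j q
  | t, z, i0, j0, p, h => by
    obtain ⟨x, hx⟩ := CC_fst h
    have hb := hx.lt
    lift x to ℕ using by omega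
    have hst : stepR u z (sp z i0 j0) = some x := by
      cases z with
      | X a => exact ((fstX_iff _ _ _ _ _).1 hx).1
      | Y a => exact ((fstY_iff _ _ _ _ _).1 hx).1
    have hev : evalFrom u (z :: t) (sp z i0 j0) = evalFrom u t x := by
      rw [evalFrom, hst]; rfl
    rcases t with _ | ⟨z', t⟩
    · obtain rfl := hx.uniq (CC_nil h)
      refine ⟨x, fun _ => i0, fun _ => j0, rfl, rfl, rfl, hev, ?_, ?_, ?_⟩
      · intro l y y' hy hy'
        simp at hy'
      · show i0 < x
        omega
      · show x < j0
        omega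
    · cases z' with
      | X b =>
        rw [CC_X hx (startsX_X _ _)] at h
        obtain ⟨q, i, j, h1, h2, h3, h4, h5⟩ := CC.toChn h
        refine ⟨q, consF i0 i, consF j0 j, h1, rfl, rfl, hev.trans h4, h5.cons ⟨?_, ?_, ?_, ?_⟩⟩
        · rw [h2, h3]
          cases z <;> exact ⟨hst, rfl⟩
        · omega
        · omega
        · omega
      | Y b =>
        rw [CC_Y hx (startsY_Y _ _)] at h
        obtain ⟨q, i, j, h1, h2, h3, h4, h5⟩ := CC.toChn h
        refine ⟨q, consF i0 i, consF j0 j, h1, rfl, rfl, hev.trans h4, h5.cons ⟨?_, ?_, ?_, ?_⟩⟩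
        · rw [h2, h3]
          cases z <;> exact ⟨rfl, hst⟩
        · omega
        · omega
        · omega

theorem evalR_cons (u : List A) (z : RLetter A) (t : List (RLetter A)) :
    evalR u (z :: t) = evalFrom u (z :: t) (sp z 0 (u.length + 1)) := by
  cases z <;> rfl

theorem Condensed.toCC {u : List A} {r : List (RLetter A)} (h : Condensed u r) :
    CC (wd u) r 0 ((u.length + 1 : ℕ) : ℤ) (pos u r) := by
  rw [Condensed_iff_Chn] at h
  obtain ⟨p, i, j, h1, h2, h3, h4⟩ := h
  have hp : pos u r = p := by simp [pos, h1]
  rw [hp]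
  rcases r with _ | ⟨z, t⟩
  · simp [evalR] at h1
  · rw [evalR_cons, ← h2, ← h3] at h1
    have := h4.toCC h1
    rw [h2, h3] at this
    exact this

theorem Condensed_iff (u : List A) (r : List (RLetter A)) :
    Condensed u r ↔ DD (wd u) r 0 ((u.length + 1 : ℕ) : ℤ) := by
  constructor
  · intro h
    exact ⟨_, h.toCC⟩
  · rintro ⟨p, h⟩
    rcases r with _ | ⟨z, t⟩
    · exact h.elim
    · obtain ⟨q, i, j, h1, h2, h3, h4, h5⟩ := CC.toChn (i0 := 0) h
      rw [Condensed_iff_Chn]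
      exact ⟨q, i, j, by rw [evalR_cons]; exact h4, h2, h3, h5⟩

theorem uR_le {m n : ℕ} {r : List (RLetter A)} (h : uR m n r) :
    numBlocks r ≤ m ∧ r.length ≤ n ∧ (startsX r ∨ startsY r) := by
  rcases h with (⟨m', n', h1, h2, h3, h4, h5⟩ | ⟨m', n', h1, h2, h3, h4, h5⟩) |
    (⟨m', n', h1, h2, h3, h4, h5⟩ | ⟨m', n', h1, h2, h3, h4, h5⟩)
  · exact ⟨by omega, by omega, Or.inl h5⟩
  · exact ⟨by omega, by omega, Or.inr h5⟩
  · exact ⟨by omega, by omega, Or.inr h5⟩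
  · exact ⟨by omega, by omega, Or.inl h5⟩

theorem SO.cmp {a b c d : ℕ} (h : SO a b c d) : compare a b = compare c d := by
  rcases h with ⟨h1, h2⟩ | ⟨h1, h2⟩ | ⟨h1, h2⟩
  · rw [compare_lt_iff_lt.2 (by omega : a < b), compare_lt_iff_lt.2 (by omega : c < d)]
  · rw [compare_eq_iff_eq.2 (by omega : a = b), compare_eq_iff_eq.2 (by omega : c = d)]
  · rw [compare_gt_iff_gt.2 (by omega : a > b), compare_gt_iff_gt.2 (by omega : c > d)]

theorem rel_agree {m n : ℕ} (hn : 1 ≤ n) {u v : List A}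
    (hrel : trir (m+1) (2*n) u v ∨ tril (m+1) (2*n) u v) :
    let U := ((u.length + 1 : ℕ) : ℤ)
    let V := ((v.length + 1 : ℕ) : ℤ)
    (AX (m+1) (2*n-1) (wd u) 0 U (wd v) 0 V ∧ AY m (2*n-1) (wd u) 0 U (wd v) 0 V) ∨
    (AY (m+1) (2*n-1) (wd u) 0 U (wd v) 0 V ∧ AX m (2*n-1) (wd u) 0 U (wd v) 0 V) := by
  intro U V
  rcases hrel with h | h
  · left
    constructor <;> intro r h1 h2 h3 <;> rw [← Condensed_iff, ← Condensed_iff] <;> apply h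
    · exact Or.inl ⟨_, _, h2, by omega, rfl, rfl, h1⟩
    · exact Or.inr ⟨_, _, by omega, by omega, rfl, rfl, h1⟩
  · right
    constructor <;> intro r h1 h2 h3 <;> rw [← Condensed_iff, ← Condensed_iff] <;> apply h
    · exact Or.inl ⟨_, _, h2, by omega, rfl, rfl, h1⟩
    · exact Or.inr ⟨_, _, by omega, by omega, rfl, rfl, h1⟩

/-- If `u ⊳_{m+1,2n} v` or `u ⊲_{m+1,2n} v`, then the conditions
(WI 1c), (WI 2c) and (WI 3c) hold for `m, n`. -/
theorem statement15 (m n : ℕ) (hm : 1 ≤ m) (hmn : m ≤ n) (u v : List A)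
    (hrel : trir (m+1) (2*n) u v ∨ tril (m+1) (2*n) u v) :
    WI1c m n u v ∧ WI2c m n u v ∧ WI3c m n u v := by
  have hn : 1 ≤ n := hm.trans hmn
  have hag := rel_agree hn hrel
  have key : ∀ r r', Dm m r r' → r.length ≤ n → r'.length ≤ n - 1 →
      Condensed u r → Condensed v r → Condensed u r' → Condensed v r' →
      compare (pos u r) (pos u r') = compare (pos v r) (pos v r') := by
    intro r r' hD l1 l2 c1 c2 c3 c4
    apply SO.cmp
    rcases hag with ⟨h1, h2⟩ | ⟨h1, h2⟩
    · exact claim_all (2*n-1) m _ _ _ _ _ _ r r' _ _ _ _ h1 h2 (by omega) hD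
        c1.toCC c3.toCC c2.toCC c4.toCC
    · exact (claim_all (2*n-1)).rev m _ _ _ _ _ _ r r' _ _ _ _ h1 h2 (by omega) hD
        c1.toCC c3.toCC c2.toCC c4.toCC
  refine ⟨?_, ?_, ?_⟩
  · intro r hr
    obtain ⟨h1, h2, h3⟩ := uR_le hr
    rw [Condensed_iff, Condensed_iff]
    rcases hag with ⟨g1, g2⟩ | ⟨g1, g2⟩ <;> rcases h3 with h3 | h3
    · exact g1 r h3 (by omega) (by omega)
    · exact g2 r h3 (by omega) (by omega)
    · exact g2 r h3 (by omega) (by omega)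
    · exact g1 r h3 (by omega) (by omega)
  · intro r r' hr hr'
    obtain ⟨h1, h2, _⟩ := uR_le hr
    obtain ⟨h1', h2', _⟩ := uR_le hr'
    exact key r r' (Or.inl ⟨h1, by omega⟩) h2 h2'
  · intro r r' hr hr' he
    obtain ⟨h1, h2, _⟩ := uR_le hr
    obtain ⟨h1', h2', _⟩ := uR_le hr'
    exact key r r' (Or.inr (Or.inr ⟨h1, h1', he⟩)) h2 h2'

end RankerPaper
end
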